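/- Let 1 < c < 37/18 with c ≠ 2. Then for all real x with |x| ≤ τ one has S(x) = I(x) + O(X·exp(−(log X)^{1/5})), where the implied constant depends only on c and η. -/

import Mathlib

open MeasureTheory

noncomputable def e (t : ℝ) : ℂ := Complex.exp (2 * Real.pi * Complex.I * t)

/-- The exponential sum `S(x) = Σ_{X/2 < p ≤ X} (log p) e(p^c x)` over primes. -/
noncomputable def S (X c : ℝ) (x : ℝ) : ℂ :=
  ∑ p ∈ (Finset.range (⌈X⌉₊ + 1)).filter
      (fun p : ℕ => p.Prime ∧ X / 2 < (p : ℝ) ∧ (p : ℝ) ≤ X),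
    (Real.log p : ℂ) * e ((p : ℝ) ^ c * x)

/-- The integral `I(x) = ∫_{X/2}^X e(t^c x) dt`. -/
noncomputable def I (X c : ℝ) (x : ℝ) : ℂ := ∫ t in (X / 2)..X, e (t ^ c * x)

namespace St10

lemma norm_e (t : ℝ) : ‖e t‖ = 1 := by
  unfold e
  rw [show (2 * Real.pi * Complex.I * t : ℂ) = ((2 * Real.pi * t : ℝ) : ℂ) * Complex.I by
    push_cast; ring]
  exact Complex.norm_exp_ofReal_mul_I _

lemma e_add (s t : ℝ) : e (s + t) = e s * e t := by
  unfold e; rw [← Complex.exp_add]; congr 1; push_cast; ring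

lemma e_int (j : ℤ) : e j = 1 := by
  unfold e
  rw [Complex.exp_eq_one_iff]
  exact ⟨j, by push_cast; ring⟩

lemma e_neg (t : ℝ) : e (-t) = (starRingEnd ℂ) (e t) := by
  unfold e
  rw [← Complex.exp_conj]; congr 1
  simp [Complex.conj_ofReal, Complex.conj_ofNat]

lemma sin_pi_ge {g θ : ℝ} (h1 : θ ≤ g) (h2 : g ≤ 1 - θ) (hθ : 0 < θ) :
    2 * θ ≤ Real.sin (Real.pi * g) := by
  have hpi := Real.pi_pos
  rcases le_total g (1/2) with h | h
  · have := Real.mul_le_sin (x := Real.pi * g) (by apply mul_nonneg <;> linarith) (by nlinarith)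
    have h3 : 2 / Real.pi * (Real.pi * g) = 2 * g := by field_simp
    linarith
  · have := Real.mul_le_sin (x := Real.pi * (1 - g)) (by apply mul_nonneg <;> linarith) (by nlinarith)
    have h3 : 2 / Real.pi * (Real.pi * (1 - g)) = 2 * (1 - g) := by field_simp
    have h4 : Real.sin (Real.pi * (1 - g)) = Real.sin (Real.pi * g) := by
      rw [show Real.pi * (1 - g) = Real.pi - Real.pi * g by ring, Real.sin_pi_sub]
    linarith

/-- w(g) = 1/(e g - 1). -/
noncomputable def kw (g : ℝ) : ℂ := -1/2 - Complex.I / 2 * (Real.cos (Real.pi * g) / Real.sin (Real.pi * g) : ℝ)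

lemma kw_mul {g : ℝ} (h : Real.sin (Real.pi * g) ≠ 0) : (e g - 1) * kw g = 1 := by
  have h1 : e g = ((Real.cos (Real.pi * g) : ℂ) + Real.sin (Real.pi * g) * Complex.I) ^ 2 := by
    unfold e
    rw [Complex.ofReal_cos, Complex.ofReal_sin, ← Complex.exp_mul_I, ← Complex.exp_nat_mul]
    congr 1; push_cast; ring
  have h2 : (Real.sin (Real.pi * g) : ℂ) ≠ 0 := by exact_mod_cast h
  have h3 : (Real.cos (Real.pi * g) : ℂ) ^ 2 = 1 - (Real.sin (Real.pi * g) : ℂ) ^ 2 := by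
    have := Real.sin_sq_add_cos_sq (Real.pi * g)
    have h5 : ((Real.sin (Real.pi * g) : ℂ) ^ 2 + (Real.cos (Real.pi * g) : ℂ) ^ 2) = 1 := by
      exact_mod_cast this
    linear_combination h5
  rw [h1, kw]
  push_cast at *
  generalize Complex.sin (Real.pi * g) = s at *
  generalize Complex.cos (Real.pi * g) = c at *
  have hI := Complex.I_sq
  field_simp
  linear_combination (-Complex.I * c + s) * h3 + (-2*s*c^2 - s^3 - Complex.I * c * s^2) * hI

lemma norm_kw {g θ : ℝ} (h1 : θ ≤ g) (h2 : g ≤ 1 - θ) (hθ : 0 < θ) : ‖kw g‖ ≤ 1 / (4 * θ) := by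
  have hs := sin_pi_ge h1 h2 hθ
  have hs0 : 0 < Real.sin (Real.pi * g) := by linarith
  have h3 : ‖kw g‖ = 1 / (2 * Real.sin (Real.pi * g)) := by
    have h4 : ‖kw g‖ ^ 2 = (1 / (2 * Real.sin (Real.pi * g))) ^ 2 := by
      rw [Complex.sq_norm, Complex.normSq_apply]
      have := Real.sin_sq_add_cos_sq (Real.pi * g)
      simp only [kw, Complex.sub_re, Complex.sub_im, Complex.mul_re, Complex.mul_im, Complex.ofReal_re, Complex.ofReal_im, Complex.div_ofNat_re, Complex.div_ofNat_im, Complex.I_re, Complex.I_im, Complex.neg_re, Complex.neg_im, Complex.one_re, Complex.one_im]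
      field_simp
      nlinarith
    exact (sq_eq_sq₀ (norm_nonneg _) (by positivity)).1 h4
  rw [h3]
  apply one_div_le_one_div_of_le <;> linarith

lemma cot_anti {g g' θ : ℝ} (h1 : θ ≤ g) (h2 : g' ≤ 1 - θ) (hθ : 0 < θ) (h : g ≤ g') :
    ‖kw g' - kw g‖ = (Real.cos (Real.pi * g) / Real.sin (Real.pi * g)) / 2 -
      (Real.cos (Real.pi * g') / Real.sin (Real.pi * g')) / 2 := by
  have hs := sin_pi_ge h1 (by linarith) hθ
  have hs' := sin_pi_ge (by linarith) h2 hθ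
  have h3 : kw g' - kw g = Complex.I * (((Real.cos (Real.pi * g) / Real.sin (Real.pi * g)) / 2 -
      (Real.cos (Real.pi * g') / Real.sin (Real.pi * g')) / 2 : ℝ) : ℂ) := by
    unfold kw; push_cast; ring
  rw [h3, norm_mul, Complex.norm_I, one_mul, Complex.norm_real, Real.norm_of_nonneg]
  rw [← sub_div]
  apply div_nonneg _ (by norm_num)
  rw [div_sub_div _ _ (by linarith) (by linarith)]
  apply div_nonneg _ (by apply mul_nonneg <;> linarith)
  have := Real.sin_sub (Real.pi * g') (Real.pi * g)
  have h5 : 0 ≤ Real.sin (Real.pi * g' - Real.pi * g) := by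
    apply Real.sin_nonneg_of_nonneg_of_le_pi
    · nlinarith [Real.pi_pos]
    · nlinarith [Real.pi_pos]
  linarith

lemma cot_le {g θ : ℝ} (h1 : θ ≤ g) (h2 : g ≤ 1 - θ) (hθ : 0 < θ) :
    |Real.cos (Real.pi * g) / Real.sin (Real.pi * g)| ≤ 1 / (2 * θ) := by
  have hs := sin_pi_ge h1 h2 hθ
  rw [abs_div, abs_of_pos (a := Real.sin _) (by linarith)]
  exact div_le_div₀ (by norm_num) (Real.abs_cos_le_one _) (by positivity) hs

lemma KL0 (f : ℕ → ℝ) (a k : ℕ) (θ : ℝ) (hθ : 0 < θ)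
    (h1 : ∀ n, a ≤ n → n < a + k + 1 → θ ≤ f (n+1) - f n)
    (h2 : ∀ n, a ≤ n → n < a + k + 1 → f (n+1) - f n ≤ 1 - θ)
    (hm : ∀ n, a ≤ n → n + 1 < a + k + 1 → f (n+1) - f n ≤ f (n+2) - f (n+1)) :
    ‖∑ n ∈ Finset.Ico a (a + k + 1), e (f n) - e (f (a + k + 1)) * kw (f (a+k+1) - f (a+k))
      + e (f a) * kw (f (a+1) - f a)‖ ≤
      (Real.cos (Real.pi * (f (a+1) - f a)) / Real.sin (Real.pi * (f (a+1) - f a))) / 2 -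
      (Real.cos (Real.pi * (f (a+k+1) - f (a+k))) / Real.sin (Real.pi * (f (a+k+1) - f (a+k)))) / 2 := by
  have key : ∀ n, a ≤ n → n < a + k + 1 → e (f n) = (e (f (n+1)) - e (f n)) * kw (f (n+1) - f n) := by
    intro n hn hn'
    have := sin_pi_ge (h1 n hn hn') (h2 n hn hn') hθ
    have h3 := kw_mul (g := f (n+1) - f n) (by linarith)
    have h4 : e (f (n+1)) = e (f n) * e (f (n+1) - f n) := by rw [← e_add]; congr 1; ring
    rw [h4]
    linear_combination -e (f n) * h3
  induction k with
  | zero =>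
    simp only [Nat.add_zero, Nat.Ico_succ_singleton, Finset.sum_singleton, sub_self]
    have := key a le_rfl (by omega)
    rw [show e (f a) - e (f (a+1)) * kw (f (a+1) - f a) + e (f a) * kw (f (a+1) - f a) = 0 by linear_combination this]
    simp
  | succ k ih =>
    have ih' := ih (fun n hn hn' => h1 n hn (by omega)) (fun n hn hn' => h2 n hn (by omega))
      (fun n hn hn' => hm n hn (by omega)) (fun n hn hn' => key n hn (by omega))
    have hk := key (a + k + 1) (by omega) (by omega)
    have hc := cot_anti (h1 (a+k) (by omega) (by omega)) (h2 (a+k+1) (by omega) (by omega)) hθ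
      (hm (a+k) (by omega) (by omega))
    rw [show a + (k+1) + 1 = (a + k + 1) + 1 by ring, Finset.sum_Ico_succ_top (by omega),
      show a + (k+1) = a + k + 1 by ring]
    rw [show a + k + 2 = a + k + 1 + 1 by ring] at *
    set K := kw (f (a + k + 1 + 1) - f (a + k + 1))
    set K' := kw (f (a + k + 1) - f (a + k))
    have : ∑ n ∈ Finset.Ico a (a + k + 1), e (f n) + e (f (a + k + 1)) - e (f (a + k + 1 + 1)) * K + e (f a) * kw (f (a+1) - f a)
      = (∑ n ∈ Finset.Ico a (a + k + 1), e (f n) - e (f (a + k + 1)) * K' + e (f a) * kw (f (a+1) - f a))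
        - e (f (a+k+1)) * (K - K') := by linear_combination hk
    rw [this]
    refine (norm_sub_le _ _).trans ?_
    rw [norm_mul, norm_e, one_mul, hc]
    linarith

/-- Kusmin-Landau. -/
lemma KL (f : ℕ → ℝ) (a b : ℕ) (θ : ℝ) (hθ : 0 < θ) (j : ℤ)
    (h1 : ∀ n, a ≤ n → n < b → θ ≤ f (n+1) - f n - j)
    (h2 : ∀ n, a ≤ n → n < b → f (n+1) - f n - j ≤ 1 - θ)
    (hm : ∀ n, a ≤ n → n + 1 < b → f (n+1) - f n ≤ f (n+2) - f (n+1)) :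
    ‖∑ n ∈ Finset.Ico a b, e (f n)‖ ≤ 1 / θ := by
  rcases le_or_gt b a with hab | hab
  · rw [Finset.Ico_eq_empty_of_le hab]; simp; positivity
  obtain ⟨k, rfl⟩ : ∃ k, b = a + k + 1 := ⟨b - a - 1, by omega⟩
  set f' : ℕ → ℝ := fun n => f n - j * n
  have hf' : ∀ n, f' (n+1) - f' n = f (n+1) - f n - j := by intro n; simp only [f']; push_cast; ring
  have hf'' : ∀ n, f' (n+2) - f' (n+1) = f (n+2) - f (n+1) - j := by intro n; simp only [f']; push_cast; ring
  have he : ∀ n, e (f n) = e (f' n) := by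
    intro n
    have : f n = f' n + ((j * n : ℤ) : ℝ) := by simp only [f']; push_cast; ring
    rw [this, e_add, e_int, mul_one]
  simp_rw [he]
  have h1' : ∀ n, a ≤ n → n < a + k + 1 → θ ≤ f' (n+1) - f' n := fun n hn hn' => by rw [hf']; exact h1 n hn hn'
  have h2' : ∀ n, a ≤ n → n < a + k + 1 → f' (n+1) - f' n ≤ 1 - θ := fun n hn hn' => by rw [hf']; exact h2 n hn hn'
  have := KL0 f' a k θ hθ h1' h2'
    (fun n hn hn' => by rw [hf', hf'']; linarith [hm n hn hn'])
  have n1 := norm_kw (h1' a le_rfl (by omega)) (h2' a le_rfl (by omega)) hθ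
  have n2 := norm_kw (h1' (a+k) (by omega) (by omega)) (h2' (a+k) (by omega) (by omega)) hθ
  have c1 := (abs_le.1 (cot_le (h1' a le_rfl (by omega)) (h2' a le_rfl (by omega)) hθ)).2
  have c2 := (abs_le.1 (cot_le (h1' (a+k) (by omega) (by omega)) (h2' (a+k) (by omega) (by omega)) hθ)).1
  set Sg := ∑ n ∈ Finset.Ico a (a + k + 1), e (f' n)
  set A := e (f' (a + k + 1)) * kw (f' (a+k+1) - f' (a+k)) with hA
  set B := e (f' a) * kw (f' (a+1) - f' a) with hB
  have hAn : ‖A‖ ≤ 1 / (4 * θ) := by rw [hA, norm_mul, norm_e, one_mul]; exact n2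
  have hBn : ‖B‖ ≤ 1 / (4 * θ) := by rw [hB, norm_mul, norm_e, one_mul]; exact n1
  have h5 : ‖Sg‖ ≤ ‖Sg - A + B‖ + ‖A‖ + ‖B‖ := by
    calc ‖Sg‖ = ‖(Sg - A + B) + A - B‖ := by congr 1; ring
      _ ≤ _ := (norm_sub_le _ _).trans (by gcongr; exact norm_add_le _ _)
  have e1 : 1 / (4 * θ) = (1/4) * (1/θ) := by field_simp
  have e2 : 1 / (2 * θ) = (1/2) * (1/θ) := by field_simp
  linarith

end St10

namespace St10

lemma gap_mono (g : ℕ → ℝ) (a b : ℕ) (l : ℝ)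
    (h1 : ∀ n, a ≤ n → n + 1 < b → l ≤ g (n+1) - g n) (m k : ℕ) (ha : a ≤ m) (hk : m + k < b) :
    l * k ≤ g (m + k) - g m := by
  induction k with
  | zero => simp
  | succ k ih =>
    have := ih (by omega)
    have h2 := h1 (m + k) (by omega) (by omega)
    rw [← add_assoc]
    push_cast
    linarith

lemma gap_mono_le (g : ℕ → ℝ) (a b : ℕ) (l : ℝ)
    (h1 : ∀ n, a ≤ n → n + 1 < b → g (n+1) - g n ≤ l) (m k : ℕ) (ha : a ≤ m) (hk : m + k < b) :
    g (m + k) - g m ≤ l * k := by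
  have := gap_mono (fun n => - g n) a b (-l) (fun n hn hn' => by linarith [h1 n hn hn']) m k ha hk
  linarith

lemma card_gap (g : ℕ → ℝ) (a b : ℕ) (l u w : ℝ) (hl : 0 < l) (hw : 0 ≤ w)
    (h1 : ∀ n, a ≤ n → n + 1 < b → l ≤ g (n+1) - g n) (s : Finset ℕ)
    (hs : ∀ n ∈ s, a ≤ n ∧ n < b ∧ u ≤ g n ∧ g n ≤ u + w) : (s.card : ℝ) ≤ w / l + 1 := by
  rcases s.eq_empty_or_nonempty with rfl | hne
  · simp; positivity
  set m := s.min' hne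
  set M := s.max' hne
  have hm := hs m (s.min'_mem hne)
  have hM := hs M (s.max'_mem hne)
  have hmM : m ≤ M := s.min'_le_max' hne
  have hsub : s ⊆ Finset.Icc m M := fun x hx => Finset.mem_Icc.2 ⟨s.min'_le x hx, s.le_max' x hx⟩
  have hcard := Finset.card_le_card hsub
  rw [Nat.card_Icc] at hcard
  have h2 := gap_mono g a b l h1 m (M - m) hm.1 (by omega)
  rw [show m + (M - m) = M by omega] at h2
  have h3 : ((M - m : ℕ) : ℝ) ≤ w / l := by
    rw [le_div_iff₀ hl]; linarith
  have h4 : (s.card : ℝ) ≤ ((M - m : ℕ) : ℝ) + 1 := by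
    exact_mod_cast (by omega : s.card ≤ (M - m) + 1)
  linarith

lemma fiber_bound (f : ℕ → ℝ) (a b : ℕ) (l : ℝ) (hl : 0 < l)
    (h1 : ∀ n, a ≤ n → n + 1 < b → l ≤ (f (n+2) - f (n+1)) - (f (n+1) - f n)) (j : ℤ) :
    ‖∑ n ∈ (Finset.Ico a b).filter (fun n => ⌊f (n+1) - f n⌋ = j), e (f n)‖ ≤
      3 / Real.sqrt l + 2 := by
  set μ := Real.sqrt l with hμ
  have hμ0 : 0 < μ := Real.sqrt_pos.2 hl
  have hμl : μ / l = 1 / μ := by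
    have : l = μ * μ := (Real.mul_self_sqrt hl.le).symm
    rw [this]; field_simp
  set g : ℕ → ℝ := fun n => f (n+1) - f n with hg
  have hg1 : ∀ n, a ≤ n → n + 1 < b → l ≤ g (n+1) - g n := h1
  set s := (Finset.Ico a b).filter (fun n => ⌊f (n+1) - f n⌋ = j) with hs
  have hs' : ∀ n ∈ s, a ≤ n ∧ n < b ∧ (j:ℝ) ≤ g n ∧ g n < j + 1 := by
    intro n hn
    rw [hs, Finset.mem_filter, Finset.mem_Ico, Int.floor_eq_iff] at hn
    exact ⟨hn.1.1, hn.1.2, hn.2.1, hn.2.2⟩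
  set p : ℕ → Prop := fun n => (j:ℝ) + μ ≤ g n ∧ g n ≤ j + 1 - μ
  classical
  have hsplit := Finset.sum_filter_add_sum_filter_not s p (fun n => e (f n))
  rw [← hsplit]
  have hbad : ‖∑ n ∈ s.filter (fun n => ¬ p n), e (f n)‖ ≤ 2 / μ + 2 := by
    have : ‖∑ n ∈ s.filter (fun n => ¬ p n), e (f n)‖ ≤ ((s.filter (fun n => ¬ p n)).card : ℝ) := by
      refine (norm_sum_le _ _).trans ?_
      simp [norm_e]
    refine this.trans ?_
    have hsub : s.filter (fun n => ¬ p n) ⊆ s.filter (fun n => g n < j + μ) ∪ s.filter (fun n => j + 1 - μ < g n) := by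
      intro n hn
      simp only [Finset.mem_union, Finset.mem_filter, p, not_and_or, not_le] at hn ⊢
      tauto
    have c1 := card_gap g a b l j μ hl hμ0.le hg1 (s.filter (fun n => g n < j + μ)) (by
      intro n hn
      rw [Finset.mem_filter] at hn
      have := hs' n hn.1
      exact ⟨this.1, this.2.1, this.2.2.1, hn.2.le⟩)
    have c2 := card_gap g a b l (j + 1 - μ) μ hl hμ0.le hg1 (s.filter (fun n => j + 1 - μ < g n)) (by
      intro n hn
      rw [Finset.mem_filter] at hn
      have := hs' n hn.1
      exact ⟨this.1, this.2.1, hn.2.le, by linarith [this.2.2.2]⟩)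
    have c3 := (Finset.card_le_card hsub).trans (Finset.card_union_le _ _)
    have c4 : ((s.filter (fun n => ¬ p n)).card : ℝ) ≤ ((s.filter (fun n => g n < j + μ)).card : ℝ) + ((s.filter (fun n => j + 1 - μ < g n)).card : ℝ) := by
      exact_mod_cast c3
    rw [hμl] at c1 c2
    have : 2 / μ = 1 / μ + 1 / μ := by ring
    linarith
  have hgood : ‖∑ n ∈ s.filter p, e (f n)‖ ≤ 1 / μ := by
    rcases (s.filter p).eq_empty_or_nonempty with h | hne
    · rw [h]; simp; positivity
    set m := (s.filter p).min' hne
    set M := (s.filter p).max' hne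
    have hm := Finset.mem_filter.1 ((s.filter p).min'_mem hne)
    have hM := Finset.mem_filter.1 ((s.filter p).max'_mem hne)
    have hm' := hs' m hm.1
    have hM' := hs' M hM.1
    have hbetween : ∀ n, m ≤ n → n ≤ M → n ∈ s.filter p := by
      intro n hn hn'
      have q1 := gap_mono g a b l hg1 m (n - m) hm'.1 (by omega)
      have q2 := gap_mono g a b l hg1 n (M - n) (by omega) (by omega)
      rw [show m + (n - m) = n by omega] at q1
      rw [show n + (M - n) = M by omega] at q2
      have q3 : (0:ℝ) ≤ l * (n - m : ℕ) := by positivity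
      have q4 : (0:ℝ) ≤ l * (M - n : ℕ) := by positivity
      have hpm : p m := hm.2
      have hpM : p M := hM.2
      rw [Finset.mem_filter, hs, Finset.mem_filter, Finset.mem_Ico, Int.floor_eq_iff]
      refine ⟨⟨⟨by omega, by omega⟩, ?_, ?_⟩, ?_, ?_⟩
      · change (j:ℝ) ≤ g n; linarith [hm'.2.2.1]
      · change g n < j + 1; linarith [hM'.2.2.2]
      · linarith [hpm.1]
      · linarith [hpM.2]
    have heq : s.filter p = Finset.Ico m (M + 1) := by
      ext n
      constructor
      · intro hn
        exact Finset.mem_Ico.2 ⟨Finset.min'_le _ n hn, Nat.lt_succ_of_le (Finset.le_max' _ n hn)⟩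
      · intro hn
        rw [Finset.mem_Ico] at hn
        exact hbetween n hn.1 (by omega)
    rw [heq]
    apply KL f m (M+1) μ hμ0 j
    · intro n hn hn'
      have := (Finset.mem_filter.1 (hbetween n hn (by omega))).2.1
      simp only [hg] at this
      linarith
    · intro n hn hn'
      have := (Finset.mem_filter.1 (hbetween n hn (by omega))).2.2
      simp only [hg] at this
      linarith
    · intro n hn hn'
      have := h1 n (by omega) (by omega)
      linarith
  refine (norm_add_le _ _).trans ?_
  have : 3 / μ = 1 / μ + 2 / μ := by ring
  linarith

/-- van der Corput second derivative test (discrete). -/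
lemma vdC (f : ℕ → ℝ) (a b : ℕ) (l h : ℝ) (hl : 0 < l) (hl1 : l ≤ 1) (h0 : 0 ≤ h)
    (h1 : ∀ n, a ≤ n → n + 1 < b → l ≤ (f (n+2) - f (n+1)) - (f (n+1) - f n))
    (h2 : ∀ n, a ≤ n → n + 1 < b → (f (n+2) - f (n+1)) - (f (n+1) - f n) ≤ h * l) (hab : a ≤ b) :
    ‖∑ n ∈ Finset.Ico a b, e (f n)‖ ≤ (h * l * (b - a : ℝ) + 2) * (5 / Real.sqrt l) := by
  set μ := Real.sqrt l with hμ
  have hμ0 : 0 < μ := Real.sqrt_pos.2 hl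
  have hμ1 : μ ≤ 1 := Real.sqrt_le_one.2 hl1
  rcases hab.eq_or_lt with rfl | hab
  · simp; positivity
  have hlast : f b - f (b-1) - (f (a+1) - f a) ≤ h * l * (b - 1 - a : ℕ) := by
    have := gap_mono_le (fun n => f (n+1) - f n) a b (h*l) h2 a (b - 1 - a) le_rfl (by omega)
    simp only [show a + (b - 1 - a) = b - 1 by omega, show b - 1 + 1 = b by omega] at this
    exact this
  set J := Finset.Icc ⌊f (a+1) - f a⌋ ⌊f b - f (b-1)⌋ with hJ
  have hmaps : ∀ n ∈ Finset.Ico a b, ⌊f (n+1) - f n⌋ ∈ J := by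
    intro n hn
    rw [Finset.mem_Ico] at hn
    rw [hJ, Finset.mem_Icc]
    have q1 := gap_mono (fun n => f (n+1) - f n) a b l h1 a (n - a) le_rfl (by omega)
    have q2 := gap_mono (fun n => f (n+1) - f n) a b l h1 n (b - 1 - n) (by omega) (by omega)
    simp only [show a + (n - a) = n by omega] at q1
    simp only [show n + (b - 1 - n) = b - 1 by omega, show b - 1 + 1 = b by omega] at q2
    have q3 : (0:ℝ) ≤ l * (n - a : ℕ) := by positivity
    have q4 : (0:ℝ) ≤ l * (b - 1 - n : ℕ) := by positivity
    exact ⟨Int.floor_le_floor (by linarith), Int.floor_le_floor (by linarith)⟩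
  rw [← Finset.sum_fiberwise_of_maps_to hmaps]
  refine (norm_sum_le _ _).trans ?_
  refine (Finset.sum_le_sum (fun j _ => fiber_bound f a b l hl h1 j)).trans ?_
  rw [Finset.sum_const, nsmul_eq_mul]
  have hc : (J.card : ℝ) ≤ h * l * (b - a : ℝ) + 2 := by
    rw [hJ, Int.card_Icc]
    have hb : ((b - 1 - a : ℕ) : ℝ) ≤ (b - a : ℝ) := by
      rw [← Nat.cast_sub hab.le]; exact_mod_cast (by omega)
    have q1 := Int.floor_le (f b - f (b-1))
    have q2 := Int.lt_floor_add_one (f (a+1) - f a)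
    have q3 : h * l * (b - 1 - a : ℕ) ≤ h * l * (b - a : ℝ) := by gcongr
    have q4 : (0:ℝ) ≤ h * l * (b - 1 - a : ℕ) := by positivity
    have q5 : (((⌊f b - f (b-1)⌋ + 1 - ⌊f (a+1) - f a⌋).toNat : ℤ) : ℝ) ≤ h * l * (b - a : ℝ) + 2 := by
      rw [Int.toNat_eq_max]
      push_cast
      apply max_le <;> linarith
    exact_mod_cast q5
  have h5 : 3 / μ + 2 ≤ 5 / μ := by
    rw [show 5 / μ = 3 / μ + 2 * (1/μ) by ring]
    have : 1 ≤ 1 / μ := by rw [le_div_iff₀ hμ0]; linarith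
    linarith
  have h6 : (0:ℝ) ≤ h * l * (b - a : ℝ) + 2 := le_trans (Nat.cast_nonneg _) hc
  gcongr

end St10

namespace St10

lemma second_diff (c : ℝ) (t : ℝ) (ht : 0 < t) :
    ∃ z, t ≤ z ∧ z ≤ t + 2 ∧
      ((t+2) ^ c - (t+1) ^ c) - ((t+1) ^ c - t ^ c) = c * (c - 1) * z ^ (c - 2) := by
  have hd : ∀ u : ℝ, 0 < u → HasDerivAt (fun u : ℝ => u ^ c) (c * u ^ (c-1)) u := fun u hu =>
    Real.hasDerivAt_rpow_const (Or.inl hu.ne')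
  have hd2 : ∀ u : ℝ, 0 < u → HasDerivAt (fun u : ℝ => c * u ^ (c-1)) (c * ((c-1) * u ^ (c-2))) u := fun u hu => by
    have := (Real.hasDerivAt_rpow_const (x := u) (p := c - 1) (Or.inl hu.ne')).const_mul c
    rwa [show c - 1 - 1 = c - 2 by ring] at this
  have hD : ∀ u : ℝ, 0 < u → HasDerivAt (fun u : ℝ => (u+1) ^ c - u ^ c) (c * (u+1) ^ (c-1) - c * u ^ (c-1)) u := by
    intro u hu
    exact ((hd (u+1) (by linarith)).comp_add_const u 1).sub (hd u hu)
  obtain ⟨x, hx, hx'⟩ := exists_hasDerivAt_eq_slope (fun u : ℝ => (u+1) ^ c - u ^ c) (fun u => c * (u+1) ^ (c-1) - c * u ^ (c-1)) (show t < t + 1 by linarith)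
    (fun u hu => (hD u (by linarith [hu.1])).continuousAt.continuousWithinAt) (fun u hu => hD u (by linarith [hu.1]))
  have hx0 : 0 < x := by linarith [hx.1]
  obtain ⟨z, hz, hz'⟩ := exists_hasDerivAt_eq_slope (fun u : ℝ => c * u ^ (c-1)) (fun u => c * ((c-1) * u ^ (c-2))) (show x < x + 1 by linarith)
    (fun u hu => (hd2 u (by linarith [hu.1])).continuousAt.continuousWithinAt) (fun u hu => hd2 u (by linarith [hu.1]))
  refine ⟨z, by linarith [hz.1, hx.1], by linarith [hz.2, hx.2], ?_⟩
  rw [show t + 1 - t = 1 by ring, div_one] at hx'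
  rw [show x + 1 - x = 1 by ring, div_one] at hz'
  rw [← mul_assoc] at hz'
  rw [hz', hx', show t + 1 + 1 = t + 2 by ring]

lemma rpow_abs_bounds {r B a : ℝ} (h1 : 1 ≤ r) (h2 : r ≤ B) :
    B ^ (-|a|) ≤ r ^ a ∧ r ^ a ≤ B ^ |a| := by
  have hB : 1 ≤ B := h1.trans h2
  constructor
  · calc B ^ (-|a|) ≤ r ^ (-|a|) := Real.rpow_le_rpow_of_nonpos (by linarith) h2 (by simp)
      _ ≤ r ^ a := Real.rpow_le_rpow_of_exponent_le h1 (neg_abs_le a)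
  · calc r ^ a ≤ r ^ |a| := Real.rpow_le_rpow_of_exponent_le h1 (le_abs_self a)
      _ ≤ B ^ |a| := Real.rpow_le_rpow (by linarith) h2 (abs_nonneg _)

lemma expsum_pos (c : ℝ) (hc : 1 < c) : ∃ C > 0, ∀ (A y : ℝ) (a b : ℕ), 1 ≤ A → 0 < y → A ≤ a →
    (b : ℝ) ≤ 8 * A → ‖∑ n ∈ Finset.Ico a b, e (y * (n:ℝ) ^ c)‖ ≤
      C * (Real.sqrt (y * A ^ c) + A / Real.sqrt (y * A ^ c)) := by
  set κ := c * (c - 1) * (9:ℝ) ^ (-|c-2|) with hκ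
  have hc1 : 0 < c * (c-1) := by apply mul_pos <;> linarith
  have hκ0 : 0 < κ := by positivity
  set h := (9:ℝ) ^ (|c-2|) * (9:ℝ) ^ (|c-2|) with hh
  have hh0 : 0 < h := by positivity
  set q := Real.sqrt κ with hq
  have hq0 : 0 < q := Real.sqrt_pos.2 hκ0
  refine ⟨40 * h * q + 10 / q + 8 * q, by positivity, ?_⟩
  intro A y a b hA hy haA hbA
  set F := Real.sqrt (y * A ^ c) with hF
  have hA0 : 0 < A := by linarith
  have hF0 : 0 < F := Real.sqrt_pos.2 (by positivity)
  have hFs : F * F = y * A ^ c := Real.mul_self_sqrt (by positivity)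
  rcases le_or_gt b a with hab | hab
  · rw [Finset.Ico_eq_empty_of_le hab]; simp; positivity
  set l := κ * y * A ^ (c - 2) with hl
  have hl0 : 0 < l := by positivity
  have hA2 : A ^ (c-2) * A ^ 2 = A ^ c := by
    rw [← Real.rpow_natCast A 2, ← Real.rpow_add hA0]; congr 1; push_cast; ring
  have hlF : l = (q * F / A) ^ 2 := by
    have : q * q = κ := Real.mul_self_sqrt hκ0.le
    rw [hl, div_pow, mul_pow, pow_two q, pow_two F, this, hFs]
    field_simp
    linear_combination hA2
  have hsl : Real.sqrt l = q * F / A := by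
    rw [hlF, Real.sqrt_sq (by positivity)]
  have hba : (b:ℝ) - a ≤ 8 * A := by linarith
  rcases le_or_gt l 1 with hl1 | hl1
  · have hsd : ∀ n : ℕ, a ≤ n → n + 1 < b → l ≤ (y * ((n+2 : ℕ):ℝ) ^ c - y * ((n+1 : ℕ):ℝ) ^ c) - (y * ((n+1 : ℕ):ℝ) ^ c - y * (n:ℝ) ^ c)
        ∧ (y * ((n+2 : ℕ):ℝ) ^ c - y * ((n+1 : ℕ):ℝ) ^ c) - (y * ((n+1 : ℕ):ℝ) ^ c - y * (n:ℝ) ^ c) ≤ h * l := by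
      intro n hn hn'
      have hnA : A ≤ n := haA.trans (by exact_mod_cast hn)
      have hnB : (n:ℝ) + 1 ≤ 8 * A := le_trans (by exact_mod_cast hn'.le) hbA
      obtain ⟨z, hz1, hz2, hz⟩ := second_diff c n (by linarith)
      have e1 : (y * ((n+2 : ℕ):ℝ) ^ c - y * ((n+1 : ℕ):ℝ) ^ c) - (y * ((n+1 : ℕ):ℝ) ^ c - y * (n:ℝ) ^ c) = y * (c * (c-1)) * z ^ (c-2) := by
        push_cast
        linear_combination y * hz
      have hr := rpow_abs_bounds (r := z / A) (B := 9) (a := c - 2) (by rw [le_div_iff₀ hA0]; linarith) (by rw [div_le_iff₀ hA0]; linarith)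
      rw [Real.div_rpow (by linarith) hA0.le] at hr
      have hAp : 0 < A ^ (c-2) := by positivity
      rw [le_div_iff₀ hAp, div_le_iff₀ hAp] at hr
      rw [e1]
      have hyc : 0 < y * (c * (c-1)) := by positivity
      constructor
      · calc l = y * (c * (c-1)) * (9 ^ (-|c-2|) * A ^ (c-2)) := by rw [hl, hκ]; ring
          _ ≤ _ := by gcongr; exact hr.1
      · calc y * (c * (c-1)) * z ^ (c-2) ≤ y * (c * (c-1)) * (9 ^ |c-2| * A ^ (c-2)) := by gcongr; exact hr.2
          _ = h * l := by
            rw [hl, hκ, hh]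
            have : (9:ℝ) ^ |c-2| * 9 ^ (-|c-2|) = 1 := by rw [← Real.rpow_add (by norm_num)]; simp
            linear_combination (-(y * (c * (c-1)) * 9 ^ |c-2| * A ^ (c-2))) * this
    have := vdC (fun n => y * (n:ℝ) ^ c) a b l h hl0 hl1 hh0.le (fun n hn hn' => (hsd n hn hn').1) (fun n hn hn' => (hsd n hn hn').2) hab.le
    refine this.trans ?_
    rw [hsl]
    calc (h * l * (b - a : ℝ) + 2) * (5 / (q * F / A)) ≤ (h * l * (8 * A) + 2) * (5 / (q * F / A)) := by gcongr
      _ = 40 * h * q * F + 10 / q * (A / F) := by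
        rw [hlF]; field_simp; ring
      _ ≤ _ := by
        rw [mul_add]
        gcongr
        · have : 0 < 10 / q := by positivity
          nlinarith
        · have : 0 < 8 * q := by positivity
          have : 0 < 40 * h * q := by positivity
          linarith
  · have h1 : 1 < q * F / A := by
      rw [← hsl]; exact Real.lt_sqrt_of_sq_lt (by simpa using hl1)
    rw [lt_div_iff₀ hA0] at h1
    have : ‖∑ n ∈ Finset.Ico a b, e (y * (n:ℝ) ^ c)‖ ≤ (b:ℝ) - a := by
      refine (norm_sum_le _ _).trans ?_
      simp [norm_e, Nat.cast_sub hab.le]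
    calc _ ≤ 8 * A := this.trans hba
      _ ≤ 8 * q * F := by linarith
      _ ≤ (40 * h * q + 10 / q + 8 * q) * F := by gcongr; have : 0 < 40 * h * q + 10 / q := by positivity
                                                  linarith
      _ ≤ _ := by gcongr; have : 0 < A / F := by positivity
                  linarith

lemma expsum (c : ℝ) (hc : 1 < c) : ∃ C > 0, ∀ (A y : ℝ) (a b : ℕ), 1 ≤ A → y ≠ 0 → A ≤ a →
    (b : ℝ) ≤ 8 * A → ‖∑ n ∈ Finset.Ico a b, e (y * (n:ℝ) ^ c)‖ ≤
      C * (Real.sqrt (|y| * A ^ c) + A / Real.sqrt (|y| * A ^ c)) := by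
  obtain ⟨C, hC, h⟩ := expsum_pos c hc
  refine ⟨C, hC, fun A y a b hA hy haA hbA => ?_⟩
  rcases lt_or_gt_of_ne hy with hy' | hy'
  · have := h A (-y) a b hA (by linarith) haA hbA
    rw [abs_of_neg hy']
    refine le_trans (le_of_eq ?_) this
    rw [← Complex.norm_conj, map_sum]
    congr 1
    apply Finset.sum_congr rfl
    intro n _
    rw [← e_neg]; congr 1; ring
  · rw [abs_of_pos hy']
    exact h A y a b hA hy' haA hbA

end St10

namespace St10

lemma sum_inv_sqrt (n : ℕ) : ∑ k ∈ Finset.range (n+1), 1 / Real.sqrt k ≤ 2 * Real.sqrt n := by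
  induction n with
  | zero => simp
  | succ n ih =>
    rw [Finset.sum_range_succ]
    have h1 : 0 < Real.sqrt ((n+1 : ℕ):ℝ) := Real.sqrt_pos.2 (by positivity)
    have h2 := Real.sqrt_nonneg (n:ℝ)
    have h3 : Real.sqrt ((n+1 : ℕ):ℝ) * Real.sqrt ((n+1 : ℕ):ℝ) = n + 1 := by
      rw [Real.mul_self_sqrt (by positivity)]; push_cast; ring
    have h4 : Real.sqrt (n:ℝ) * Real.sqrt n = n := Real.mul_self_sqrt (by positivity)
    have h5 : 1 / Real.sqrt ((n+1 : ℕ):ℝ) ≤ 2 * Real.sqrt ((n+1 : ℕ):ℝ) - 2 * Real.sqrt n := by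
      rw [div_le_iff₀ h1]
      nlinarith [sq_nonneg (Real.sqrt ((n+1 : ℕ):ℝ) - Real.sqrt n)]
    linarith

lemma sum_inv_sqrt_dist (p q d n : ℕ) (hp : p < d) (hq : d ≤ q) (hn : q ≤ p + n) :
    ∑ j ∈ Finset.Ioc p q, 1 / Real.sqrt |(d:ℝ) - j| ≤ 4 * Real.sqrt n := by
  have hnn : ∀ k : ℕ, 0 ≤ 1 / Real.sqrt (k:ℝ) := fun k => by positivity
  rw [← Finset.sum_Ioc_consecutive _ hp.le hq]
  have h1 : ∑ j ∈ Finset.Ioc p d, 1 / Real.sqrt |(d:ℝ) - j| ≤ 2 * Real.sqrt n := by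
    refine le_trans ?_ (sum_inv_sqrt n)
    have : ∑ j ∈ Finset.Ioc p d, 1 / Real.sqrt |(d:ℝ) - j| = ∑ k ∈ (Finset.Ioc p d).image (fun j => d - j), 1 / Real.sqrt (k:ℝ) := by
      rw [Finset.sum_image]
      · apply Finset.sum_congr rfl
        intro j hj
        rw [Finset.mem_Ioc] at hj
        rw [← Nat.cast_sub hj.2, abs_of_nonneg (by positivity)]
      · intro i hi j hj hij
        simp only [Finset.coe_Ioc, Set.mem_Ioc] at hi hj hij
        omega
    rw [this]
    apply Finset.sum_le_sum_of_subset_of_nonneg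
    · intro k hk
      simp only [Finset.mem_image, Finset.mem_Ioc, Finset.mem_range] at hk ⊢
      obtain ⟨j, hj, rfl⟩ := hk
      omega
    · intro k _ _; exact hnn k
  have h2 : ∑ j ∈ Finset.Ioc d q, 1 / Real.sqrt |(d:ℝ) - j| ≤ 2 * Real.sqrt n := by
    refine le_trans ?_ (sum_inv_sqrt n)
    have : ∑ j ∈ Finset.Ioc d q, 1 / Real.sqrt |(d:ℝ) - j| = ∑ k ∈ (Finset.Ioc d q).image (fun j => j - d), 1 / Real.sqrt (k:ℝ) := by
      rw [Finset.sum_image]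
      · apply Finset.sum_congr rfl
        intro j hj
        rw [Finset.mem_Ioc] at hj
        rw [Nat.cast_sub hj.1.le, abs_sub_comm, abs_of_nonneg (by rw [sub_nonneg]; exact_mod_cast hj.1.le)]
      · intro i hi j hj hij
        simp only [Finset.coe_Ioc, Set.mem_Ioc] at hi hj hij
        omega
    rw [this]
    apply Finset.sum_le_sum_of_subset_of_nonneg
    · intro k hk
      simp only [Finset.mem_image, Finset.mem_Ioc, Finset.mem_range] at hk ⊢
      obtain ⟨j, hj, rfl⟩ := hk
      omega
    · intro k _ _; exact hnn k
  linarith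

lemma abel_mono0 (f : ℕ → ℝ) (z : ℕ → ℂ) (M : ℝ) (k : ℕ) : ∀ a : ℕ,
    (∀ n, a ≤ n → n < a + k → f n ≤ f (n+1)) →
    (∀ a', a ≤ a' → a' ≤ a + k → ‖∑ n ∈ Finset.Ico a' (a + k), z n‖ ≤ M) →
    ‖∑ n ∈ Finset.Ico a (a + k), (f n : ℂ) * z n - f a * ∑ n ∈ Finset.Ico a (a + k), z n‖
      ≤ (f (a + k) - f a) * M := by
  induction k with
  | zero => intro a _ _; simp
  | succ k ih =>
    intro a hf hM
    have e0 : a + (k + 1) = (a + 1) + k := by ring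
    have := ih (a + 1) (fun n hn hn' => hf n (by omega) (by omega)) (fun a' h1 h2 => by
      have := hM a' (by omega) (by omega)
      rwa [e0] at this)
    rw [e0] at hM ⊢
    rw [Finset.sum_eq_sum_Ico_succ_bot (by omega), Finset.sum_eq_sum_Ico_succ_bot (a := a) (by omega)]
    have hM' := hM (a + 1) (by omega) (by omega)
    have hf' := hf a le_rfl (by omega)
    set Z := ∑ n ∈ Finset.Ico (a + 1) (a + 1 + k), z n
    set W := ∑ n ∈ Finset.Ico (a + 1) (a + 1 + k), (f n : ℂ) * z n
    have h3 : (f a : ℂ) * z a + W - f a * (z a + Z) = (W - f (a+1) * Z) + ((f (a+1) - f a : ℝ) : ℂ) * Z := by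
      push_cast; ring
    rw [h3]
    refine (norm_add_le _ _).trans ?_
    rw [norm_mul, Complex.norm_real, Real.norm_of_nonneg (by linarith)]
    have : (f (a+1) - f a) * ‖Z‖ ≤ (f (a+1) - f a) * M := by
      apply mul_le_mul_of_nonneg_left hM'; linarith
    linarith

lemma abel_log (z : ℕ → ℂ) (M : ℝ) (a b : ℕ) (ha : 1 ≤ a)
    (hM : ∀ a', a ≤ a' → ‖∑ n ∈ Finset.Ico a' b, z n‖ ≤ M) :
    ‖∑ n ∈ Finset.Ico a b, (Real.log n : ℂ) * z n‖ ≤ Real.log b * M := by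
  have hM0 : 0 ≤ M := (norm_nonneg _).trans (hM a le_rfl)
  rcases le_or_gt b a with hab | hab
  · rw [Finset.Ico_eq_empty_of_le hab]; simp
    exact mul_nonneg (Real.log_natCast_nonneg b) hM0
  obtain ⟨k, rfl⟩ : ∃ k, b = a + k := ⟨b - a, by omega⟩
  have := abel_mono0 (fun n => Real.log n) z M k a (fun n hn hn' => by
    apply Real.log_le_log (by exact_mod_cast (by omega : 0 < n)); push_cast; linarith)
    (fun a' h1 _ => hM a' h1)
  have h1 := hM a le_rfl
  set W := ∑ n ∈ Finset.Ico a (a + k), (Real.log n : ℂ) * z n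
  set Z := ∑ n ∈ Finset.Ico a (a + k), z n
  have h2 : ‖W‖ ≤ ‖W - Real.log a * Z‖ + ‖(Real.log a : ℂ) * Z‖ := by
    calc ‖W‖ = ‖(W - Real.log a * Z) + Real.log a * Z‖ := by congr 1; ring
      _ ≤ _ := norm_add_le _ _
  have h3 : ‖(Real.log a : ℂ) * Z‖ ≤ Real.log a * M := by
    rw [norm_mul, Complex.norm_real, Real.norm_of_nonneg (Real.log_natCast_nonneg a)]
    exact mul_le_mul_of_nonneg_left h1 (Real.log_natCast_nonneg a)
  linarith

/-- range of `m` with `X/2 < d m ≤ X`. -/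
noncomputable def J (X : ℝ) (d : ℕ) : Finset ℕ := Finset.Ico (⌊X / 2 / d⌋₊ + 1) (⌊X / d⌋₊ + 1)

lemma mem_J {X : ℝ} (hX : 0 ≤ X) {d m : ℕ} (hd : 0 < d) :
    m ∈ J X d ↔ X / 2 < d * m ∧ (d * m : ℝ) ≤ X := by
  have hd' : (0:ℝ) < d := by exact_mod_cast hd
  rw [J, Finset.mem_Ico, Nat.succ_le_iff, Nat.lt_succ_iff, Nat.floor_lt (by positivity), Nat.le_floor_iff (by positivity),
    div_lt_iff₀ hd', le_div_iff₀ hd', mul_comm (m:ℝ)]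

lemma conv_sum (X : ℝ) (hX : 0 ≤ X) (α β : ArithmeticFunction ℝ) (φ : ℕ → ℂ) :
    ∑ n ∈ J X 1, (((α * β) n : ℝ) : ℂ) * φ n =
      ∑ d ∈ Finset.Ioc 0 ⌊X⌋₊, (α d : ℂ) * ∑ m ∈ J X d, (β m : ℂ) * φ (d * m) := by
  simp_rw [ArithmeticFunction.mul_apply, Complex.ofReal_sum, Finset.sum_mul, Finset.mul_sum]
  rw [Finset.sum_sigma', Finset.sum_sigma']
  refine Finset.sum_bij' (fun p _ => ⟨p.2.1, p.2.2⟩) (fun q _ => ⟨q.1 * q.2, (q.1, q.2)⟩) ?_ ?_ ?_ ?_ ?_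
  · rintro ⟨n, d, m⟩ h
    simp only [Finset.mem_sigma, Nat.mem_divisorsAntidiagonal, Finset.mem_Ioc] at h ⊢
    obtain ⟨h1, rfl, h3⟩ := h
    have hd : 0 < d := Nat.pos_of_ne_zero (fun h => h3 (by simp [h]))
    have hm : 0 < m := Nat.pos_of_ne_zero (fun h => h3 (by simp [h]))
    rw [mem_J hX one_pos] at h1
    rw [mem_J hX hd]
    push_cast at h1
    refine ⟨⟨hd, Nat.le_floor ?_⟩, by linarith [h1.1], by linarith [h1.2]⟩
    have : (d:ℝ) * 1 ≤ d * m := by gcongr; exact_mod_cast hm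
    linarith [h1.2]
  · rintro ⟨d, m⟩ h
    simp only [Finset.mem_sigma, Nat.mem_divisorsAntidiagonal, Finset.mem_Ioc] at h ⊢
    obtain ⟨⟨h1, h2⟩, h3⟩ := h
    rw [mem_J hX h1] at h3
    rw [mem_J hX one_pos]
    push_cast
    refine ⟨⟨by linarith [h3.1], by linarith [h3.2]⟩, trivial, ?_⟩
    intro h0
    have : (d:ℝ) * m = 0 := by exact_mod_cast h0
    linarith [h3.1]
  · rintro ⟨n, d, m⟩ h
    simp only [Finset.mem_sigma, Nat.mem_divisorsAntidiagonal] at h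
    simp [h.2.1]
  · rintro ⟨d, m⟩ h; rfl
  · rintro ⟨n, d, m⟩ h
    simp only [Finset.mem_sigma, Nat.mem_divisorsAntidiagonal] at h
    simp only [Complex.ofReal_mul, ← h.2.1]
    ring

end St10

namespace St10

/-- the phase -/
noncomputable def phi (c x : ℝ) (n : ℕ) : ℂ := e (x * (n:ℝ) ^ c)

lemma norm_phi (c x : ℝ) (n : ℕ) : ‖phi c x n‖ = 1 := norm_e _

lemma rpow_diff_lt {c D a b : ℝ} (hc : 1 < c) (hD : 0 < D) (ha : D ≤ a) (hb : b ≤ 2 * D) (hab : a < b) :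
    c * D ^ (c-1) * (b - a) ≤ b ^ c - a ^ c ∧ b ^ c - a ^ c ≤ c * (2 * D) ^ (c-1) * (b - a) := by
  have ha0 : 0 < a := by linarith
  obtain ⟨ξ, hξ, h⟩ := exists_hasDerivAt_eq_slope (fun t : ℝ => t ^ c) (fun t => c * t ^ (c-1)) hab
    (fun t ht => (Real.continuousAt_rpow_const _ _ (Or.inl (by linarith [ht.1]))).continuousWithinAt)
    (fun t ht => Real.hasDerivAt_rpow_const (Or.inl (by linarith [ht.1])))
  have h1 : 0 < b - a := by linarith
  have h2 : b ^ c - a ^ c = c * ξ ^ (c-1) * (b - a) := by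
    rw [h]; field_simp
  rw [h2]
  have h3 : D ^ (c-1) ≤ ξ ^ (c-1) := Real.rpow_le_rpow hD.le (by linarith [hξ.1]) (by linarith)
  have h4 : ξ ^ (c-1) ≤ (2*D) ^ (c-1) := Real.rpow_le_rpow (by linarith [hξ.1]) (by linarith [hξ.2]) (by linarith)
  have : 0 < c := by linarith
  constructor <;> gcongr

lemma rpow_diff {c D a b : ℝ} (hc : 1 < c) (hD : 0 < D) (ha : D ≤ a) (ha' : a ≤ 2 * D)
    (hb : D ≤ b) (hb' : b ≤ 2 * D) :
    c * D ^ (c-1) * |a - b| ≤ |a ^ c - b ^ c| ∧ |a ^ c - b ^ c| ≤ c * (2 * D) ^ (c-1) * |a - b| := by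
  rcases lt_trichotomy a b with h | h | h
  · have := rpow_diff_lt hc hD ha hb' h
    have h2 : a ^ c ≤ b ^ c := Real.rpow_le_rpow (by linarith) h.le (by linarith)
    rw [abs_sub_comm a b, abs_sub_comm (a^c), abs_of_nonneg (by linarith : 0 ≤ b - a),
      abs_of_nonneg (by linarith : 0 ≤ b^c - a^c)]
    exact this
  · subst h; simp
  · have := rpow_diff_lt hc hD hb ha' h
    have h2 : b ^ c ≤ a ^ c := Real.rpow_le_rpow (by linarith) h.le (by linarith)
    rw [abs_of_nonneg (by linarith : 0 ≤ a - b),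
      abs_of_nonneg (by linarith : 0 ≤ a^c - b^c)]
    exact this

lemma J_inter (X : ℝ) (d d' : ℕ) : J X d ∩ J X d' =
    Finset.Ico (max (⌊X / 2 / d⌋₊ + 1) (⌊X / 2 / d'⌋₊ + 1)) (min (⌊X / d⌋₊ + 1) (⌊X / d'⌋₊ + 1)) := by
  unfold J; rw [Finset.Ico_inter_Ico]

lemma pair_bound (c : ℝ) (hc : 1 < c) : ∃ C > 0, ∀ (X x D : ℝ) (d d' : ℕ), 0 < X → x ≠ 0 → 1 ≤ D →
    4 * D ≤ X → D < d → (d:ℝ) ≤ 2 * D → D < d' → (d':ℝ) ≤ 2 * D → d ≠ d' →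
    ‖∑ m ∈ J X d ∩ J X d', phi c x (d * m) * (starRingEnd ℂ) (phi c x (d' * m))‖ ≤
      C * (Real.sqrt (|x| * X ^ c) + X / Real.sqrt D / Real.sqrt (|x| * X ^ c) * (1 / Real.sqrt |(d:ℝ) - d'|)) := by
  obtain ⟨C, hC, hE⟩ := expsum c hc
  refine ⟨C * (Real.sqrt c + 4 ^ c / Real.sqrt c), by positivity, ?_⟩
  intro X x D d d' hX hx hD hDX h1 h2 h3 h4 hne
  have hD0 : 0 < D := by linarith
  set K := X / (4 * D) with hK
  have hK1 : 1 ≤ K := by rw [hK, le_div_iff₀ (by positivity)]; linarith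
  set y := x * ((d:ℝ) ^ c - (d':ℝ) ^ c) with hy
  obtain ⟨hl, hu⟩ := rpow_diff hc hD0 h1.le h2 h3.le h4
  have hΔ : 1 ≤ |(d:ℝ) - d'| := by
    have : (1:ℤ) ≤ |(d:ℤ) - d'| := Int.one_le_abs (by omega)
    exact_mod_cast this
  have hΔ' : |(d:ℝ) - d'| ≤ D := by rw [abs_le]; constructor <;> linarith
  have hc0 : 0 < c := by linarith
  have hxa : 0 < |x| := abs_pos.mpr hx
  have hy0 : 0 < |y| := by
    rw [hy, abs_mul]
    have : 0 < c * D ^ (c-1) * |(d:ℝ) - d'| := by positivity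
    exact mul_pos hxa (by linarith)
  set T := |x| * X ^ c with hT
  have hT0 : 0 < T := by positivity
  set Δ := |(d:ℝ) - d'| with hΔd
  have e1 : D ^ c = D ^ (c-1) * D := by
    rw [← Real.rpow_add_one hD0.ne']; ring_nf
  have e2 : K ^ c = X ^ c / (4 ^ c * D ^ c) := by
    rw [hK, Real.div_rpow hX.le (by positivity), Real.mul_rpow (by norm_num) hD0.le]
  have e3 : (2 * D) ^ (c-1) = 2 ^ (c-1) * D ^ (c-1) := Real.mul_rpow (by norm_num) hD0.le
  have hP : 0 < D ^ (c-1) := by positivity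
  have hxc : 0 < X ^ c := by positivity
  have hlow : c / 4 ^ c * (T * Δ / D) ≤ |y| * K ^ c := by
    rw [hy, abs_mul, e2, e1]
    calc c / 4 ^ c * (T * Δ / D) = |x| * (c * D ^ (c-1) * Δ) * (X ^ c / (4 ^ c * (D ^ (c-1) * D))) := by
          rw [hT]; field_simp
      _ ≤ _ := by gcongr
  have hup : |y| * K ^ c ≤ c * T := by
    rw [hy, abs_mul, e2, e1]
    calc |x| * |(d:ℝ) ^ c - (d':ℝ) ^ c| * (X ^ c / (4 ^ c * (D ^ (c-1) * D)))
        ≤ |x| * (c * (2 * D) ^ (c-1) * D) * (X ^ c / (4 ^ c * (D ^ (c-1) * D))) := by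
          gcongr
          exact hu.trans (by gcongr)
      _ = c * T * (2 ^ (c-1) / 4 ^ c) := by rw [e3, hT]; field_simp
      _ ≤ c * T * 1 := by
          gcongr
          rw [div_le_one (by positivity)]
          calc (2:ℝ) ^ (c-1) ≤ 2 ^ c := Real.rpow_le_rpow_of_exponent_le (by norm_num) (by linarith)
            _ ≤ 4 ^ c := Real.rpow_le_rpow (by norm_num) (by norm_num) hc0.le
      _ = _ := by ring
  have hsum : ∑ m ∈ J X d ∩ J X d', phi c x (d * m) * (starRingEnd ℂ) (phi c x (d' * m)) =
      ∑ m ∈ J X d ∩ J X d', e (y * (m:ℝ) ^ c) := by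
    refine Finset.sum_congr rfl fun m _ => ?_
    unfold phi
    rw [← e_neg, ← e_add]
    congr 1
    push_cast
    rw [Real.mul_rpow (by positivity) (by positivity), Real.mul_rpow (by positivity) (by positivity), hy]
    ring
  have hdpos : (0:ℝ) < d := by linarith
  rw [hsum, J_inter]
  refine (hE K y _ _ hK1 (abs_pos.mp hy0) ?_ ?_).trans ?_
  · have : K ≤ ((⌊X / 2 / d⌋₊ + 1 : ℕ) : ℝ) := by
      have h5 := Nat.lt_floor_add_one (X / 2 / d)
      push_cast
      refine le_trans ?_ h5.le
      rw [hK, div_div]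
      apply div_le_div_of_nonneg_left hX.le (by positivity) (by linarith)
    exact this.trans (by exact_mod_cast le_max_left _ _)
  · have : ((⌊X / d⌋₊ + 1 : ℕ) : ℝ) ≤ 8 * K := by
      have h5 := Nat.floor_le (show 0 ≤ X / d by positivity)
      push_cast
      have : X / d ≤ 4 * K := by
        rw [hK, div_le_iff₀ hdpos]
        have : 4 * (X / (4 * D)) * d = X * (d / D) := by field_simp
        rw [this]
        have : 1 ≤ d / D := by rw [le_div_iff₀ hD0]; linarith
        nlinarith
      linarith
    refine le_trans ?_ this
    exact_mod_cast min_le_left _ _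
  · have hc4 : (1:ℝ) ≤ 4 ^ c := Real.one_le_rpow (by norm_num) hc0.le
    have hs1 : Real.sqrt (|y| * K ^ c) ≤ Real.sqrt c * Real.sqrt T := by
      rw [← Real.sqrt_mul hc0.le]; exact Real.sqrt_le_sqrt hup
    have hs2 : Real.sqrt c / 4 ^ c * (Real.sqrt T * Real.sqrt Δ / Real.sqrt D) ≤ Real.sqrt (|y| * K ^ c) := by
      apply Real.le_sqrt_of_sq_le
      refine le_trans ?_ hlow
      rw [mul_pow, div_pow, div_pow, mul_pow, Real.sq_sqrt hc0.le, Real.sq_sqrt hT0.le, Real.sq_sqrt (by linarith),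
        Real.sq_sqrt hD0.le]
      gcongr
      nlinarith
    have hΔ0 : 0 < Δ := by linarith
    have hs3 : K / Real.sqrt (|y| * K ^ c) ≤ (4 ^ c / Real.sqrt c) * (X / Real.sqrt D / Real.sqrt T * (1 / Real.sqrt Δ)) := by
      calc K / Real.sqrt (|y| * K ^ c) ≤ K / (Real.sqrt c / 4 ^ c * (Real.sqrt T * Real.sqrt Δ / Real.sqrt D)) := by
            gcongr
        _ = 1/4 * ((4 ^ c / Real.sqrt c) * (X / Real.sqrt D / Real.sqrt T * (1 / Real.sqrt Δ))) := by
            rw [hK]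
            have := Real.mul_self_sqrt hD0.le
            field_simp
            rw [Real.sq_sqrt hD0.le]
        _ ≤ _ := by
            have : 0 ≤ ((4 ^ c / Real.sqrt c) * (X / Real.sqrt D / Real.sqrt T * (1 / Real.sqrt Δ))) := by positivity
            linarith
    rw [mul_assoc]
    gcongr
    have p1 : 0 ≤ X / Real.sqrt D / Real.sqrt T * (1 / Real.sqrt Δ) := by positivity
    have p2 : 0 ≤ Real.sqrt T := by positivity
    have p3 : 0 ≤ Real.sqrt c := by positivity
    have p4 : 0 ≤ 4 ^ c / Real.sqrt c := by positivity
    nlinarith [mul_nonneg p3 p1, mul_nonneg p4 p2]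
end St10

namespace St10

/-- Cauchy-Schwarz for a bilinear form over a relation. -/
lemma CS (B M : Finset ℕ) (Jf : ℕ → Finset ℕ) (hJ : ∀ d ∈ B, Jf d ⊆ M) (a β : ℕ → ℂ) (L : ℝ) (hL : 0 ≤ L)
    (ha : ∀ d, ‖a d‖ ≤ 1) (hβ : ∀ m ∈ M, ‖β m‖ ≤ L) (φ : ℕ → ℂ) :
    ‖∑ d ∈ B, a d * ∑ m ∈ Jf d, β m * φ (d * m)‖ ^ 2 ≤
      M.card * L ^ 2 * ∑ d ∈ B, ∑ d' ∈ B,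
        ‖∑ m ∈ Jf d ∩ Jf d', φ (d * m) * (starRingEnd ℂ) (φ (d' * m))‖ := by
  classical
  set w : ℕ → ℕ → ℂ := fun d m => if m ∈ Jf d then a d * φ (d * m) else 0 with hw
  set G : ℕ → ℂ := fun m => ∑ d ∈ B, w d m with hG
  have h1 : ∑ d ∈ B, a d * ∑ m ∈ Jf d, β m * φ (d * m) = ∑ m ∈ M, β m * G m := by
    simp only [hG, Finset.mul_sum]
    rw [Finset.sum_comm]
    refine Finset.sum_congr rfl fun d hd => ?_
    rw [← Finset.sum_subset (hJ d hd)]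
    · refine Finset.sum_congr rfl fun m hm => ?_
      simp only [hw, hm, if_true]; ring
    · intro m _ hm; simp [hw, hm]
  have h2 : ‖∑ m ∈ M, β m * G m‖ ^ 2 ≤ (M.card * L ^ 2) * ∑ m ∈ M, ‖G m‖ ^ 2 := by
    have h3 : ‖∑ m ∈ M, β m * G m‖ ≤ ∑ m ∈ M, ‖β m‖ * ‖G m‖ := by
      refine (norm_sum_le _ _).trans (le_of_eq ?_); simp
    calc _ ≤ (∑ m ∈ M, ‖β m‖ * ‖G m‖) ^ 2 := by gcongr
      _ ≤ (∑ m ∈ M, ‖β m‖ ^ 2) * ∑ m ∈ M, ‖G m‖ ^ 2 := Finset.sum_mul_sq_le_sq_mul_sq _ _ _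
      _ ≤ _ := by
        gcongr
        calc ∑ m ∈ M, ‖β m‖ ^ 2 ≤ ∑ m ∈ M, L ^ 2 :=
              Finset.sum_le_sum fun m hm => by have := hβ m hm; gcongr
          _ = _ := by simp
  rw [h1]
  refine h2.trans ?_
  gcongr
  have h4 : ((∑ m ∈ M, ‖G m‖ ^ 2 : ℝ) : ℂ) = ∑ d ∈ B, ∑ d' ∈ B, a d * (starRingEnd ℂ) (a d') *
      ∑ m ∈ Jf d ∩ Jf d', φ (d * m) * (starRingEnd ℂ) (φ (d' * m)) := by
    push_cast
    have : ∀ m ∈ M, ((‖G m‖ : ℂ)) ^ 2 = ∑ d ∈ B, ∑ d' ∈ B, w d m * (starRingEnd ℂ) (w d' m) := by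
      intro m _
      rw [← Complex.mul_conj', hG]
      simp only [map_sum, Finset.sum_mul_sum]
    rw [Finset.sum_congr rfl this, Finset.sum_comm]
    refine Finset.sum_congr rfl fun d hd => ?_
    rw [Finset.sum_comm]
    refine Finset.sum_congr rfl fun d' hd' => ?_
    rw [Finset.mul_sum, ← Finset.sum_subset (Finset.inter_subset_left.trans (hJ d hd) : Jf d ∩ Jf d' ⊆ M)]
    · refine Finset.sum_congr rfl fun m hm => ?_
      rw [Finset.mem_inter] at hm
      simp only [hw, hm.1, hm.2, if_true, map_mul]; ring
    · intro m _ hm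
      rw [Finset.mem_inter, not_and_or] at hm
      rcases hm with hm | hm <;> simp [hw, hm]
  have h5 : (∑ m ∈ M, ‖G m‖ ^ 2 : ℝ) = ‖((∑ m ∈ M, ‖G m‖ ^ 2 : ℝ) : ℂ)‖ := by
    rw [Complex.norm_real, Real.norm_of_nonneg (by positivity)]
  rw [h5, h4]
  refine (norm_sum_le _ _).trans (Finset.sum_le_sum fun d _ => ?_)
  refine (norm_sum_le _ _).trans (Finset.sum_le_sum fun d' _ => ?_)
  rw [norm_mul, norm_mul, RCLike.norm_conj]
  have := mul_le_one₀ (ha d) (norm_nonneg _) (ha d')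
  exact mul_le_of_le_one_left (norm_nonneg _) this

lemma typeII (c : ℝ) (hc : 1 < c) : ∃ C > 0, ∀ (X x D v L : ℝ) (a β : ℕ → ℂ), 0 < X → x ≠ 0 → 1 ≤ D →
    4 ≤ v → 0 ≤ L → (∀ d, ‖a d‖ ≤ 1) → (∀ m : ℕ, (m:ℝ) ≤ X → ‖β m‖ ≤ L) → (∀ m : ℕ, (m:ℝ) ≤ v → β m = 0) →
    ‖∑ d ∈ Finset.Ioc ⌊D⌋₊ ⌊2 * D⌋₊, a d * ∑ m ∈ J X d, β m * phi c x (d * m)‖ ^ 2 ≤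
      C * (X * L) ^ 2 * (1 / D + Real.sqrt (|x| * X ^ c) / v + 1 / Real.sqrt (|x| * X ^ c)) := by
  obtain ⟨C, hC, hP⟩ := pair_bound c hc
  refine ⟨2 + 16 * C, by positivity, ?_⟩
  intro X x D v L a β hX hx hD hv hL ha hβ hβ0
  have hD0 : 0 < D := by linarith
  have hv0 : 0 < v := by linarith
  have hxa : 0 < |x| := abs_pos.mpr hx
  set T := |x| * X ^ c with hT
  have hT0 : 0 < T := by positivity
  set B := Finset.Ioc ⌊D⌋₊ ⌊2 * D⌋₊ with hB
  have hBm : ∀ d ∈ B, D < d ∧ (d:ℝ) ≤ 2 * D := by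
    intro d hd
    rw [hB, Finset.mem_Ioc] at hd
    exact ⟨(Nat.floor_lt hD0.le).mp hd.1, (Nat.le_floor_iff (by positivity)).mp hd.2⟩
  rcases le_or_gt X (D * v) with hcase | hcase
  · have : ∑ d ∈ B, a d * ∑ m ∈ J X d, β m * phi c x (d * m) = 0 := by
      refine Finset.sum_eq_zero fun d hd => ?_
      obtain ⟨h1, h2⟩ := hBm d hd
      have hd0 : 0 < d := by exact_mod_cast hD0.trans h1
      rw [Finset.sum_eq_zero, mul_zero]
      intro m hm
      rw [mem_J hX.le hd0] at hm
      rw [hβ0 m, zero_mul]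
      by_contra hcon
      rw [not_le] at hcon
      have : D * v < d * m := by gcongr
      linarith [hm.2]
    rw [this]; simp; positivity
  have hDX : 4 * D ≤ X := by nlinarith
  set K := X / (4 * D) with hK
  have hK1 : 1 ≤ K := by rw [hK, le_div_iff₀ (by positivity)]; linarith
  set M := Finset.Ioc ⌊K⌋₊ ⌊4 * K⌋₊ with hM
  have h4K : 4 * K = X / D := by rw [hK]; field_simp
  have hJM : ∀ d ∈ B, J X d ⊆ M := by
    intro d hd m hm
    obtain ⟨h1, h2⟩ := hBm d hd
    have hd0 : 0 < d := by exact_mod_cast hD0.trans h1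
    rw [mem_J hX.le hd0] at hm
    rw [hM, Finset.mem_Ioc, Nat.floor_lt (by positivity), Nat.le_floor_iff (by positivity), h4K, hK,
      div_lt_iff₀ (by positivity), le_div_iff₀ hD0]
    have hm0 : (0:ℝ) ≤ m := by positivity
    constructor <;> nlinarith [hm.1, hm.2]
  have hMX : ∀ m ∈ M, (m:ℝ) ≤ X := by
    intro m hm
    rw [hM, Finset.mem_Ioc, Nat.le_floor_iff (by positivity), h4K] at hm
    exact hm.2.trans (div_le_self hX.le hD)
  have hMc : (M.card : ℝ) ≤ 4 * K := by
    rw [hM, Nat.card_Ioc]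
    exact (by exact_mod_cast Nat.sub_le _ _ : ((⌊4 * K⌋₊ - ⌊K⌋₊ : ℕ) : ℝ) ≤ ⌊4 * K⌋₊).trans (Nat.floor_le (by positivity))
  set n := ⌊2 * D⌋₊ - ⌊D⌋₊ with hn
  have hnD : (n:ℝ) ≤ 2 * D := 
    (by exact_mod_cast Nat.sub_le _ _ : (n : ℝ) ≤ ⌊2 * D⌋₊).trans (Nat.floor_le (by positivity))
  have hBc : (B.card : ℝ) ≤ 2 * D := by rw [hB, Nat.card_Ioc]; exact hnD
  have hinner : ∀ d ∈ B, ∑ d' ∈ B, ‖∑ m ∈ J X d ∩ J X d', phi c x (d * m) * (starRingEnd ℂ) (phi c x (d' * m))‖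
      ≤ X / D + C * (2 * D * Real.sqrt T) + C * (X / Real.sqrt D / Real.sqrt T * (4 * Real.sqrt n)) := by
    intro d hd
    obtain ⟨h1, h2⟩ := hBm d hd
    have hb : ∀ d' ∈ B, ‖∑ m ∈ J X d ∩ J X d', phi c x (d * m) * (starRingEnd ℂ) (phi c x (d' * m))‖ ≤
        (if d = d' then X / D else 0) + C * Real.sqrt T
          + C * (X / Real.sqrt D / Real.sqrt T) * (1 / Real.sqrt |(d:ℝ) - d'|) := by
      intro d' hd'
      obtain ⟨h3, h4⟩ := hBm d' hd'
      split_ifs with hdd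
      · subst hdd
        have : ‖∑ m ∈ J X d ∩ J X d, phi c x (d * m) * (starRingEnd ℂ) (phi c x (d * m))‖ ≤ X / D := by
          refine (norm_sum_le _ _).trans ?_
          simp only [norm_mul, norm_phi, RCLike.norm_conj, mul_one, Finset.sum_const, nsmul_eq_mul, Finset.inter_self]
          rw [← h4K]
          refine le_trans ?_ hMc
          exact_mod_cast Finset.card_le_card (hJM d hd)
        have p : 0 ≤ C * (X / Real.sqrt D / Real.sqrt T) * (1 / Real.sqrt |(d:ℝ) - d|) := by positivity
        have p' : 0 ≤ C * Real.sqrt T := by positivity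
        linarith
      · have := hP X x D d d' hX hx hD hDX h1 h2 h3 h4 hdd
        rw [← hT] at this
        linarith
    refine (Finset.sum_le_sum hb).trans ?_
    rw [Finset.sum_add_distrib, Finset.sum_add_distrib, ← Finset.mul_sum, Finset.sum_ite_eq, if_pos hd]
    have hd' := hd
    rw [hB, Finset.mem_Ioc] at hd'
    have h6 := sum_inv_sqrt_dist ⌊D⌋₊ ⌊2 * D⌋₊ d n hd'.1 hd'.2 (by omega)
    rw [Finset.sum_const, nsmul_eq_mul, ← Finset.mul_sum, ← mul_assoc C (X / _ / _)]
    gcongr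
  refine (CS B M (J X) hJM a β L hL ha (fun m hm => hβ m (hMX m hm)) (phi c x)).trans ?_
  have hsn : Real.sqrt n ≤ 2 * Real.sqrt D := by
    rw [Real.sqrt_le_left (by positivity), mul_pow, Real.sq_sqrt hD0.le]; linarith
  calc _ ≤ 4 * K * L ^ 2 * ∑ d ∈ B, (X / D + C * (2 * D * Real.sqrt T) + C * (X / Real.sqrt D / Real.sqrt T * (4 * Real.sqrt n))) := by
        have := Finset.sum_le_sum hinner
        gcongr
    _ = 4 * K * L ^ 2 * (B.card * (X / D + C * (2 * D * Real.sqrt T) + C * (X / Real.sqrt D / Real.sqrt T * (4 * Real.sqrt n)))) := by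
        rw [Finset.sum_const, nsmul_eq_mul]
    _ ≤ 4 * K * L ^ 2 * (2 * D * (X / D + C * (2 * D * Real.sqrt T) + C * (X / Real.sqrt D / Real.sqrt T * (4 * (2 * Real.sqrt D))))) := by
        gcongr
    _ = (X * L) ^ 2 * (2 * (1 / D) + 4 * C * (Real.sqrt T * (D / X)) + 16 * C * (1 / Real.sqrt T)) := by
        rw [h4K]; field_simp; ring
    _ ≤ (X * L) ^ 2 * (2 * (1 / D) + 4 * C * (Real.sqrt T * (1 / v)) + 16 * C * (1 / Real.sqrt T)) := by
        have : D / X ≤ 1 / v := by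
          rw [div_le_div_iff₀ hX hv0]; linarith
        gcongr
    _ ≤ (X * L) ^ 2 * ((2 + 16 * C) * (1 / D + Real.sqrt T / v + 1 / Real.sqrt T)) := by
        have p1 : 0 ≤ 1 / D := by positivity
        have p2 : 0 ≤ Real.sqrt T / v := by positivity
        have p3 : 0 ≤ 1 / Real.sqrt T := by positivity
        have e1 : Real.sqrt T * (1 / v) = Real.sqrt T / v := by ring
        rw [e1]
        gcongr
        nlinarith [mul_nonneg hC.le p1, mul_nonneg hC.le p2, mul_nonneg hC.le p3]
    _ = _ := by ring
end St10

namespace St10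

open ArithmeticFunction in
/-- truncation to `n ≤ u` -/
noncomputable def lo (f : ArithmeticFunction ℝ) (u : ℝ) : ArithmeticFunction ℝ :=
  ⟨fun n => if (n:ℝ) ≤ u then f n else 0, by simp⟩

lemma lo_apply (f : ArithmeticFunction ℝ) (u : ℝ) (n : ℕ) : lo f u n = if (n:ℝ) ≤ u then f n else 0 := rfl

/-- real Moebius -/
noncomputable def mu : ArithmeticFunction ℝ := (ArithmeticFunction.moebius : ArithmeticFunction ℝ)

lemma mu_abs (n : ℕ) : |mu n| ≤ 1 := by
  rw [mu, ArithmeticFunction.intCoe_apply]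
  exact_mod_cast ArithmeticFunction.abs_moebius_le_one

lemma vaughan (u v : ℝ) : ArithmeticFunction.vonMangoldt =
    lo ArithmeticFunction.vonMangoldt v + lo mu u * ArithmeticFunction.log
      - (lo mu u * lo ArithmeticFunction.vonMangoldt v) * (ArithmeticFunction.zeta : ArithmeticFunction ℝ)
      + (mu - lo mu u) * ((ArithmeticFunction.vonMangoldt - lo ArithmeticFunction.vonMangoldt v) * (ArithmeticFunction.zeta : ArithmeticFunction ℝ)) := by
  have h1 : mu * (ArithmeticFunction.zeta : ArithmeticFunction ℝ) = 1 := ArithmeticFunction.coe_moebius_mul_coe_zeta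
  rw [← ArithmeticFunction.vonMangoldt_mul_zeta]
  set Λ := ArithmeticFunction.vonMangoldt
  set z := (ArithmeticFunction.zeta : ArithmeticFunction ℝ)
  linear_combination (-(Λ - lo Λ v)) * h1

lemma typeI_inner (c : ℝ) (hc : 1 < c) : ∃ C > 0, ∀ (X x : ℝ) (d a' : ℕ), 0 < X → x ≠ 0 → 1 ≤ d →
    2 * (d:ℝ) ≤ X → ⌊X / 2 / d⌋₊ + 1 ≤ a' →
    ‖∑ m ∈ Finset.Ico a' (⌊X / d⌋₊ + 1), phi c x (d * m)‖ ≤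
      C * (Real.sqrt (|x| * X ^ c) + X / Real.sqrt (|x| * X ^ c) * (1 / d)) := by
  obtain ⟨C, hC, hE⟩ := expsum c hc
  refine ⟨C * Real.sqrt (2 ^ c), by positivity, ?_⟩
  intro X x d a' hX hx hd hdX ha'
  have hd0 : (0:ℝ) < d := by exact_mod_cast hd
  set A := X / 2 / d with hA
  have hA1 : 1 ≤ A := by rw [hA, div_div, le_div_iff₀ (by positivity)]; linarith
  set y := x * (d:ℝ) ^ c with hy
  have hy0 : y ≠ 0 := mul_ne_zero hx (by positivity)
  have hsum : ∑ m ∈ Finset.Ico a' (⌊X / d⌋₊ + 1), phi c x (d * m) =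
      ∑ m ∈ Finset.Ico a' (⌊X / d⌋₊ + 1), e (y * (m:ℝ) ^ c) := by
    refine Finset.sum_congr rfl fun m _ => ?_
    unfold phi
    congr 1
    push_cast
    rw [Real.mul_rpow (by positivity) (by positivity), hy]
    ring
  set T := |x| * X ^ c with hT
  have hxa : 0 < |x| := abs_pos.mpr hx
  have hT0 : 0 < T := by positivity
  have hyA : |y| * A ^ c = T / 2 ^ c := by
    rw [hy, abs_mul, abs_of_pos (show 0 < (d:ℝ)^c by positivity), hA, Real.div_rpow (by positivity) hd0.le,
      Real.div_rpow hX.le (by norm_num), hT]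
    field_simp
  rw [hsum]
  refine (hE A y _ _ hA1 hy0 ?_ ?_).trans ?_
  · have h5 := Nat.lt_floor_add_one A
    have : ((⌊A⌋₊ + 1 : ℕ) : ℝ) ≤ a' := by exact_mod_cast ha'
    push_cast at this; linarith
  · push_cast
    have h5 := Nat.floor_le (show 0 ≤ X / d by positivity)
    have : X / d = 2 * A := by rw [hA]; field_simp
    linarith
  · rw [hyA, Real.sqrt_div hT0.le]
    set r := Real.sqrt (2 ^ c) with hr
    have hr1 : 1 ≤ r := by
      rw [hr, Real.one_le_sqrt]; exact Real.one_le_rpow (by norm_num) (by linarith)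
    rw [mul_assoc]
    gcongr
    have h1 : Real.sqrt T / r ≤ r * Real.sqrt T := by
      rw [div_le_iff₀ (by linarith)]
      have := Real.sqrt_nonneg T
      nlinarith [mul_nonneg this (by nlinarith : 0 ≤ r * r - 1)]
    have h2 : A / (Real.sqrt T / r) ≤ r * (X / Real.sqrt T * (1 / d)) := by
      have : A / (Real.sqrt T / r) = (r * (X / Real.sqrt T * (1 / d))) / 2 := by
        rw [hA]; field_simp
      rw [this]
      have : 0 ≤ (r * (X / Real.sqrt T * (1 / d))) := by positivity
      linarith
    linarith

lemma sum_inv_le (N : ℕ) : ∑ d ∈ Finset.Ioc 0 N, (1:ℝ) / d ≤ 1 + Real.log N := by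
  refine le_trans (le_of_eq ?_) (harmonic_le_one_add_log N)
  induction N with
  | zero => simp
  | succ n ih =>
    rw [Finset.sum_Ioc_succ_top (by omega), ih, harmonic_succ]; push_cast; ring

lemma typeI_sum (α : ℕ → ℝ) (g : ℕ → ℂ) (X w L P Q : ℝ) (hw : 1 ≤ w) (hwX : w ≤ X) (hL : 0 ≤ L)
    (hP : 0 ≤ P) (hQ : 0 ≤ Q)
    (hα : ∀ d : ℕ, (d:ℝ) ≤ w → |α d| ≤ L) (hα0 : ∀ d : ℕ, w < d → α d = 0)
    (hg : ∀ d : ℕ, 1 ≤ d → (d:ℝ) ≤ w → ‖g d‖ ≤ P + Q * (1 / d)) :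
    ‖∑ d ∈ Finset.Ioc 0 ⌊X⌋₊, (α d : ℂ) * g d‖ ≤ L * (w * P + Q * (1 + Real.log X)) := by
  have h1 : ∑ d ∈ Finset.Ioc 0 ⌊X⌋₊, (α d : ℂ) * g d = ∑ d ∈ Finset.Ioc 0 ⌊w⌋₊, (α d : ℂ) * g d := by
    symm
    apply Finset.sum_subset
    · apply Finset.Ioc_subset_Ioc_right; exact Nat.floor_mono hwX
    · intro d hd hd'
      rw [Finset.mem_Ioc] at hd hd'
      rw [hα0 d, Complex.ofReal_zero, zero_mul]
      rw [← Nat.floor_lt (by linarith)]; omega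
  rw [h1]
  refine (norm_sum_le _ _).trans ?_
  have h2 : ∀ d ∈ Finset.Ioc 0 ⌊w⌋₊, ‖(α d : ℂ) * g d‖ ≤ L * (P + Q * (1 / d)) := by
    intro d hd
    rw [Finset.mem_Ioc, Nat.le_floor_iff (by linarith)] at hd
    rw [norm_mul, Complex.norm_real, Real.norm_eq_abs]
    exact mul_le_mul (hα d hd.2) (hg d hd.1 hd.2) (norm_nonneg _) hL
  refine (Finset.sum_le_sum h2).trans ?_
  rw [← Finset.mul_sum, Finset.sum_add_distrib, ← Finset.mul_sum]
  have hfw := Nat.floor_le (show 0 ≤ w by linarith)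
  have h3 := sum_inv_le ⌊w⌋₊
  have h4 : Real.log ⌊w⌋₊ ≤ Real.log X := by
    apply Real.log_le_log
    · exact_mod_cast Nat.floor_pos.mpr hw
    · linarith
  gcongr
  · simp only [Finset.sum_const, Nat.card_Ioc, nsmul_eq_mul, Nat.sub_zero]; gcongr
  · linarith

lemma dyadic (c : ℝ) (hc : 1 < c) : ∃ C > 0, ∀ (X x u v L : ℝ) (a β : ℕ → ℂ), 1 ≤ X → x ≠ 0 → 1 ≤ u →
    4 ≤ v → 0 ≤ L → (∀ d, ‖a d‖ ≤ 1) → (∀ d : ℕ, (d:ℝ) ≤ u → a d = 0) →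
    (∀ m : ℕ, (m:ℝ) ≤ X → ‖β m‖ ≤ L) → (∀ m : ℕ, (m:ℝ) ≤ v → β m = 0) →
    ‖∑ d ∈ Finset.Ioc 0 ⌊X⌋₊, a d * ∑ m ∈ J X d, β m * phi c x (d * m)‖ ≤
      C * (2 * Real.log X + 1) * (X * L) * Real.sqrt (1 / u + Real.sqrt (|x| * X ^ c) / v + 1 / Real.sqrt (|x| * X ^ c)) := by
  obtain ⟨C, hC, hII⟩ := typeII c hc
  refine ⟨Real.sqrt C, by positivity, ?_⟩
  intro X x u v L a β hX hx hu hv hL ha ha0 hβ hβ0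
  have hX0 : 0 < X := by linarith
  set T := |x| * X ^ c with hT
  set f : ℕ → ℂ := fun d => a d * ∑ m ∈ J X d, β m * phi c x (d * m) with hf
  set N := ⌈Real.log X / Real.log 2⌉₊ with hN
  have hl2 : 0 < Real.log 2 := Real.log_pos (by norm_num)
  have hlX : 0 ≤ Real.log X := Real.log_nonneg hX
  have hN1 : (N:ℝ) ≤ 2 * Real.log X + 1 := by
    have := Nat.ceil_lt_add_one (show 0 ≤ Real.log X / Real.log 2 by positivity)
    have h2 : Real.log X / Real.log 2 ≤ 2 * Real.log X := by
      rw [div_le_iff₀ hl2]; nlinarith [Real.log_two_gt_d9]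
    linarith
  have hN2 : X ≤ 2 ^ N * u := by
    have h1 : Real.log X / Real.log 2 ≤ N := Nat.le_ceil _
    rw [div_le_iff₀ hl2, ← Real.log_pow] at h1
    have h2 := (Real.log_le_log_iff hX0 (by positivity)).mp h1
    have : (0:ℝ) < 2 ^ N := by positivity
    nlinarith
  have h1 : ∑ d ∈ Finset.Ioc 0 ⌊X⌋₊, f d = ∑ d ∈ Finset.Ioc ⌊u⌋₊ ⌊2 ^ N * u⌋₊, f d := by
    have h2 : ∑ d ∈ Finset.Ioc 0 ⌊X⌋₊, f d = ∑ d ∈ Finset.Ioc 0 ⌊2 ^ N * u⌋₊, f d := by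
      apply Finset.sum_subset
      · apply Finset.Ioc_subset_Ioc_right; exact Nat.floor_mono hN2
      · intro d hd hd'
        rw [Finset.mem_Ioc] at hd hd'
        have hdX : X < d := by rw [← Nat.floor_lt (by linarith)]; omega
        simp only [hf]
        rw [Finset.sum_eq_zero, mul_zero]
        intro m hm
        rw [mem_J hX0.le hd.1] at hm
        exfalso
        rcases Nat.eq_zero_or_pos m with rfl | hm0
        · simp at hm; linarith
        · have : (1:ℝ) ≤ m := by exact_mod_cast hm0
          nlinarith [hm.2]
    have h3 : ∑ d ∈ Finset.Ioc ⌊u⌋₊ ⌊2 ^ N * u⌋₊, f d = ∑ d ∈ Finset.Ioc 0 ⌊2 ^ N * u⌋₊, f d := by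
      apply Finset.sum_subset
      · apply Finset.Ioc_subset_Ioc_left; omega
      · intro d hd hd'
        rw [Finset.mem_Ioc] at hd hd'
        simp only [hf]
        rw [ha0 d, zero_mul]
        rw [← Nat.le_floor_iff (by linarith)]; omega
    rw [h2, h3]
  have h2 : ∀ n : ℕ, ∑ d ∈ Finset.Ioc ⌊u⌋₊ ⌊2 ^ n * u⌋₊, f d =
      ∑ k ∈ Finset.range n, ∑ d ∈ Finset.Ioc ⌊2 ^ k * u⌋₊ ⌊2 * (2 ^ k * u)⌋₊, f d := by
    intro n
    induction n with
    | zero => simp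
    | succ n ih =>
      rw [Finset.sum_range_succ, ← ih, Finset.sum_Ioc_consecutive]
      · congr 3; ring
      · apply Nat.floor_mono
        have : (1:ℝ) ≤ 2 ^ n := one_le_pow₀ (by norm_num)
        nlinarith
      · apply Nat.floor_mono
        have : (1:ℝ) ≤ 2 ^ n := one_le_pow₀ (by norm_num)
        nlinarith
  rw [h1, h2]
  refine (norm_sum_le _ _).trans ?_
  set R := Real.sqrt (1 / u + Real.sqrt T / v + 1 / Real.sqrt T) with hR
  have h3 : ∀ k ∈ Finset.range N, ‖∑ d ∈ Finset.Ioc ⌊2 ^ k * u⌋₊ ⌊2 * (2 ^ k * u)⌋₊, f d‖ ≤ Real.sqrt C * (X * L) * R := by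
    intro k _
    have h4 : (1:ℝ) ≤ 2 ^ k := one_le_pow₀ (by norm_num)
    have h5 : u ≤ 2 ^ k * u := by nlinarith
    have := hII X x (2 ^ k * u) v L a β hX0 hx (by linarith) hv hL ha hβ hβ0
    rw [← hT] at this
    apply le_of_sq_le_sq _ (by positivity)
    refine this.trans ?_
    have hu0 : 0 < u := by linarith
    rw [mul_pow _ R, mul_pow (Real.sqrt C), Real.sq_sqrt hC.le, hR, Real.sq_sqrt (by positivity)]
    gcongr
  refine (Finset.sum_le_sum h3).trans ?_
  rw [Finset.sum_const, nsmul_eq_mul, Finset.card_range]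
  calc (N:ℝ) * (Real.sqrt C * (X * L) * R) ≤ (2 * Real.log X + 1) * (Real.sqrt C * (X * L) * R) := by gcongr
    _ = _ := by ring

end St10

namespace St10

lemma lo_mu_abs (u : ℝ) (n : ℕ) : |lo mu u n| ≤ 1 := by
  rw [lo_apply]; split_ifs
  · exact mu_abs n
  · simp

lemma lo_vm_nonneg (v : ℝ) (n : ℕ) : 0 ≤ lo ArithmeticFunction.vonMangoldt v n ∧
    lo ArithmeticFunction.vonMangoldt v n ≤ ArithmeticFunction.vonMangoldt n := by
  rw [lo_apply]; split_ifs
  · exact ⟨ArithmeticFunction.vonMangoldt_nonneg, le_rfl⟩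
  · exact ⟨le_rfl, ArithmeticFunction.vonMangoldt_nonneg⟩

lemma conv_abs (u v : ℝ) (d : ℕ) :
    |(lo mu u * lo ArithmeticFunction.vonMangoldt v) d| ≤ Real.log d := by
  rw [ArithmeticFunction.mul_apply, ← ArithmeticFunction.vonMangoldt_sum]
  refine (Finset.abs_sum_le_sum_abs _ _).trans ?_
  rw [← Nat.sum_divisorsAntidiagonal' (fun _ y => ArithmeticFunction.vonMangoldt y)]
  refine Finset.sum_le_sum fun p _ => ?_
  rw [abs_mul, abs_of_nonneg (lo_vm_nonneg v p.2).1]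
  calc _ ≤ 1 * lo ArithmeticFunction.vonMangoldt v p.2 := by
        have := lo_mu_abs u p.1
        have := (lo_vm_nonneg v p.2).1
        gcongr
    _ ≤ _ := by rw [one_mul]; exact (lo_vm_nonneg v p.2).2

lemma conv_zero (u v : ℝ) (hu : 0 ≤ u) (d : ℕ) (hd : u * v < d) :
    (lo mu u * lo ArithmeticFunction.vonMangoldt v) d = 0 := by
  rw [ArithmeticFunction.mul_apply]
  refine Finset.sum_eq_zero fun p hp => ?_
  rw [Nat.mem_divisorsAntidiagonal] at hp
  rw [lo_apply, lo_apply]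
  split_ifs with h1 h2
  · exfalso
    have : (p.1:ℝ) * p.2 ≤ u * v := by gcongr
    rw [← hp.1] at hd; push_cast at hd; linarith
  all_goals simp

lemma beta_bounds (v : ℝ) (m : ℕ) :
    0 ≤ ((ArithmeticFunction.vonMangoldt - lo ArithmeticFunction.vonMangoldt v) * (ArithmeticFunction.zeta : ArithmeticFunction ℝ)) m ∧
    ((ArithmeticFunction.vonMangoldt - lo ArithmeticFunction.vonMangoldt v) * (ArithmeticFunction.zeta : ArithmeticFunction ℝ)) m ≤ Real.log m := by
  rw [ArithmeticFunction.coe_mul_zeta_apply, ← ArithmeticFunction.vonMangoldt_sum]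
  constructor
  · refine Finset.sum_nonneg fun i _ => ?_
    rw [sub_eq_add_neg, ArithmeticFunction.add_apply, ArithmeticFunction.neg_apply]
    linarith [(lo_vm_nonneg v i).2]
  · refine Finset.sum_le_sum fun i _ => ?_
    rw [sub_eq_add_neg, ArithmeticFunction.add_apply, ArithmeticFunction.neg_apply]
    linarith [(lo_vm_nonneg v i).1]

lemma beta_zero (v : ℝ) (m : ℕ) (hm : (m:ℝ) ≤ v) :
    ((ArithmeticFunction.vonMangoldt - lo ArithmeticFunction.vonMangoldt v) * (ArithmeticFunction.zeta : ArithmeticFunction ℝ)) m = 0 := by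
  rw [ArithmeticFunction.coe_mul_zeta_apply]
  refine Finset.sum_eq_zero fun i hi => ?_
  rw [sub_eq_add_neg, ArithmeticFunction.add_apply, ArithmeticFunction.neg_apply, lo_apply, if_pos]
  · ring
  · have := Nat.divisor_le hi
    have : (i:ℝ) ≤ m := by exact_mod_cast this
    linarith

lemma log_add_one_le {X : ℝ} (hX : 3 ≤ X) : 1 ≤ Real.log X ∧ Real.log (X + 1) ≤ 2 * Real.log X := by
  constructor
  · rw [Real.le_log_iff_exp_le (by linarith)]; linarith [Real.exp_one_lt_d9]
  · rw [show 2 * Real.log X = Real.log (X^2) by rw [Real.log_pow]; norm_num]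
    apply Real.log_le_log <;> nlinarith

lemma vaughan_bound (c : ℝ) (hc : 1 < c) : ∃ C > 0, ∀ (X x u v : ℝ), 3 ≤ X → x ≠ 0 → 1 ≤ u → 4 ≤ v →
    2 * (u * v) ≤ X →
    ‖∑ n ∈ J X 1, (ArithmeticFunction.vonMangoldt n : ℂ) * phi c x n‖ ≤
      C * Real.log X ^ 2 * (u * v * Real.sqrt (|x| * X ^ c) + X / Real.sqrt (|x| * X ^ c) +
        X * Real.sqrt (1 / u + Real.sqrt (|x| * X ^ c) / v + 1 / Real.sqrt (|x| * X ^ c))) := by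
  obtain ⟨C1, hC1, hI⟩ := typeI_inner c hc
  obtain ⟨C2, hC2, hII⟩ := dyadic c hc
  refine ⟨6 * C1 + 3 * C2, by positivity, ?_⟩
  intro X x u v hX hx hu hv huv
  have hX0 : 0 < X := by linarith
  have hxa : 0 < |x| := abs_pos.mpr hx
  set T := |x| * X ^ c with hT
  have hT0 : 0 < T := by positivity
  set ℓ := Real.log X with hℓ
  obtain ⟨hl1, hl2⟩ := log_add_one_le hX
  rw [← hℓ] at hl1 hl2
  have huuv : u ≤ u * v := by nlinarith
  have hvuv : v ≤ u * v := by nlinarith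
  set φ := phi c x with hφ
  -- sum of the four pieces
  have hlo : ∑ n ∈ J X 1, (lo ArithmeticFunction.vonMangoldt v n : ℂ) * φ n = 0 := by
    refine Finset.sum_eq_zero fun n hn => ?_
    rw [mem_J hX0.le one_pos] at hn
    rw [lo_apply, if_neg, Complex.ofReal_zero, zero_mul]
    push_cast at hn
    linarith [hn.1]
  have hA : ‖∑ n ∈ J X 1, ((lo mu u * ArithmeticFunction.log) n : ℂ) * φ n‖ ≤
      1 * (u * (2 * ℓ * (C1 * Real.sqrt T)) + 2 * ℓ * (C1 * (X / Real.sqrt T)) * (1 + ℓ)) := by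
    rw [conv_sum X hX0.le]
    apply typeI_sum (lo mu u) _ X u 1 _ _ hu (by linarith) (by norm_num) (by positivity) (by positivity)
    · intro d _; exact lo_mu_abs u d
    · intro d hd; rw [lo_apply, if_neg (by linarith)]
    · intro d hd1 hd
      have hd0 : (1:ℝ) ≤ d := by exact_mod_cast hd1
      have h1 := abel_log (fun m => φ (d * m)) (C1 * (Real.sqrt T + X / Real.sqrt T * (1 / d)))
        (⌊X / 2 / d⌋₊ + 1) (⌊X / d⌋₊ + 1) (by omega)
        (fun a' ha' => hI X x d a' hX0 hx hd1 (by linarith) ha')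
      have h2 : Real.log ((⌊X / d⌋₊ + 1 : ℕ) : ℝ) ≤ 2 * ℓ := by
        refine le_trans (Real.log_le_log (by positivity) ?_) hl2
        push_cast
        have := Nat.floor_le (show 0 ≤ X / d by positivity)
        have := div_le_self hX0.le hd0
        linarith
      calc _ ≤ _ := h1
        _ ≤ (2 * ℓ) * (C1 * (Real.sqrt T + X / Real.sqrt T * (1 / d))) := by gcongr
        _ = _ := by ring
  have hB : ‖∑ n ∈ J X 1, (((lo mu u * lo ArithmeticFunction.vonMangoldt v) * (ArithmeticFunction.zeta : ArithmeticFunction ℝ)) n : ℂ) * φ n‖ ≤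
      ℓ * ((u * v) * ((C1 * Real.sqrt T)) + (C1 * (X / Real.sqrt T)) * (1 + ℓ)) := by
    rw [conv_sum X hX0.le]
    apply typeI_sum _ _ X (u * v) ℓ _ _ (by linarith) (by linarith) (by linarith) (by positivity) (by positivity)
    · intro d hd
      refine (conv_abs u v d).trans ?_
      rcases Nat.eq_zero_or_pos d with rfl | hd0
      · simp; linarith
      · exact Real.log_le_log (by exact_mod_cast hd0) (by linarith)
    · intro d hd; exact conv_zero u v (by linarith) d hd
    · intro d hd1 hd
      have h1 := hI X x d _ hX0 hx hd1 (by linarith) le_rfl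
      have h2 : ∑ m ∈ J X d, (((ArithmeticFunction.zeta : ArithmeticFunction ℝ) m : ℝ) : ℂ) * φ (d * m) = ∑ m ∈ J X d, φ (d * m) := by
        refine Finset.sum_congr rfl fun m hm => ?_
        have hm0 : m ≠ 0 := by
          rw [J, Finset.mem_Ico] at hm; omega
        simp [ArithmeticFunction.natCoe_apply, ArithmeticFunction.zeta_apply, hm0]
      rw [h2]
      refine h1.trans (le_of_eq ?_); ring
  have hC : ‖∑ n ∈ J X 1, (((mu - lo mu u) * ((ArithmeticFunction.vonMangoldt - lo ArithmeticFunction.vonMangoldt v) * (ArithmeticFunction.zeta : ArithmeticFunction ℝ))) n : ℂ) * φ n‖ ≤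
      C2 * (2 * ℓ + 1) * (X * ℓ) * Real.sqrt (1 / u + Real.sqrt T / v + 1 / Real.sqrt T) := by
    rw [conv_sum X hX0.le]
    have hs : ∀ d, (mu - lo mu u) d = if (d:ℝ) ≤ u then 0 else mu d := by
      intro d
      rw [sub_eq_add_neg, ArithmeticFunction.add_apply, ArithmeticFunction.neg_apply, lo_apply]
      split_ifs <;> ring
    apply hII X x u v ℓ (fun d => (((mu - lo mu u) d : ℝ) : ℂ))
      (fun m => ((((ArithmeticFunction.vonMangoldt - lo ArithmeticFunction.vonMangoldt v) * (ArithmeticFunction.zeta : ArithmeticFunction ℝ)) m : ℝ) : ℂ))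
      (by linarith) hx hu hv (by linarith)
    · intro d
      rw [Complex.norm_real, Real.norm_eq_abs, hs]
      split_ifs
      · simp
      · exact mu_abs d
    · intro d hd
      rw [hs, if_pos hd]; simp
    · intro m hm
      obtain ⟨h1, h2⟩ := beta_bounds v m
      rw [Complex.norm_real, Real.norm_eq_abs, abs_of_nonneg h1]
      refine h2.trans ?_
      rcases Nat.eq_zero_or_pos m with rfl | hd0
      · simp; linarith
      · exact Real.log_le_log (by exact_mod_cast hd0) (by linarith)
    · intro m hm
      rw [beta_zero v m hm]; simp
  have key : ∑ n ∈ J X 1, (ArithmeticFunction.vonMangoldt n : ℂ) * φ n =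
      ∑ n ∈ J X 1, (lo ArithmeticFunction.vonMangoldt v n : ℂ) * φ n
      + ∑ n ∈ J X 1, ((lo mu u * ArithmeticFunction.log) n : ℂ) * φ n
      - ∑ n ∈ J X 1, (((lo mu u * lo ArithmeticFunction.vonMangoldt v) * (ArithmeticFunction.zeta : ArithmeticFunction ℝ)) n : ℂ) * φ n
      + ∑ n ∈ J X 1, (((mu - lo mu u) * ((ArithmeticFunction.vonMangoldt - lo ArithmeticFunction.vonMangoldt v) * (ArithmeticFunction.zeta : ArithmeticFunction ℝ))) n : ℂ) * φ n := by
    rw [← Finset.sum_add_distrib, ← Finset.sum_sub_distrib, ← Finset.sum_add_distrib]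
    refine Finset.sum_congr rfl fun n _ => ?_
    have h := congrArg (fun f : ArithmeticFunction ℝ => f n) (vaughan u v)
    simp only [sub_eq_add_neg _ (lo mu u * lo ArithmeticFunction.vonMangoldt v * (ArithmeticFunction.zeta : ArithmeticFunction ℝ)), ArithmeticFunction.add_apply, ArithmeticFunction.neg_apply] at h
    rw [h]; push_cast; ring
  rw [key, hlo, zero_add]
  refine (norm_add_le _ _).trans ?_
  refine (add_le_add (norm_sub_le _ _) le_rfl).trans ?_
  refine (add_le_add (add_le_add hA hB) hC).trans ?_
  set R := Real.sqrt (1 / u + Real.sqrt T / v + 1 / Real.sqrt T)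
  have q1 : 0 ≤ Real.sqrt T := Real.sqrt_nonneg _
  have q2 : 0 ≤ X / Real.sqrt T := by positivity
  have q3 : 0 ≤ X * R := by positivity
  have hll : ℓ ≤ ℓ ^ 2 := by nlinarith
  have i1 : 1 * (u * (2 * ℓ * (C1 * Real.sqrt T)) + 2 * ℓ * (C1 * (X / Real.sqrt T)) * (1 + ℓ)) ≤
      2 * C1 * ℓ^2 * (u * v * Real.sqrt T) + 4 * C1 * ℓ^2 * (X / Real.sqrt T) := by
    have : u * (2 * ℓ * (C1 * Real.sqrt T)) ≤ (u * v) * (2 * ℓ^2 * (C1 * Real.sqrt T)) := by gcongr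
    have : 2 * ℓ * (C1 * (X / Real.sqrt T)) * (1 + ℓ) ≤ 2 * ℓ * (C1 * (X / Real.sqrt T)) * (2 * ℓ) := by gcongr; linarith
    linarith
  have i2 : ℓ * ((u * v) * ((C1 * Real.sqrt T)) + (C1 * (X / Real.sqrt T)) * (1 + ℓ)) ≤
      C1 * ℓ^2 * (u * v * Real.sqrt T) + 2 * C1 * ℓ^2 * (X / Real.sqrt T) := by
    have : ℓ * ((u * v) * (C1 * Real.sqrt T)) ≤ ℓ ^ 2 * ((u * v) * (C1 * Real.sqrt T)) := by gcongr
    have : ℓ * ((C1 * (X / Real.sqrt T)) * (1 + ℓ)) ≤ ℓ * ((C1 * (X / Real.sqrt T)) * (2 * ℓ)) := by gcongr; linarith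
    linarith
  have i3 : C2 * (2 * ℓ + 1) * (X * ℓ) * R ≤ 3 * C2 * ℓ^2 * (X * R) := by
    have : C2 * (2 * ℓ + 1) * (X * ℓ) * R ≤ C2 * (2 * ℓ + ℓ) * (X * ℓ) * R := by gcongr
    linarith
  have r1 : 0 ≤ C1 * ℓ^2 * (u * v * Real.sqrt T) := by positivity
  have r2 : 0 ≤ C2 * ℓ^2 * (u * v * Real.sqrt T) := by positivity
  have r3 : 0 ≤ C2 * ℓ^2 * (X / Real.sqrt T) := by positivity
  have r4 : 0 ≤ C1 * ℓ^2 * (X * R) := by positivity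
  linarith
end St10

namespace St10

open Metric Complex in
lemma BCderiv (g : ℂ → ℂ) (hg : DifferentiableOn ℂ g (ball 0 1)) (hne : ∀ z ∈ ball (0:ℂ) 1, g z ≠ 0)
    (M : ℝ) (hM : 0 < M) (hb : ∀ z ∈ ball (0:ℂ) 1, ‖g z‖ ≤ Real.exp M * ‖g 0‖) (z : ℂ) (hz : ‖z‖ ≤ 1/2) :
    ‖deriv g z / g z‖ ≤ 24 * M := by
  have h00 : (0:ℂ) ∈ ball (0:ℂ) 1 := by simp
  have hd : DifferentiableOn ℂ (deriv g) (ball 0 1) := hg.deriv isOpen_ball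
  have hq : DifferentiableOn ℂ (fun z => deriv g z / g z) (ball 0 1) := hd.div hg hne
  obtain ⟨h, h0, hh⟩ := hq.isExactOn_ball.with_val_at 0 (0:ℂ)
  have hexp : Set.EqOn (fun z => g z * Complex.exp (- h z)) (fun _ => g 0) (ball 0 1) := by
    have hder : ∀ z ∈ ball (0:ℂ) 1, HasDerivAt (fun z => g z * Complex.exp (- h z)) 0 z := by
      intro z hz
      have h1 : HasDerivAt g (deriv g z) z := (hg.differentiableAt (isOpen_ball.mem_nhds hz)).hasDerivAt
      have h2 := h1.mul ((hh z hz).neg.cexp)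
      have e0 : deriv g z * Complex.exp (- h z) + g z * (Complex.exp (- h z) * (-(deriv g z / g z))) = 0 := by
        have := hne z hz
        field_simp; ring
      rw [← e0]; exact h2
    refine isOpen_ball.eqOn_of_deriv_eq (convex_ball (0:ℂ) 1).isPreconnected ?_ ?_ ?_ h00 ?_
    · intro z hz; exact (hder z hz).differentiableAt.differentiableWithinAt
    · exact differentiableOn_const _
    · intro z hz; rw [(hder z hz).deriv]; simp
    · simp [h0]
  have hre : Set.MapsTo h (ball 0 1) {z | z.re ≤ M} := by
    intro z hz
    have h1 := hexp hz
    simp only at h1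
    have h2 : ‖g z‖ * Real.exp (-(h z).re) = ‖g 0‖ := by
      rw [← h1, norm_mul, Complex.norm_exp]; simp
    have h3 := hb z hz
    have h4 : 0 < ‖g z‖ := norm_pos_iff.mpr (hne z hz)
    rw [← h2] at h3
    have h5 : 1 ≤ Real.exp M * Real.exp (-(h z).re) := by
      by_contra hcon
      rw [not_le] at hcon
      nlinarith
    rw [← Real.exp_add, Real.one_le_exp_iff] at h5
    simp; linarith
  have hhd : DifferentiableOn ℂ h (ball 0 1) := fun z hz => (hh z hz).differentiableAt.differentiableWithinAt
  have hbc : ∀ w : ℂ, ‖w‖ ≤ 3/4 → ‖h w‖ ≤ 6 * M := by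
    intro w hw
    have := Complex.borelCaratheodory_zero hM hhd hre one_pos (z := w) (by simp; linarith) h0
    refine this.trans ?_
    rw [div_le_iff₀ (by linarith)]
    nlinarith
  have hzb : z ∈ ball (0:ℂ) 1 := by simp; linarith
  rw [← (hh z hzb).deriv]
  have hcl : closedBall z (1/4) ⊆ ball 0 1 := by
    intro w hw
    rw [mem_closedBall, dist_eq_norm] at hw
    rw [mem_ball, dist_zero_right]
    calc ‖w‖ = ‖(w - z) + z‖ := by ring_nf
      _ ≤ ‖w - z‖ + ‖z‖ := norm_add_le _ _
      _ < 1 := by linarith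
  have := norm_deriv_le_of_forall_mem_sphere_norm_le (c := z) (R := 1/4) (C := 6 * M) (f := h) (by norm_num)
    (hhd.diffContOnCl_ball hcl) (by
      intro w hw
      rw [mem_sphere, dist_eq_norm] at hw
      apply hbc
      calc ‖w‖ = ‖(w - z) + z‖ := by ring_nf
        _ ≤ ‖w - z‖ + ‖z‖ := norm_add_le _ _
        _ ≤ 3/4 := by linarith)
  linarith

/-- `g` bounded by K on the unit circle implies on disc -/
lemma maxmod (g : ℂ → ℂ) (hg : Differentiable ℂ g) (K : ℝ) (hK : ∀ z : ℂ, ‖z‖ = 1 → ‖g z‖ ≤ K) (z : ℂ) (hz : ‖z‖ ≤ 1) :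
    ‖g z‖ ≤ K := by
  apply Complex.norm_le_of_forall_mem_frontier_norm_le (U := Metric.ball (0:ℂ) 1) Metric.isBounded_ball hg.diffContOnCl
  · intro w hw
    rw [frontier_ball _ (by norm_num)] at hw
    exact hK w (by simpa using hw)
  · rw [closure_ball _ (by norm_num)]; simpa using hz

lemma blaschke (g : ℂ → ℂ) (hg : Differentiable ℂ g) (ρ : ℂ) (h0 : g ρ = 0) (hρ0 : ρ ≠ 0) (hρ1 : ‖ρ‖ < 1)
    (hg0 : g 0 ≠ 0) (K : ℝ) (hK : ∀ z : ℂ, ‖z‖ = 1 → ‖g z‖ ≤ K) :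
    ∃ g1 : ℂ → ℂ, Differentiable ℂ g1 ∧ (∀ z : ℂ, ‖z‖ = 1 → ‖g1 z‖ ≤ K) ∧ ‖g1 0‖ = ‖g 0‖ / ‖ρ‖ ∧ g1 0 ≠ 0 ∧
      deriv g 0 / g 0 = deriv g1 0 / g1 0 + (-1 / ρ + (starRingEnd ℂ) ρ) ∧
      (∀ z, ‖z‖ < 1 → g1 z = 0 → g z = 0) := by
  set q := dslope g ρ with hq
  have hqd : Differentiable ℂ q := by
    rw [← differentiableOn_univ]
    exact (Complex.differentiableOn_dslope Filter.univ_mem).mpr hg.differentiableOn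
  have hgq : ∀ z, g z = (z - ρ) * q z := by
    intro z
    have := sub_smul_dslope g ρ z
    rw [h0, sub_zero, smul_eq_mul] at this
    exact this.symm
  have hq0 : q 0 ≠ 0 := by
    intro h; apply hg0; rw [hgq, h, mul_zero]
  set b := (starRingEnd ℂ) ρ with hb
  refine ⟨fun z => (1 - b * z) * q z, by fun_prop, ?_, ?_, ?_, ?_, ?_⟩
  · intro z hz
    refine le_trans (le_of_eq ?_) (hK z hz)
    rw [hgq, norm_mul, norm_mul]
    congr 1
    have : (1 - b * z) = z * (starRingEnd ℂ) (z - ρ) := by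
      rw [map_sub, mul_sub, Complex.mul_conj', hz]; push_cast; rw [hb]; ring
    rw [this, norm_mul, hz, one_mul, RCLike.norm_conj]
  · have : 0 < ‖ρ‖ := norm_pos_iff.mpr hρ0
    rw [hgq 0]; simp
    field_simp
  · simpa using hq0
  · have e1 : g = fun z => (z - ρ) * q z := funext hgq
    have d1 : deriv g 0 = 1 * q 0 + (0 - ρ) * deriv q 0 := by
      rw [e1]
      exact (((hasDerivAt_id (0:ℂ)).sub_const ρ).mul (hqd 0).hasDerivAt).deriv
    have d2 : deriv (fun z => (1 - b * z) * q z) 0 = (-(b * 1)) * q 0 + (1 - b * 0) * deriv q 0 :=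
      ((((hasDerivAt_id (0:ℂ)).const_mul b).const_sub 1).mul (hqd 0).hasDerivAt).deriv
    rw [d1, d2, hgq 0]
    field_simp
    ring
  · intro z hz h
    simp only [mul_eq_zero] at h
    rcases h with h | h
    · exfalso
      have h1 : b * z = 1 := by linear_combination -h
      have h2 : ‖b * z‖ = 1 := by rw [h1]; simp
      rw [norm_mul, hb, RCLike.norm_conj] at h2
      have := norm_nonneg z
      have := norm_nonneg ρ
      nlinarith
    · rw [hgq, h, mul_zero]

/-- real part of the Blaschke contribution -/
lemma blaschke_re (ρ : ℂ) (hρ0 : ρ ≠ 0) : (-1 / ρ + (starRingEnd ℂ) ρ).re = (-ρ.re) * (1 / ‖ρ‖ ^ 2 - 1) := by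
  rw [Complex.add_re, Complex.conj_re, div_eq_mul_inv, neg_one_mul, Complex.neg_re, Complex.inv_re, Complex.normSq_eq_norm_sq]
  ring

lemma landau_base (g : ℂ → ℂ) (K : ℝ) (hg : Differentiable ℂ g) (hg0 : g 0 ≠ 0)
    (hK : ∀ z : ℂ, ‖z‖ = 1 → ‖g z‖ ≤ K) (hcase : ∀ ρ : ℂ, ‖ρ‖ < 1/2 → g ρ ≠ 0) (M : ℝ) (hM : 0 < M)
    (hKM : K ≤ Real.exp M * ‖g 0‖) : -(48 * M) ≤ (deriv g 0 / g 0).re := by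
  have h1 := BCderiv (fun w => g (w / 2)) (by fun_prop) (by
    intro z hz
    apply hcase
    simp at hz ⊢
    linarith) M hM (by
    intro z hz
    simp at hz ⊢
    refine (maxmod g hg K hK _ ?_).trans hKM
    simp; linarith) 0 (by simp)
  have h2 : deriv (fun w => g (w / 2)) 0 = deriv g 0 / 2 := by
    have h3 : HasDerivAt g (deriv g 0) ((0:ℂ) / 2) := by
      rw [zero_div]; exact (hg 0).hasDerivAt
    have := h3.comp (0:ℂ) ((hasDerivAt_id (0:ℂ)).div_const 2)
    rw [show (fun w => g (w / 2)) = g ∘ (fun x : ℂ => id x / 2) from rfl, this.deriv]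
    ring
  rw [h2] at h1
  simp only [zero_div] at h1
  have h3 : ‖deriv g 0 / g 0‖ ≤ 48 * M := by
    have e1 : deriv g 0 / g 0 = 2 * (deriv g 0 / 2 / g 0) := by field_simp
    rw [e1, norm_mul]; simp only [Complex.norm_ofNat]; linarith
  have := Complex.abs_re_le_norm (deriv g 0 / g 0)
  have := neg_abs_le (deriv g 0 / g 0).re
  linarith

lemma landau0 (n : ℕ) : ∀ (g : ℂ → ℂ) (K : ℝ), Differentiable ℂ g → g 0 ≠ 0 →
    (∀ z : ℂ, ‖z‖ = 1 → ‖g z‖ ≤ K) → (∀ z : ℂ, ‖z‖ < 1 → g z = 0 → z.re < 0) → K ≤ 2 ^ n * ‖g 0‖ →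
    ∀ M, 0 < M → K ≤ Real.exp M * ‖g 0‖ → -(48 * M) ≤ (deriv g 0 / g 0).re := by
  induction n with
  | zero =>
    intro g K hg hg0 hK hz hK2 M hM hKM
    by_cases hcase : ∃ ρ, ‖ρ‖ < 1/2 ∧ g ρ = 0
    · obtain ⟨ρ, h1, h2⟩ := hcase
      have hρ0 : ρ ≠ 0 := by rintro rfl; exact hg0 h2
      obtain ⟨g1, a1, a2, a3, a4, a5, a6⟩ := blaschke g hg ρ h2 hρ0 (by linarith) hg0 K hK
      exfalso
      have := maxmod g1 a1 K a2 0 (by simp)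
      rw [a3] at this
      have h3 : 0 < ‖ρ‖ := norm_pos_iff.mpr hρ0
      have h4 : 0 < ‖g 0‖ := norm_pos_iff.mpr hg0
      have h5 : ‖g 0‖ / ‖ρ‖ > ‖g 0‖ := by
        rw [gt_iff_lt, lt_div_iff₀ h3]; nlinarith
      simp at hK2
      linarith
    · push Not at hcase
      exact landau_base g K hg hg0 hK hcase M hM hKM
  | succ n ih =>
    intro g K hg hg0 hK hz hK2 M hM hKM
    by_cases hcase : ∃ ρ, ‖ρ‖ < 1/2 ∧ g ρ = 0
    · obtain ⟨ρ, h1, h2⟩ := hcase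
      have hρ0 : ρ ≠ 0 := by rintro rfl; exact hg0 h2
      obtain ⟨g1, a1, a2, a3, a4, a5, a6⟩ := blaschke g hg ρ h2 hρ0 (by linarith) hg0 K hK
      have h3 : 0 < ‖ρ‖ := norm_pos_iff.mpr hρ0
      have h4 : 0 < ‖g 0‖ := norm_pos_iff.mpr hg0
      have h5 : 2 * ‖g 0‖ ≤ ‖g1 0‖ := by
        rw [a3, le_div_iff₀ h3]; nlinarith
      have := ih g1 K a1 a4 a2 (fun z h h' => hz z h (a6 z h h')) (by
        calc K ≤ 2 ^ (n+1) * ‖g 0‖ := hK2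
          _ = 2 ^ n * (2 * ‖g 0‖) := by ring
          _ ≤ _ := by gcongr) M hM (by
        refine hKM.trans ?_
        have : ‖g 0‖ ≤ ‖g1 0‖ := by linarith
        gcongr)
      rw [a5, Complex.add_re, blaschke_re ρ hρ0]
      have h6 := hz ρ (by linarith) h2
      have h7 : 1 ≤ 1 / ‖ρ‖ ^ 2 := by
        rw [le_div_iff₀ (by positivity)]; nlinarith
      nlinarith
    · push Not at hcase
      exact landau_base g K hg hg0 hK hcase M hM hKM

lemma landau (g : ℂ → ℂ) (K : ℝ) (hg : Differentiable ℂ g) (hg0 : g 0 ≠ 0)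
    (hK : ∀ z : ℂ, ‖z‖ = 1 → ‖g z‖ ≤ K) (hz : ∀ z : ℂ, ‖z‖ < 1 → g z = 0 → z.re < 0)
    (M : ℝ) (hM : 0 < M) (hKM : K ≤ Real.exp M * ‖g 0‖) : -(48 * M) ≤ (deriv g 0 / g 0).re := by
  have h4 : 0 < ‖g 0‖ := norm_pos_iff.mpr hg0
  obtain ⟨n, hn⟩ := pow_unbounded_of_one_lt (K / ‖g 0‖) (show (1:ℝ) < 2 by norm_num)
  refine landau0 n g K hg hg0 hK hz ?_ M hM hKM
  rw [div_lt_iff₀ h4] at hn; exact hn.le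

lemma landau_zero (g : ℂ → ℂ) (K : ℝ) (hg : Differentiable ℂ g) (hg0 : g 0 ≠ 0)
    (hK : ∀ z : ℂ, ‖z‖ = 1 → ‖g z‖ ≤ K) (hz : ∀ z : ℂ, ‖z‖ < 1 → g z = 0 → z.re < 0)
    (M : ℝ) (hM : 0 < M) (hKM : K ≤ Real.exp M * ‖g 0‖) (d : ℝ) (hd0 : 0 < d) (hd1 : d < 1) (hd : g (-d : ℂ) = 0) :
    1 / d - d - 48 * M ≤ (deriv g 0 / g 0).re := by
  have hn : ‖(-d : ℂ)‖ = d := by rw [norm_neg, Complex.norm_real, Real.norm_of_nonneg hd0.le]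
  have hρ0 : (-d : ℂ) ≠ 0 := by rw [← norm_pos_iff, hn]; exact hd0
  obtain ⟨g1, a1, a2, a3, a4, a5, a6⟩ := blaschke g hg (-d) hd hρ0 (by linarith) hg0 K hK
  have h4 : 0 < ‖g 0‖ := norm_pos_iff.mpr hg0
  have h5 : ‖g 0‖ ≤ ‖g1 0‖ := by
    rw [a3, hn, le_div_iff₀ hd0]; nlinarith
  have := landau g1 K a1 a4 a2 (fun z h h' => hz z h (a6 z h h')) M hM (by
    refine hKM.trans ?_
    gcongr)
  rw [a5, Complex.add_re, blaschke_re _ hρ0, hn]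
  have e1 : -(-d : ℂ).re * (1 / d ^ 2 - 1) = 1 / d - d := by
    simp; field_simp
  rw [e1]
  linarith

end St10

namespace St10

lemma cpow_neg_diff (s : ℂ) (hs : 0 < s.re) (a x : ℝ) (ha : 0 < a) (hax : a ≤ x) (hx : x ≤ a + 1) :
    ‖(x:ℂ) ^ (-s) - (a:ℂ) ^ (-s)‖ ≤ ‖s‖ * a ^ (-s.re - 1) := by
  have hs0 : -s ≠ 0 := by
    intro h
    have : s = 0 := by simpa using h
    rw [this] at hs; simp at hs
  have h := norm_image_sub_le_of_norm_deriv_le_segment' (f := fun y : ℝ => (y:ℂ) ^ (-s))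
    (f' := fun y : ℝ => -s * (y:ℂ) ^ (-s - 1)) (a := a) (b := a + 1) (C := ‖s‖ * a ^ (-s.re - 1))
    (fun y hy => (hasDerivAt_ofReal_cpow_const (by linarith [hy.1]) hs0).hasDerivWithinAt)
    (by
      intro y hy
      have hy0 : 0 < y := by linarith [hy.1]
      rw [norm_mul, norm_neg, Complex.norm_cpow_eq_rpow_re_of_pos hy0]
      gcongr
      simp only [Complex.sub_re, Complex.neg_re, Complex.one_re]
      exact Real.rpow_le_rpow_of_nonpos ha hy.1 (by linarith)) x ⟨hax, hx⟩
  refine h.trans ?_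
  have : 0 ≤ ‖s‖ * a ^ (-s.re - 1) := by positivity
  nlinarith

/-- summands of the continuation of `(s-1) ζ(s)` -/
noncomputable def gt (n : ℕ) (s : ℂ) : ℂ :=
  (s - 1) * ((n + 1 : ℝ) : ℂ) ^ (-s) + ((n + 1 + 1 : ℝ) : ℂ) ^ (1 - s) - ((n + 1 : ℝ) : ℂ) ^ (1 - s)

lemma gt_bound (n : ℕ) (s : ℂ) (hs : 0 < s.re) : ‖gt n s‖ ≤ ‖s - 1‖ * ‖s‖ * ((n:ℝ) + 1) ^ (-s.re - 1) := by
  set a : ℝ := n + 1 with ha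
  have ha0 : 0 < a := by positivity
  by_cases h1 : s = 1
  · subst h1
    simp [gt]
  have h1' : 1 - s ≠ 0 := sub_ne_zero.mpr (Ne.symm h1)
  have h := norm_image_sub_le_of_norm_deriv_le_segment'
    (f := fun y : ℝ => (s - 1) * (a:ℂ) ^ (-s) * (y:ℂ) + (y:ℂ) ^ (1 - s))
    (f' := fun y : ℝ => (s - 1) * (a:ℂ) ^ (-s) * 1 + (1 - s) * (y:ℂ) ^ (1 - s - 1)) (a := a) (b := a + 1)
    (C := ‖s - 1‖ * ‖s‖ * a ^ (-s.re - 1))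
    (fun y hy => by
      have d1 := (hasDerivAt_ofReal_cpow_const (x := y) (by linarith [hy.1]) h1')
      have d2 : HasDerivAt (fun y : ℝ => (y:ℂ)) 1 y := Complex.ofRealCLM.hasDerivAt
      exact ((d2.const_mul _).add d1).hasDerivWithinAt)
    (by
      intro y hy
      have e1 : (s - 1) * (a:ℂ) ^ (-s) * 1 + (1 - s) * (y:ℂ) ^ (1 - s - 1) = -(s - 1) * ((y:ℂ) ^ (-s) - (a:ℂ) ^ (-s)) := by
        rw [show 1 - s - 1 = -s by ring]; ring
      rw [e1, norm_mul, norm_neg, mul_assoc]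
      gcongr
      exact cpow_neg_diff s hs a y ha0 hy.1 hy.2.le) (a + 1) ⟨by linarith, le_rfl⟩
  simp only [add_sub_cancel_left, mul_one] at h
  refine le_trans (le_of_eq ?_) h
  rw [gt, ← ha]
  congr 1
  push_cast
  ring

lemma gt_diff (n : ℕ) : Differentiable ℂ (gt n) := by
  unfold gt
  have h1 : ((n + 1 : ℝ) : ℂ) ≠ 0 := by
    rw [Complex.ofReal_ne_zero]; positivity
  have h2 : ((n + 1 + 1 : ℝ) : ℂ) ≠ 0 := by
    rw [Complex.ofReal_ne_zero]; positivity
  intro s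
  have a1 : DifferentiableAt ℂ (fun s : ℂ => ((n + 1 : ℝ) : ℂ) ^ (-s)) s :=
    DifferentiableAt.const_cpow (by fun_prop) (Or.inl h1)
  have a2 : DifferentiableAt ℂ (fun s : ℂ => ((n + 1 : ℝ) : ℂ) ^ (1-s)) s :=
    DifferentiableAt.const_cpow (by fun_prop) (Or.inl h1)
  have a3 : DifferentiableAt ℂ (fun s : ℂ => ((n + 1 + 1 : ℝ) : ℂ) ^ (1-s)) s :=
    DifferentiableAt.const_cpow (by fun_prop) (Or.inl h2)
  fun_prop

lemma summ54 : Summable (fun n : ℕ => ((n:ℝ) + 1) ^ (-(5/4) : ℝ)) := by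
  have := (summable_nat_add_iff 1).mpr (Real.summable_nat_rpow.mpr (show (-(5/4) : ℝ) < -1 by norm_num))
  simpa using this

lemma gt_bound' (R : ℝ) (n : ℕ) (s : ℂ) (hs : 1/4 < s.re) (hR : ‖s‖ ≤ R) :
    ‖gt n s‖ ≤ (R + 1) ^ 2 * ((n:ℝ) + 1) ^ (-(5/4) : ℝ) := by
  refine (gt_bound n s (by linarith)).trans ?_
  have h1 : ‖s - 1‖ ≤ R + 1 := (norm_sub_le _ _).trans (by simpa using hR)
  have h2 : ((n:ℝ) + 1) ^ (-s.re - 1) ≤ ((n:ℝ) + 1) ^ (-(5/4) : ℝ) :=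
    Real.rpow_le_rpow_of_exponent_le (by linarith [Nat.cast_nonneg (α := ℝ) n]) (by linarith)
  have := norm_nonneg s
  have : ‖s - 1‖ * ‖s‖ ≤ (R + 1) ^ 2 := by
    rw [sq]; exact mul_le_mul h1 (by linarith) (norm_nonneg _) (by linarith)
  gcongr

lemma gt_tsum_one_lt (s : ℂ) (hs : 1 < s.re) : 1 + ∑' n, gt n s = riemannZeta₁ s := by
  have hs1 : s ≠ 1 := by rintro rfl; simp at hs
  have hsum : Summable (fun n => gt n s) :=
    Summable.of_norm_bounded (summ54.mul_left ((‖s‖ + 1)^2)) (fun n => gt_bound' ‖s‖ n s (by linarith) le_rfl)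
  have hz := zeta_eq_tsum_one_div_nat_add_one_cpow hs
  have hzs : Summable (fun n : ℕ => 1 / ((n:ℂ) + 1) ^ s) := by
    have := (summable_nat_add_iff 1).mpr (Complex.summable_one_div_nat_cpow.mpr hs)
    simpa using this
  have t1 := hsum.hasSum.tendsto_sum_nat
  have t2 := (hzs.hasSum.tendsto_sum_nat.const_mul (s - 1)).add_const (-1)
  rw [← hz] at t2
  have t3 : Filter.Tendsto (fun N : ℕ => ((N + 1 : ℝ) : ℂ) ^ (1 - s)) Filter.atTop (nhds 0) := by
    rw [tendsto_zero_iff_norm_tendsto_zero]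
    have : ∀ N : ℕ, ‖((N + 1 : ℝ) : ℂ) ^ (1 - s)‖ = ((N:ℝ) + 1) ^ (-(s.re - 1)) := by
      intro N
      rw [Complex.norm_cpow_eq_rpow_re_of_pos (by positivity)]; simp
    simp_rw [this]
    exact (tendsto_rpow_neg_atTop (by linarith : 0 < s.re - 1)).comp
      (Filter.tendsto_atTop_add_const_right _ _ tendsto_natCast_atTop_atTop)
  have key : ∀ N : ℕ, ∑ n ∈ Finset.range N, gt n s =
      (s - 1) * ∑ n ∈ Finset.range N, 1 / ((n:ℂ) + 1) ^ s + -1 + ((N + 1 : ℝ) : ℂ) ^ (1 - s) := by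
    intro N
    induction N with
    | zero => simp
    | succ N ih =>
      rw [Finset.sum_range_succ, Finset.sum_range_succ, ih, gt, Complex.cpow_neg]
      push_cast; ring
  simp_rw [key] at t1
  have := tendsto_nhds_unique t1 (t2.add t3)
  rw [this, riemannZeta_eq_inv_sub_mul hs1]
  have : s - 1 ≠ 0 := sub_ne_zero.mpr hs1
  field_simp; ring

lemma gt_tsum (s : ℂ) (hs : 1/4 < s.re) : 1 + ∑' n, gt n s = riemannZeta₁ s := by
  set R := ‖s‖ + 4 with hR
  set U : Set ℂ := {z | 1/4 < z.re} ∩ Metric.ball 0 R with hU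
  have hUo : IsOpen U := (isOpen_lt continuous_const Complex.continuous_re).inter Metric.isOpen_ball
  have hUc : Convex ℝ U := (convex_halfSpace_re_gt _).inter (convex_ball _ _)
  have hd : DifferentiableOn ℂ (fun s => ∑' n, gt n s) U :=
    Complex.differentiableOn_tsum_of_summable_norm (summ54.mul_left ((R + 1)^2))
      (fun n => (gt_diff n).differentiableOn) hUo
      (fun n z hz => gt_bound' R n z hz.1 (by have := hz.2; simp at this; linarith))
  have h2 : (3:ℂ) ∈ U := by
    refine ⟨by simp; norm_num, ?_⟩
    simp only [Metric.mem_ball, dist_zero_right, Complex.norm_ofNat, hR]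
    linarith [norm_nonneg s]
  have := AnalyticOnNhd.eqOn_of_preconnected_of_eventuallyEq
    ((hd.const_add 1).analyticOnNhd hUo) (differentiable_riemannZeta₁.differentiableOn.analyticOnNhd hUo)
    hUc.isPreconnected h2 (by
      filter_upwards [(isOpen_lt continuous_const Complex.continuous_re).mem_nhds (show (3:ℂ) ∈ {z : ℂ | 1 < z.re} by simp)]
        with z hz using gt_tsum_one_lt z hz)
  exact this ⟨hs, by simp [hR]⟩

lemma Z_growth : ∃ C ≥ 1, ∀ s : ℂ, 1/4 < s.re → ‖riemannZeta₁ s‖ ≤ C * (‖s‖ + 1) ^ 2 := by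
  set A := ∑' n : ℕ, ((n:ℝ) + 1) ^ (-(5/4) : ℝ) with hA
  have hA0 : 0 ≤ A := tsum_nonneg fun n => by positivity
  refine ⟨1 + A, by linarith, fun s hs => ?_⟩
  rw [← gt_tsum s hs]
  refine (norm_add_le _ _).trans ?_
  have h1 : ‖∑' n, gt n s‖ ≤ (‖s‖ + 1)^2 * A := by
    rw [hA, ← tsum_mul_left]
    exact tsum_of_norm_bounded (summ54.mul_left _).hasSum (fun n => gt_bound' ‖s‖ n s hs le_rfl)
  have := norm_nonneg s
  have h2 : (1:ℝ) ≤ (‖s‖ + 1)^2 := by nlinarith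
  rw [norm_one]
  nlinarith
end St10

namespace St10

lemma moeb_inv (s : ℂ) (hs : 1 < s.re) : 1 ≤ ‖riemannZeta s‖ * ‖riemannZeta (s.re : ℂ)‖ := by
  have h1 := ArithmeticFunction.LSeries_zeta_mul_Lseries_moebius hs
  rw [ArithmeticFunction.LSeries_zeta_eq_riemannZeta hs] at h1
  have hsr : Summable (fun n : ℕ => 1 / (n:ℝ) ^ s.re) := Real.summable_one_div_nat_rpow.mpr hs
  have h2 : riemannZeta (s.re : ℂ) = ((∑' n : ℕ, 1 / (n:ℝ) ^ s.re : ℝ) : ℂ) := by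
    rw [zeta_eq_tsum_one_div_nat_cpow (by simpa using hs)]
    rw [Complex.ofReal_tsum]
    congr 1; ext n
    push_cast
    rw [Complex.ofReal_cpow (by positivity)]
    simp
  have h3 : ‖LSeries (fun n => ((ArithmeticFunction.moebius n : ℤ) : ℂ)) s‖ ≤ ∑' n : ℕ, 1 / (n:ℝ) ^ s.re := by
    refine tsum_of_norm_bounded hsr.hasSum (fun n => ?_)
    rw [LSeries.norm_term_eq]
    split_ifs with hn
    · positivity
    · gcongr
      have := ArithmeticFunction.abs_moebius_le_one (n := n)
      rw [Complex.norm_intCast]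
      exact_mod_cast this
  have h4 : ∑' n : ℕ, 1 / (n:ℝ) ^ s.re = ‖riemannZeta (s.re : ℂ)‖ := by
    rw [h2, Complex.norm_real, Real.norm_of_nonneg]
    exact tsum_nonneg fun n => by positivity
  have h5 := congrArg norm h1
  rw [norm_mul, norm_one] at h5
  rw [← h5, ← h4]
  gcongr

lemma Z_ne_zero_one_le (s : ℂ) (hs : 1 ≤ s.re) : riemannZeta₁ s ≠ 0 := by
  by_cases h : s = 1
  · rw [h, riemannZeta₁_one]; exact one_ne_zero
  · have := riemannZeta_ne_zero_of_one_le_re hs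
    rw [riemannZeta_eq_inv_sub_mul h] at this
    exact right_ne_zero_of_mul this

/-- lower bound for `Z` on the right of the line `Re = 1` -/
lemma Z_lower : ∃ C ≥ 1, ∀ s : ℂ, 1 < s.re → s.re ≤ 2 → (s.re - 1) ^ 2 / C ≤ ‖riemannZeta₁ s‖ := by
  obtain ⟨C, hC, hZ⟩ := Z_growth
  refine ⟨9 * C, by linarith, fun s h1 h2 => ?_⟩
  have hm := moeb_inv s h1
  have hs1 : s ≠ 1 := by rintro rfl; simp at h1
  have hs1' : (s.re : ℂ) ≠ 1 := by
    intro h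
    have := congrArg Complex.re h
    simp at this; linarith
  rw [riemannZeta_eq_inv_sub_mul hs1, riemannZeta_eq_inv_sub_mul hs1', norm_mul, norm_mul, norm_inv, norm_inv] at hm
  have hb := hZ (s.re : ℂ) (by simp; linarith)
  have e1 : ‖(s.re : ℂ)‖ = s.re := by rw [Complex.norm_real, Real.norm_of_nonneg (by linarith)]
  have e2 : ‖(s.re : ℂ) - 1‖ = s.re - 1 := by
    rw [← Complex.ofReal_one, ← Complex.ofReal_sub, Complex.norm_real, Real.norm_of_nonneg (by linarith)]
  rw [e1] at hb
  rw [e2] at hm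
  have e3 : s.re - 1 ≤ ‖s - 1‖ := by
    have := Complex.re_le_norm (s - 1)
    simpa using this
  have hd : 0 < s.re - 1 := by linarith
  have hb' : ‖riemannZeta₁ (s.re : ℂ)‖ ≤ 9 * C := by
    refine hb.trans ?_
    have : (s.re + 1) ^ 2 ≤ 9 := by nlinarith
    nlinarith
  have : 1 ≤ (s.re - 1)⁻¹ * ‖riemannZeta₁ s‖ * ((s.re - 1)⁻¹ * (9 * C)) := by
    refine hm.trans ?_
    gcongr
  rw [div_le_iff₀ (by linarith)]
  have h9 := mul_le_mul_of_nonneg_left this (sq_nonneg (s.re - 1))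
  have e4 : (s.re - 1) ^ 2 * ((s.re - 1)⁻¹ * ‖riemannZeta₁ s‖ * ((s.re - 1)⁻¹ * (9 * C))) = ‖riemannZeta₁ s‖ * (9 * C) := by
    field_simp
  rw [e4] at h9; linarith

/-- the von Mangoldt L-series -/
noncomputable def LL (s : ℂ) : ℂ := LSeries (fun n => (ArithmeticFunction.vonMangoldt n : ℂ)) s

lemma LL_eq (s : ℂ) (hs : 1 < s.re) : LL s = 1 / (s - 1) - deriv riemannZeta₁ s / riemannZeta₁ s := by
  have hs1 : s ≠ 1 := by rintro rfl; simp at hs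
  have h0 : s - 1 ≠ 0 := sub_ne_zero.mpr hs1
  have hZ := Z_ne_zero_one_le s hs.le
  rw [LL, ArithmeticFunction.LSeries_vonMangoldt_eq_deriv_riemannZeta_div hs]
  have hd : deriv riemannZeta s = -1/(s-1)^2 * riemannZeta₁ s + (s-1)⁻¹ * deriv riemannZeta₁ s := by
    have hev : riemannZeta =ᶠ[nhds s] fun z => (z - 1)⁻¹ * riemannZeta₁ z := by
      filter_upwards [isOpen_ne.mem_nhds hs1] with z hz using riemannZeta_eq_inv_sub_mul hz
    rw [hev.deriv_eq]
    have d1 : HasDerivAt (fun z : ℂ => (z - 1)⁻¹) (-1 / (s-1)^2) s := ((hasDerivAt_id s).sub_const 1).inv h0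
    exact (d1.mul (differentiable_riemannZeta₁ s).hasDerivAt).deriv
  rw [hd, riemannZeta_eq_inv_sub_mul hs1]
  field_simp
  ring

lemma LL_341 (d t : ℝ) (hd : 0 < d) :
    0 ≤ 3 * (LL (1 + d)).re + 4 * (LL (1 + d + t * Complex.I)).re + (LL (1 + d + 2 * t * Complex.I)).re := by
  have hs0 : 1 < (1 + d : ℂ).re := by simp [hd]
  have hs1 : 1 < (1 + d + t * Complex.I : ℂ).re := by simp [hd]
  have hs2 : 1 < (1 + d + 2 * t * Complex.I : ℂ).re := by simp [hd]
  have H0 := Complex.hasSum_re (ArithmeticFunction.LSeriesSummable_vonMangoldt hs0).LSeriesHasSum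
  have H1 := Complex.hasSum_re (ArithmeticFunction.LSeriesSummable_vonMangoldt hs1).LSeriesHasSum
  have H2 := Complex.hasSum_re (ArithmeticFunction.LSeriesSummable_vonMangoldt hs2).LSeriesHasSum
  have H := ((H0.mul_left 3).add (H1.mul_left 4)).add H2
  refine H.nonneg (fun n => ?_)
  by_cases hn : n = 0
  · subst hn; simp
  have hn' : (n:ℂ) ≠ 0 := by exact_mod_cast hn
  have hn0 : (0:ℝ) < n := by positivity
  simp only [LSeries.term_of_ne_zero hn]
  set w : ℂ := (n:ℂ) ^ (-(t * Complex.I)) with hw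
  have hwn : ‖w‖ = 1 := by
    rw [hw, Complex.norm_natCast_cpow_of_pos (by omega)]; simp
  have hw2 : w.re ^ 2 + w.im ^ 2 = 1 := by
    have := Complex.sq_norm w
    rw [hwn, Complex.normSq_apply] at this
    nlinarith
  set q : ℝ := ArithmeticFunction.vonMangoldt n * (n:ℝ) ^ (-(1 + d)) with hq
  have hq0 : 0 ≤ q := mul_nonneg ArithmeticFunction.vonMangoldt_nonneg (by positivity)
  have hqc : (q:ℂ) = (ArithmeticFunction.vonMangoldt n : ℂ) * (n:ℂ) ^ (-(1 + d) : ℂ) := by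
    rw [hq]; push_cast
    rw [Complex.ofReal_cpow hn0.le]; push_cast; rfl
  have t0 : (ArithmeticFunction.vonMangoldt n : ℂ) / (n:ℂ) ^ (1 + d : ℂ) = q := by
    rw [hqc, Complex.cpow_neg]; rfl
  have t1 : (ArithmeticFunction.vonMangoldt n : ℂ) / (n:ℂ) ^ (1 + d + t * Complex.I : ℂ) = q * w := by
    rw [hqc, hw, mul_assoc, ← Complex.cpow_add _ _ hn', div_eq_mul_inv, ← Complex.cpow_neg]
    congr 2; ring
  have t2 : (ArithmeticFunction.vonMangoldt n : ℂ) / (n:ℂ) ^ (1 + d + 2 * t * Complex.I : ℂ) = q * (w * w) := by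
    rw [hqc, hw, ← Complex.cpow_add _ _ hn', mul_assoc (ArithmeticFunction.vonMangoldt n : ℂ), ← Complex.cpow_add _ _ hn', div_eq_mul_inv, ← Complex.cpow_neg]
    congr 2; ring
  rw [t0, t1, t2, Complex.re_ofReal_mul, Complex.re_ofReal_mul, Complex.ofReal_re, Complex.mul_re]
  have : 3 * q + 4 * (q * w.re) + q * (w.re * w.re - w.im * w.im) = q * (2 * (1 + w.re) ^ 2) := by
    have : w.im * w.im = 1 - w.re ^ 2 := by linarith
    rw [this]; ring
  rw [this]; positivity
end St10

namespace St10

lemma one_le_log4 (y : ℝ) (hy : 4 ≤ y) : 1 ≤ Real.log y := by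
  rw [Real.le_log_iff_exp_le (by linarith)]
  have := Real.exp_one_lt_d9
  linarith

lemma Zprep : ∃ B ≥ 1, ∀ s w : ℂ, 1 + 1 / (|s.im| + 4) ≤ s.re → s.re ≤ 3/2 → ‖w‖ ≤ 1/2 →
    ‖riemannZeta₁ (s + w)‖ ≤ Real.exp (B * Real.log (|s.im| + 4)) * ‖riemannZeta₁ s‖ := by
  obtain ⟨C1, hC1, h1⟩ := Z_growth
  obtain ⟨C2, hC2, h2⟩ := Z_lower
  have hC : 1 ≤ C1 * C2 := one_le_mul_of_one_le_of_one_le hC1 hC2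
  have hl : 0 ≤ Real.log (C1 * C2) := Real.log_nonneg hC
  refine ⟨4 + Real.log (C1 * C2), by linarith, fun s w hs1 hs2 hw => ?_⟩
  set y := |s.im| + 4 with hy
  have hy4 : 4 ≤ y := by rw [hy]; linarith [abs_nonneg s.im]
  have hL := one_le_log4 y hy4
  have hy0 : 0 < y := by linarith
  have hr : 1 < s.re := by
    have : 0 < 1 / y := by positivity
    linarith
  have hre : 1/4 < (s + w).re := by
    have := Complex.abs_re_le_norm w
    have := abs_le.mp (this.trans hw)
    simp; linarith [this.1]
  have hn : ‖s + w‖ + 1 ≤ y := by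
    have a1 := norm_add_le s w
    have a2 := Complex.norm_le_abs_re_add_abs_im s
    rw [abs_of_pos (by linarith : 0 < s.re)] at a2
    linarith
  have hlow := h2 s hr (by linarith)
  have hlow' : (1 / y)^2 / C2 ≤ ‖riemannZeta₁ s‖ := by
    refine le_trans ?_ hlow
    gcongr; linarith
  have hup : ‖riemannZeta₁ (s + w)‖ ≤ C1 * y ^ 2 := by
    refine (h1 _ hre).trans ?_
    gcongr
  have hexp : C1 * C2 * y ^ 4 ≤ Real.exp ((4 + Real.log (C1 * C2)) * Real.log y) := by
    have e1 : C1 * C2 * y ^ 4 = Real.exp (Real.log (C1 * C2) + 4 * Real.log y) := by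
      rw [Real.exp_add, Real.exp_log (by linarith), mul_comm 4, Real.exp_mul, Real.exp_log hy0]
      norm_cast
    rw [e1]
    apply Real.exp_le_exp.mpr
    nlinarith
  refine hup.trans ?_
  calc C1 * y ^ 2 = (C1 * C2 * y ^ 4) * ((1 / y)^2 / C2) := by field_simp
    _ ≤ _ := by gcongr

lemma zero_re (s : ℂ) (h : riemannZeta₁ s = 0) : s.re < 1 := by
  by_contra hs
  exact Z_ne_zero_one_le s (not_lt.mp hs) h

lemma Zre (B : ℝ) (hB : 1 ≤ B) (hZ : ∀ s w : ℂ, 1 + 1 / (|s.im| + 4) ≤ s.re → s.re ≤ 3/2 → ‖w‖ ≤ 1/2 →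
    ‖riemannZeta₁ (s + w)‖ ≤ Real.exp (B * Real.log (|s.im| + 4)) * ‖riemannZeta₁ s‖)
    (s : ℂ) (hs1 : 1 + 1 / (|s.im| + 4) ≤ s.re) (hs2 : s.re ≤ 3/2) :
    -(96 * (B * Real.log (|s.im| + 4))) ≤ (deriv riemannZeta₁ s / riemannZeta₁ s).re ∧
    ∀ d : ℝ, 0 < d → d < 1/2 → riemannZeta₁ (s - d) = 0 →
      1 / d - 2 - 96 * (B * Real.log (|s.im| + 4)) ≤ (deriv riemannZeta₁ s / riemannZeta₁ s).re := by
  have hL := one_le_log4 (|s.im| + 4) (by linarith [abs_nonneg s.im])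
  have hM : 0 < B * Real.log (|s.im| + 4) := by positivity
  have hr : 1 < s.re := by
    have : 0 < 1 / (|s.im| + 4) := by positivity
    linarith
  set g : ℂ → ℂ := fun z => riemannZeta₁ (s + z / 2) with hgdef
  have hg : Differentiable ℂ g := by
    intro z
    exact DifferentiableAt.fun_comp' z (differentiable_riemannZeta₁ _) (by fun_prop)
  have hg0 : g 0 = riemannZeta₁ s := by simp [hgdef]
  have hg0' : g 0 ≠ 0 := by rw [hg0]; exact Z_ne_zero_one_le s hr.le
  have hder : deriv g 0 = deriv riemannZeta₁ s / 2 := by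
    have a1 : HasDerivAt (fun z : ℂ => s + z / 2) (1 / 2) 0 := ((hasDerivAt_id (0:ℂ)).div_const 2).const_add s
    have a2 : HasDerivAt riemannZeta₁ (deriv riemannZeta₁ s) (s + 0 / 2) := by
      simpa using (differentiable_riemannZeta₁ s).hasDerivAt
    have := (a2.comp (0:ℂ) a1).deriv
    change deriv (riemannZeta₁ ∘ fun z : ℂ => s + z / 2) 0 = _
    rw [this]; ring
  have hK : ∀ z : ℂ, ‖z‖ = 1 → ‖g z‖ ≤ Real.exp (B * Real.log (|s.im| + 4)) * ‖g 0‖ := by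
    intro z hz
    rw [hg0]
    exact hZ s (z/2) hs1 hs2 (by rw [norm_div, hz]; simp)
  have hz : ∀ z : ℂ, ‖z‖ < 1 → g z = 0 → z.re < 0 := by
    intro z _ h
    have := zero_re _ h
    simp at this
    linarith
  have hre : (deriv g 0 / g 0).re = (deriv riemannZeta₁ s / riemannZeta₁ s).re / 2 := by
    rw [hder, hg0, div_right_comm]
    rw [show (2:ℂ) = ((2:ℝ):ℂ) by norm_num, Complex.div_ofReal_re]
  constructor
  · have := landau g _ hg hg0' hK hz _ hM le_rfl
    rw [hre] at this; linarith
  · intro d hd hd2 h0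
    have := landau_zero g _ hg hg0' hK hz _ hM le_rfl (2*d) (by linarith) (by linarith) (by
      simp only [hgdef]
      rw [← h0]; congr 1; push_cast; ring)
    rw [hre] at this
    have e1 : 1 / (2 * d) = (1 / d) / 2 := by field_simp
    rw [e1] at this
    linarith

lemma Zderiv_cont : Continuous (deriv riemannZeta₁) :=
  (differentiable_riemannZeta₁.contDiff (n := 1)).continuous_deriv le_rfl

lemma Zreal_bound : ∃ C ≥ 0, ∀ d : ℝ, 0 ≤ d → d ≤ 1 →
    ‖deriv riemannZeta₁ (1 + d) / riemannZeta₁ (1 + d)‖ ≤ C := by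
  have hc : ContinuousOn (fun d : ℝ => deriv riemannZeta₁ (1 + d) / riemannZeta₁ (1 + d)) (Set.Icc 0 1) := by
    refine ContinuousOn.div ?_ ?_ ?_
    · exact (Zderiv_cont.comp (by fun_prop)).continuousOn
    · exact (differentiable_riemannZeta₁.continuous.comp (by fun_prop)).continuousOn
    · intro d hd
      exact Z_ne_zero_one_le _ (by simpa using hd.1)
  obtain ⟨C, hC⟩ := isCompact_Icc.exists_bound_of_continuousOn hc
  exact ⟨max C 0, le_max_right _ _, fun d h0 h1 => (hC d ⟨h0, h1⟩).trans (le_max_left _ _)⟩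

lemma re_inv_le (d t : ℝ) (ht : 1 ≤ |t|) : (1 / ((d:ℂ) + t * Complex.I)).re ≤ 1 := by
  refine (Complex.re_le_norm _).trans ?_
  have := Complex.abs_im_le_norm ((d:ℂ) + t * Complex.I)
  simp only [Complex.add_im, Complex.ofReal_im, Complex.mul_im, Complex.ofReal_re, Complex.I_im, Complex.I_re, mul_one, mul_zero, zero_add, add_zero] at this
  rw [norm_div, norm_one, div_le_one (by linarith)]
  linarith

set_option maxHeartbeats 800000 in
lemma zfr_large : ∃ κ > 0, ∃ T0 : ℝ, ∀ s : ℂ, T0 ≤ |s.im| → 1 - κ / Real.log (|s.im| + 4) ≤ s.re → riemannZeta₁ s ≠ 0 := by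
  obtain ⟨B, hB, hZ⟩ := Zprep
  obtain ⟨C1, hC1, hC1'⟩ := Zreal_bound
  set Q := 3 * C1 + 13 + 576 * B with hQ
  have hQ0 : 589 ≤ Q := by linarith
  set k := 1 / (2 * Q) with hk
  have hk0 : 0 < k := by positivity
  have hk1 : k ≤ 1/8 := by
    rw [hk]; exact one_div_le_one_div_of_le (by norm_num) (by linarith)
  refine ⟨k / 8, by positivity, 4 / k^2, fun s hT hs h0 => ?_⟩
  set t := s.im with ht
  have hT1 : 1 ≤ |t| := by
    refine le_trans ?_ hT
    rw [le_div_iff₀ (by positivity)]; nlinarith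
  set y := |t| + 4 with hy
  have hy4 : 4 ≤ y := by linarith
  have hL := one_le_log4 y hy4
  set L := Real.log y with hLdef
  set δ := k / L with hδ
  have hδ0 : 0 < δ := by positivity
  have hδk : δ ≤ k := div_le_self hk0.le hL
  have hδy : 1 / y ≤ δ := by
    rw [hδ, div_le_div_iff₀ (by linarith) (by linarith), one_mul]
    have hsq : 0 < √y := Real.sqrt_pos.mpr (by linarith)
    have l1 : L = 2 * Real.log (√y) := by rw [Real.log_sqrt (by linarith)]; ring
    have l2 := Real.log_le_sub_one_of_pos hsq
    have l3 : 2 / k ≤ √y := by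
      apply Real.le_sqrt_of_sq_le
      rw [div_pow]; norm_num; linarith
    have l4 : √y * √y = y := Real.mul_self_sqrt (by linarith)
    have l5 : 2 ≤ √y * k := by rwa [div_le_iff₀ hk0] at l3
    calc L ≤ 2 * √y := by linarith
      _ ≤ (√y * k) * √y := by gcongr
      _ = k * (√y * √y) := by ring
      _ = k * y := by rw [l4]
  have hβ := zero_re s h0
  have hw : 1 - s.re ≤ δ / 8 := by
    have : k / 8 / L = δ / 8 := by rw [hδ]; ring
    linarith
  set d := δ + (1 - s.re) with hd
  have hd0 : 0 < d := by linarith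
  have hd1 : d < 1/2 := by linarith
  set s0 : ℂ := 1 + δ + t * Complex.I with hs0
  set s2 : ℂ := 1 + δ + 2 * t * Complex.I with hs2
  have i0 : s0.im = t := by simp [hs0]
  have r0 : s0.re = 1 + δ := by simp [hs0]
  have i2 : s2.im = 2 * t := by simp [hs2]
  have r2 : s2.re = 1 + δ := by simp [hs2]
  have h341 := LL_341 δ t hδ0
  rw [← hs0, ← hs2, LL_eq _ (by simp [hδ0]), LL_eq s0 (by rw [r0]; linarith), LL_eq s2 (by rw [r2]; linarith)] at h341
  simp only [Complex.sub_re] at h341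
  have b0 := (Zre B hB hZ s0 (by rw [i0, r0, ← hy]; linarith) (by rw [r0]; linarith)).2 d hd0 hd1 (by
    rw [← h0]; congr 1
    apply Complex.ext
    · simp only [hs0, hd, Complex.sub_re, Complex.add_re, Complex.one_re, Complex.ofReal_re, Complex.mul_re, Complex.I_re, Complex.ofReal_im, Complex.I_im]
      ring
    · simp [hs0, ht])
  rw [i0, ← hy, ← hLdef] at b0
  have hy2 : y ≤ |2 * t| + 4 := by
    rw [abs_mul, abs_two, hy]; linarith
  have b2 := (Zre B hB hZ s2 (by
    rw [i2, r2]
    have : 1 / (|2 * t| + 4) ≤ 1 / y := one_div_le_one_div_of_le (by linarith) hy2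
    linarith) (by rw [r2]; linarith)).1
  rw [i2] at b2
  have hL2 : Real.log (|2 * t| + 4) ≤ 2 * L := by
    rw [hLdef, ← Real.log_rpow (by linarith)]
    apply Real.log_le_log (by linarith)
    rw [abs_mul, abs_two]
    norm_cast
    rw [hy]; nlinarith
  have b2' : -(192 * (B * L)) ≤ (deriv riemannZeta₁ s2 / riemannZeta₁ s2).re := by
    refine le_trans ?_ b2
    have : B * Real.log (|2 * t| + 4) ≤ B * (2 * L) := by gcongr
    linarith
  have b1 : -C1 ≤ (deriv riemannZeta₁ (1 + δ) / riemannZeta₁ (1 + δ)).re := by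
    have := hC1' δ hδ0.le (by linarith)
    have h' := Complex.abs_re_le_norm (deriv riemannZeta₁ (1 + δ) / riemannZeta₁ (1 + δ))
    exact (abs_le.mp (h'.trans this)).1
  have c0 : (1 / (s0 - 1)).re ≤ 1 := by
    have := re_inv_le δ t hT1
    rwa [show s0 - 1 = (δ:ℂ) + t * Complex.I by rw [hs0]; ring]
  have c2 : (1 / (s2 - 1)).re ≤ 1 := by
    have := re_inv_le δ (2*t) (by rw [abs_mul, abs_two]; linarith)
    rw [show s2 - 1 = (δ:ℂ) + ((2 * t : ℝ) : ℂ) * Complex.I by rw [hs2]; push_cast; ring]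
    exact this
  have c1 : (1 / ((1:ℂ) + δ - 1)).re = 1 / δ := by
    rw [show (1:ℂ) + δ - 1 = (δ : ℂ) by ring, ← Complex.ofReal_one, ← Complex.ofReal_div, Complex.ofReal_re]
  rw [c1] at h341
  have f1 : 4 / d ≤ 3 / δ + Q * L := by
    have hBL : B * L ≥ 0 := by positivity
    have : 3 * C1 + 13 ≤ (3 * C1 + 13) * L := by nlinarith
    have e1 : 4 / d = 4 * (1 / d) := by ring
    have e2 : 3 / δ = 3 * (1 / δ) := by ring
    have e3 : (3 * C1 + 13 + 576 * B) * L = (3 * C1 + 13) * L + 576 * (B * L) := by ring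
    rw [hQ, e1, e2, e3]
    linarith
  have f2 : 4 / d ≥ (32/9) * (1 / δ) := by
    rw [ge_iff_le, show (32/9 : ℝ) * (1/δ) = 4 / (9/8 * δ) by field_simp; norm_num]
    exact div_le_div_of_nonneg_left (by norm_num) hd0 (by linarith)
  have f3 : 1 / δ = 2 * (Q * L) := by
    rw [hδ, hk]; field_simp
  have f4 : 3 / δ = 3 * (1/δ) := by ring
  have : 0 < Q * L := by positivity
  rw [f4, f3] at f1
  rw [f3] at f2
  linarith

lemma zfr : ∃ κ > 0, κ ≤ 1/4 ∧ ∀ T : ℝ, ∀ s : ℂ, |s.im| ≤ T → 1 - κ / Real.log (T + 4) ≤ s.re → riemannZeta₁ s ≠ 0 := by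
  obtain ⟨k, hk, T0, h⟩ := zfr_large
  set K : Set ℂ := (fun t : ℝ => (1:ℂ) + t * Complex.I) '' Set.Icc (-T0) T0 with hK
  have hKc : IsCompact K := isCompact_Icc.image (by fun_prop)
  have hU : IsOpen {z : ℂ | riemannZeta₁ z ≠ 0} := isOpen_ne_fun differentiable_riemannZeta₁.continuous continuous_const
  obtain ⟨ε, hε, hsub⟩ := hKc.exists_thickening_subset_open hU (by
    rintro z ⟨t, _, rfl⟩
    exact Z_ne_zero_one_le _ (by simp))
  refine ⟨min (1/4) (min k (ε/2)), by positivity, min_le_left _ _, fun T s hT hs => ?_⟩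
  set m := min (1/4) (min k (ε/2)) with hm
  have hmk : m ≤ k := (min_le_right _ _).trans (min_le_left _ _)
  have hme : m ≤ ε/2 := (min_le_right _ _).trans (min_le_right _ _)
  have hm0 : 0 < m := by positivity
  have hy4 : 4 ≤ |s.im| + 4 := by linarith [abs_nonneg s.im]
  have hL := one_le_log4 _ hy4
  have hLT : Real.log (|s.im| + 4) ≤ Real.log (T + 4) := Real.log_le_log (by linarith) (by linarith)
  by_cases h1 : 1 ≤ s.re
  · exact Z_ne_zero_one_le s h1
  push Not at h1
  by_cases ht : T0 ≤ |s.im|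
  · apply h s ht
    have : m / Real.log (T + 4) ≤ k / Real.log (|s.im| + 4) := by gcongr
    linarith
  · push Not at ht
    apply hsub
    rw [Metric.mem_thickening_iff]
    refine ⟨1 + s.im * Complex.I, ⟨s.im, abs_le.mp ht.le, rfl⟩, ?_⟩
    have e1 : s - (1 + s.im * Complex.I) = ((s.re - 1 : ℝ) : ℂ) := by
      apply Complex.ext <;> simp
    rw [dist_eq_norm, e1, Complex.norm_real, Real.norm_eq_abs, abs_of_neg (by linarith)]
    have : m / Real.log (T + 4) ≤ m := div_le_self hm0.le (by linarith)
    linarith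
end St10

namespace St10

/-- logarithmic derivative of `(s-1) ζ(s)` -/
noncomputable def ZZ (s : ℂ) : ℂ := deriv riemannZeta₁ s / riemannZeta₁ s

set_option maxHeartbeats 800000 in
lemma ZZ_bound : ∃ κ > 0, κ ≤ 1/12 ∧ ∃ C > 0, ∀ T : ℝ, 0 ≤ T → ∀ s : ℂ, |s.im| ≤ T → |s.re - 1| ≤ κ / Real.log (T + 5) →
    riemannZeta₁ s ≠ 0 ∧ ‖ZZ s‖ ≤ C * Real.log (T + 5) ^ 2 := by
  obtain ⟨C1, hC1, h1⟩ := Z_growth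
  obtain ⟨C2, hC2, h2⟩ := Z_lower
  obtain ⟨k, hk0, hk4, hz⟩ := zfr
  have hC : 1 ≤ C1 * C2 := one_le_mul_of_one_le_of_one_le hC1 hC2
  set A := C1 * C2 * (9 / k^2) with hA
  have hA1 : 1 ≤ A := by
    have : 1 ≤ 9 / k^2 := by
      rw [le_div_iff₀ (by positivity)]; nlinarith
    exact one_le_mul_of_one_le_of_one_le hC this
  have hlA : 0 ≤ Real.log A := Real.log_nonneg hA1
  set B := 4 + Real.log A with hB
  have hB0 : 0 < B := by linarith
  refine ⟨k / 3, by positivity, by linarith, 18 * B / k, by positivity, fun T hT s hsT hsr => ?_⟩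
  set y := T + 5 with hy
  have hy5 : 5 ≤ y := by linarith
  have hL := one_le_log4 y (by linarith)
  set L := Real.log y with hLdef
  set δ := k / 3 / L with hδ
  have hδ0 : 0 < δ := by positivity
  have hδ1 : δ ≤ 1/12 := (div_le_self (by positivity) hL).trans (by linarith)
  set s0 : ℂ := 1 + δ + s.im * Complex.I with hs0
  have r0 : s0.re = 1 + δ := by simp [hs0]
  have i0 : s0.im = s.im := by simp [hs0]
  obtain ⟨hs1, hs2⟩ := abs_le.mp hsr
  have hzero : ∀ s' : ℂ, |s'.im| ≤ T + 1 → 1 - 3 * δ ≤ s'.re → riemannZeta₁ s' ≠ 0 := by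
    intro s' hi hr
    apply hz (T + 1) s' hi
    rw [show T + 1 + 4 = y by rw [hy]; ring, ← hLdef]
    have : k / L = 3 * δ := by rw [hδ]; field_simp
    linarith
  refine ⟨hzero s (by linarith) (by linarith), ?_⟩
  set g : ℂ → ℂ := fun z => riemannZeta₁ (s0 + 4 * δ * z) with hg
  have hgd : Differentiable ℂ g := by
    intro z
    exact DifferentiableAt.fun_comp' z (differentiable_riemannZeta₁ _) (by fun_prop)
  have hwn : ∀ z : ℂ, ‖z‖ < 1 → ‖4 * (δ:ℂ) * z‖ ≤ 4 * δ := by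
    intro z hz
    rw [norm_mul, norm_mul, Complex.norm_ofNat, Complex.norm_real, Real.norm_of_nonneg hδ0.le]
    nlinarith
  have hg0 : g 0 = riemannZeta₁ s0 := by simp [hg]
  have hMexp : A * y ^ 4 ≤ Real.exp (B * L) := by
    have e1 : A * y ^ 4 = Real.exp (Real.log A + 4 * Real.log y) := by
      rw [Real.exp_add, Real.exp_log (by linarith), mul_comm 4, Real.exp_mul, Real.exp_log (by linarith)]
      norm_cast
    rw [e1]
    apply Real.exp_le_exp.mpr
    rw [← hLdef]
    nlinarith
  have hlow : δ ^ 2 / C2 ≤ ‖riemannZeta₁ s0‖ := by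
    have := h2 s0 (by rw [r0]; linarith) (by rw [r0]; linarith)
    rw [r0] at this
    simpa using this
  have hLy : L ≤ y := (Real.log_le_sub_one_of_pos (by linarith)).trans (by linarith)
  have hδy : k / (3 * y) ≤ δ := by
    rw [hδ, div_div]
    gcongr
  have hbc := BCderiv g hgd.differentiableOn (by
      intro z hz'
      rw [mem_ball_zero_iff] at hz'
      have hw := hwn z hz'
      have hr := abs_le.mp ((Complex.abs_re_le_norm _).trans hw)
      have hi := ((Complex.abs_im_le_norm _).trans hw)
      apply hzero
      · rw [Complex.add_im, i0]
        refine (abs_add_le _ _).trans ?_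
        linarith
      · rw [Complex.add_re, r0]; linarith [hr.1]) (B * L) (by positivity) (by
      intro z hz'
      rw [mem_ball_zero_iff] at hz'
      have hw := hwn z hz'
      have hr := abs_le.mp ((Complex.abs_re_le_norm _).trans hw)
      have hi := ((Complex.abs_im_le_norm _).trans hw)
      rw [hg0]
      have hup := h1 (s0 + 4 * δ * z) (by rw [Complex.add_re, r0]; linarith [hr.1])
      have hn : ‖s0 + 4 * δ * z‖ + 1 ≤ y := by
        have a1 := norm_add_le s0 (4 * δ * z)
        have a2 := Complex.norm_le_abs_re_add_abs_im s0
        rw [r0, i0, abs_of_pos (by linarith : 0 < 1 + δ)] at a2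
        linarith
      calc ‖g z‖ ≤ C1 * (‖s0 + 4 * δ * z‖ + 1) ^ 2 := hup
        _ ≤ C1 * y ^ 2 := by gcongr
        _ = (A * y ^ 4) * ((k / (3 * y)) ^ 2 / C2) := by rw [hA]; field_simp; norm_num
        _ ≤ Real.exp (B * L) * (δ ^ 2 / C2) := by gcongr
        _ ≤ _ := by gcongr) ((s - s0) / (4 * δ)) (by
      have e1 : s - s0 = ((s.re - 1 - δ : ℝ) : ℂ) := by
        apply Complex.ext
        · rw [Complex.sub_re, r0, Complex.ofReal_re]; ring
        · rw [Complex.sub_im, i0, Complex.ofReal_im]; ring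
      rw [e1, norm_div, norm_mul, Complex.norm_ofNat, Complex.norm_real, Complex.norm_real, Real.norm_of_nonneg hδ0.le,
        Real.norm_eq_abs, div_le_iff₀ (by linarith), abs_le]
      constructor <;> linarith)
  have hδc : (δ:ℂ) ≠ 0 := by exact_mod_cast hδ0.ne'
  have hpt : s0 + 4 * δ * ((s - s0) / (4 * δ)) = s := by
    field_simp; ring
  have hder : deriv g ((s - s0) / (4 * δ)) = deriv riemannZeta₁ s * (4 * δ) := by
    have a1 : HasDerivAt (fun z : ℂ => s0 + 4 * δ * z) (4 * δ) ((s - s0) / (4 * δ)) := by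
      simpa using ((hasDerivAt_id ((s - s0) / (4 * δ))).const_mul (4 * (δ:ℂ))).const_add s0
    have a2 : HasDerivAt riemannZeta₁ (deriv riemannZeta₁ s) (s0 + 4 * δ * ((s - s0) / (4 * δ))) := by
      rw [hpt]
      exact (differentiable_riemannZeta₁ s).hasDerivAt
    exact (HasDerivAt.comp (h := fun z : ℂ => s0 + 4 * δ * z) ((s - s0) / (4 * δ)) a2 a1).deriv
  have hgv : g ((s - s0) / (4 * δ)) = riemannZeta₁ s := by
    simp only [hg]; rw [hpt]
  rw [hder, hgv, mul_div_right_comm, norm_mul, norm_mul, Complex.norm_ofNat, Complex.norm_real, Real.norm_of_nonneg hδ0.le] at hbc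
  change ‖ZZ s‖ * (4 * δ) ≤ _ at hbc
  have e5 : 18 * B / k * L ^ 2 * (4 * δ) = 24 * (B * L) := by
    rw [hδ]; field_simp; norm_num
  rw [← e5] at hbc
  exact le_of_mul_le_mul_right hbc (by linarith)

lemma LL_le (s : ℂ) (hs : 1 < s.re) : ‖LL s‖ ≤ ‖LL (s.re : ℂ)‖ := by
  have hs' : 1 < (s.re : ℂ).re := by simpa using hs
  have H1 := Complex.hasSum_re (ArithmeticFunction.LSeriesSummable_vonMangoldt hs').LSeriesHasSum
  have hb : ‖LL s‖ ≤ (LL (s.re : ℂ)).re := by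
    refine tsum_of_norm_bounded H1 (fun n => ?_)
    by_cases hn : n = 0
    · subst hn; simp
    rw [LSeries.norm_term_eq, if_neg hn, LSeries.term_of_ne_zero hn]
    have : ((ArithmeticFunction.vonMangoldt n : ℝ) : ℂ) / (n:ℂ) ^ (s.re : ℂ) = ((ArithmeticFunction.vonMangoldt n / (n:ℝ)^s.re : ℝ) : ℂ) := by
      push_cast
      rw [Complex.ofReal_cpow (by positivity)]; rfl
    rw [this, Complex.ofReal_re, Complex.norm_real, Real.norm_of_nonneg ArithmeticFunction.vonMangoldt_nonneg]
  exact hb.trans (Complex.re_le_norm _)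

lemma ZZ_right : ∃ C > 0, ∀ s : ℂ, 1 < s.re → s.re ≤ 2 → ‖LL s‖ ≤ C / (s.re - 1) ∧ ‖ZZ s‖ ≤ C / (s.re - 1) := by
  obtain ⟨C1, hC1, hC1'⟩ := Zreal_bound
  have key : ∀ s : ℂ, 1 < s.re → s.re ≤ 2 → ‖LL s‖ ≤ (1 + C1) / (s.re - 1) := by
    intro s h1 h2
    refine (LL_le s h1).trans ?_
    have hd : 0 < s.re - 1 := by linarith
    rw [LL_eq _ (by simpa using h1)]
    refine (norm_sub_le _ _).trans ?_
    have b1 := hC1' (s.re - 1) hd.le (by linarith)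
    have e1 : (1 : ℂ) + ((s.re - 1 : ℝ) : ℂ) = (s.re : ℂ) := by push_cast; ring
    rw [e1] at b1
    have e2 : ‖1 / ((s.re : ℂ) - 1)‖ = 1 / (s.re - 1) := by
      rw [show ((s.re : ℂ) - 1) = ((s.re - 1 : ℝ) : ℂ) by push_cast; rfl, norm_div, norm_one, Complex.norm_real, Real.norm_of_nonneg hd.le]
    rw [e2, add_div]
    gcongr
    refine b1.trans ?_
    rw [le_div_iff₀ hd]; nlinarith
  refine ⟨2 + C1, by linarith, fun s h1 h2 => ?_⟩
  have hd : 0 < s.re - 1 := by linarith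
  have hk := key s h1 h2
  have e1 : (2 + C1) / (s.re - 1) = (1 + C1) / (s.re - 1) + 1 / (s.re - 1) := by ring
  have p : 0 < 1 / (s.re - 1) := by positivity
  refine ⟨by linarith, ?_⟩
  have e2 : ZZ s = 1 / (s - 1) - LL s := by rw [LL_eq s h1, ZZ]; ring
  rw [e2, e1]
  refine (norm_sub_le _ _).trans ?_
  have : ‖1 / (s - 1)‖ ≤ 1 / (s.re - 1) := by
    rw [norm_div, norm_one]
    apply one_div_le_one_div_of_le hd
    simpa using Complex.re_le_norm (s - 1)
  linarith
end St10

namespace St10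

/-- the point on the vertical line -/
noncomputable def vl (σ y : ℝ) : ℂ := σ + y * Complex.I

lemma vl_re (σ y : ℝ) : (vl σ y).re = σ := by simp [vl]
lemma vl_im (σ y : ℝ) : (vl σ y).im = y := by simp [vl]
lemma vl_cont (σ : ℝ) : Continuous (vl σ) := by unfold vl; fun_prop

/-- kernel -/
noncomputable def ker (s : ℂ) : ℂ := 1 / (s * (s + 1))

lemma ker_bound (s : ℂ) (hs : 1/2 ≤ s.re) : ‖ker s‖ ≤ 4 * (1 + s.im ^ 2)⁻¹ := by
  have h1 : Complex.normSq s = s.re * s.re + s.im * s.im := Complex.normSq_apply s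
  have h2 : ‖s‖ ≤ ‖s + 1‖ := by
    rw [← abs_of_nonneg (norm_nonneg s), ← abs_of_nonneg (norm_nonneg (s+1)), ← sq_le_sq, Complex.sq_norm, Complex.sq_norm, h1, Complex.normSq_apply]
    simp; nlinarith
  have h3 : (1 + s.im ^ 2) / 4 ≤ ‖s‖ * ‖s + 1‖ := by
    calc (1 + s.im ^ 2) / 4 ≤ ‖s‖ ^ 2 := by rw [Complex.sq_norm, h1]; nlinarith
      _ = ‖s‖ * ‖s‖ := sq _
      _ ≤ _ := by gcongr
  rw [ker, norm_div, norm_one, norm_mul]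
  have : 4 * (1 + s.im ^ 2)⁻¹ = 1 / ((1 + s.im ^ 2) / 4) := by field_simp
  rw [this]
  apply one_div_le_one_div_of_le (by positivity) h3

lemma ker_cont (σ : ℝ) (hσ : 1/2 ≤ σ) : Continuous (fun y => ker (vl σ y)) := by
  unfold ker
  refine Continuous.div continuous_const ?_ ?_
  · have := vl_cont σ; fun_prop
  · intro y h
    rcases mul_eq_zero.mp h with h | h
    · have := congrArg Complex.re h; simp [vl_re] at this; linarith
    · have := congrArg Complex.re h; simp [vl_re] at this; linarith

lemma ker_integrable (σ : ℝ) (hσ : 1/2 ≤ σ) : Integrable (fun y => ker (vl σ y)) := by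
  refine Integrable.mono' (integrable_inv_one_add_sq.const_mul 4) (ker_cont σ hσ).aestronglyMeasurable (Filter.Eventually.of_forall fun y => ?_)
  have := ker_bound (vl σ y) (by rw [vl_re]; exact hσ)
  rwa [vl_im] at this

/-- bounded continuous times kernel is integrable -/
lemma int_mul_ker (σ : ℝ) (hσ : 1/2 ≤ σ) (f : ℝ → ℂ) (hf : Continuous f) (C : ℝ) (hC : ∀ y, ‖f y‖ ≤ C) :
    Integrable (fun y => f y * ker (vl σ y)) :=
  (ker_integrable σ hσ).bdd_mul hf.aestronglyMeasurable (Filter.Eventually.of_forall hC)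

noncomputable def tri (u : ℝ) : ℂ :=
  Set.indicator (Set.Ioc 0 1) (fun _ => 1 : ℝ → ℂ) u - Set.indicator (Set.Ioc 0 1) (fun t => (t:ℂ) ^ (1:ℂ) : ℝ → ℂ) u

noncomputable def quad (u : ℝ) : ℂ :=
  (1/2 : ℂ) • (Set.indicator (Set.Ioc 0 1) (fun t => (t:ℂ) ^ (-1:ℂ) : ℝ → ℂ) u
    - Set.indicator (Set.Ioc 0 1) (fun _ => 1 : ℝ → ℂ) u) - (1/2 : ℂ) • tri u

lemma tri_mellin (s : ℂ) (hs : 0 < s.re) : HasMellin tri s (ker s) := by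
  have h1 := hasMellin_one_Ioc hs
  have h2 := hasMellin_cpow_Ioc 1 (s := s) (by simp; linarith)
  have h := hasMellin_sub h1.1 h2.1
  rw [h1.2, h2.2] at h
  have h0 : s ≠ 0 := by rintro rfl; simp at hs
  have h0' : s + 1 ≠ 0 := by
    intro h; have := congrArg Complex.re h; simp at this; linarith
  have e1 : ker s = 1 / s - 1 / (s + 1) := by rw [ker]; field_simp; ring
  rw [e1]; exact h

lemma quad_mellin (s : ℂ) (hs : 1 < s.re) : HasMellin quad s (1 / (s - 1) * ker s) := by
  have h1 := hasMellin_one_Ioc (s := s) (by linarith)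
  have h2 := hasMellin_cpow_Ioc (-1) (s := s) (by simp; linarith)
  have h3 := tri_mellin s (by linarith)
  have h := hasMellin_sub h2.1 h1.1
  have h' := hasMellin_const_smul h.1 (1/2 : ℂ)
  have h3' := hasMellin_const_smul h3.1 (1/2 : ℂ)
  have hf := hasMellin_sub h'.1 h3'.1
  rw [h'.2, h3'.2, h.2, h1.2, h2.2, h3.2] at hf
  have h0 : s ≠ 0 := by rintro rfl; simp at hs; linarith
  have h0' : s + 1 ≠ 0 := by
    intro h; have := congrArg Complex.re h; simp at this; linarith
  have h0'' : s - 1 ≠ 0 := by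
    intro h; have := congrArg Complex.re h; simp at this; linarith
  have e1 : 1 / (s - 1) * ker s = (1/2 : ℂ) • (1 / (s + -1) - 1 / s) - (1/2 : ℂ) • ker s := by
    rw [ker, ← sub_eq_add_neg]; simp only [smul_eq_mul]; field_simp; ring
  rw [e1]; exact hf

lemma tri_pos (u : ℝ) (hu : 0 < u) : tri u = ((max (1 - u) 0 : ℝ) : ℂ) := by
  unfold tri
  by_cases h : u ≤ 1
  · have hmem : u ∈ Set.Ioc (0:ℝ) 1 := ⟨hu, h⟩
    rw [Set.indicator_of_mem hmem, Set.indicator_of_mem hmem, max_eq_left (by linarith)]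
    simp
  · have : u ∉ Set.Ioc (0:ℝ) 1 := fun h' => h h'.2
    rw [Set.indicator_of_notMem this, Set.indicator_of_notMem this, max_eq_right (by linarith)]
    simp

lemma quad_pos (u : ℝ) (hu : 0 < u) : quad u = ((max (1 - u) 0 ^ 2 / (2 * u) : ℝ) : ℂ) := by
  unfold quad
  rw [tri_pos u hu]
  by_cases h : u ≤ 1
  · have hmem : u ∈ Set.Ioc (0:ℝ) 1 := ⟨hu, h⟩
    rw [Set.indicator_of_mem hmem, Set.indicator_of_mem hmem, max_eq_left (by linarith)]
    have : (u:ℂ) ≠ 0 := by exact_mod_cast hu.ne'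
    rw [Complex.cpow_neg_one]
    push_cast
    simp only [smul_eq_mul]
    field_simp
  · have : u ∉ Set.Ioc (0:ℝ) 1 := fun h' => h h'.2
    rw [Set.indicator_of_notMem this, Set.indicator_of_notMem this, max_eq_right (by linarith)]
    simp

lemma perron_tri (σ u : ℝ) (hσ : 1 < σ) (hu : 0 < u) :
    (1 / (2 * Real.pi)) • ∫ y : ℝ, (u:ℂ) ^ (-(vl σ y)) * ker (vl σ y) = tri u := by
  have hm : ∀ y : ℝ, mellin tri (vl σ y) = ker (vl σ y) := fun y => (tri_mellin _ (by rw [vl_re]; linarith)).2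
  have h := mellinInv_mellin_eq σ tri hu (tri_mellin σ (by simp; linarith)).1 (by
    have := ker_integrable σ (by linarith)
    refine this.congr (Filter.Eventually.of_forall fun y => ?_)
    exact (hm y).symm) (by
    have : ContinuousAt (fun u : ℝ => ((max (1 - u) 0 : ℝ) : ℂ)) u := by fun_prop
    refine this.congr ?_
    filter_upwards [lt_mem_nhds hu] with v hv using (tri_pos v hv).symm)
  rw [← h, mellinInv]
  congr 1
  refine integral_congr_ae (Filter.Eventually.of_forall fun y => ?_)
  simp only [smul_eq_mul]
  change _ = _ * mellin tri (vl σ y)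
  rw [hm]; rfl

lemma inv_bound (σ y : ℝ) (hσ : 1 < σ) : ‖1 / (vl σ y - 1)‖ ≤ 1 / (σ - 1) := by
  rw [norm_div, norm_one]
  apply one_div_le_one_div_of_le (by linarith)
  have := Complex.re_le_norm (vl σ y - 1)
  simpa [vl_re] using this

lemma inv_cont (σ : ℝ) (hσ : 1 < σ) : Continuous (fun y => 1 / (vl σ y - 1)) := by
  refine Continuous.div continuous_const ?_ ?_
  · have := vl_cont σ; fun_prop
  · intro y h
    have := congrArg Complex.re h; simp [vl_re] at this; linarith

lemma perron_quad (σ u : ℝ) (hσ : 1 < σ) (hu : 0 < u) :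
    (1 / (2 * Real.pi)) • ∫ y : ℝ, (u:ℂ) ^ (-(vl σ y)) * (1 / (vl σ y - 1) * ker (vl σ y)) = quad u := by
  have hm : ∀ y : ℝ, mellin quad (vl σ y) = 1 / (vl σ y - 1) * ker (vl σ y) := fun y => (quad_mellin _ (by rw [vl_re]; linarith)).2
  have h := mellinInv_mellin_eq σ quad hu (quad_mellin σ (by simp; linarith)).1 (by
    have := int_mul_ker σ (by linarith) _ (inv_cont σ hσ) _ (fun y => inv_bound σ y hσ)
    refine this.congr (Filter.Eventually.of_forall fun y => ?_)
    exact (hm y).symm) (by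
    have : ContinuousAt (fun u : ℝ => ((max (1 - u) 0 ^ 2 / (2 * u) : ℝ) : ℂ)) u := by
      have h2 : 2 * u ≠ 0 := by positivity
      have : ContinuousAt (fun u : ℝ => (max (1 - u) 0 ^ 2 / (2 * u) : ℝ)) u := by
        refine ContinuousAt.div ?_ ?_ h2 <;> fun_prop
      exact Complex.continuous_ofReal.continuousAt.comp this
    refine this.congr ?_
    filter_upwards [lt_mem_nhds hu] with v hv using (quad_pos v hv).symm)
  rw [← h, mellinInv]
  congr 1
  refine integral_congr_ae (Filter.Eventually.of_forall fun y => ?_)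
  simp only [smul_eq_mul]
  change _ = _ * mellin quad (vl σ y)
  rw [hm]; rfl
end St10

namespace St10

lemma cpow_div_neg (n x : ℝ) (hn : 0 < n) (hx : 0 < x) (s : ℂ) :
    ((n / x : ℝ) : ℂ) ^ (-s) = (n : ℂ) ^ (-s) * (x:ℂ) ^ s := by
  have h1 : (n : ℂ) ^ (-s) = ((n / x : ℝ) : ℂ) ^ (-s) * (x:ℂ) ^ (-s) := by
    rw [← Complex.mul_cpow_ofReal_nonneg (by positivity) hx.le]
    congr 1
    have : (x:ℂ) ≠ 0 := by exact_mod_cast hx.ne'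
    push_cast; field_simp
  have hx' : (x:ℂ) ≠ 0 := by exact_mod_cast hx.ne'
  rw [h1, mul_assoc, ← Complex.cpow_add _ _ hx']
  simp

lemma cpow_vl_cont (x σ : ℝ) (hx : 0 < x) : Continuous (fun y => (x:ℂ) ^ (vl σ y)) := by
  have hx' : (x:ℂ) ≠ 0 := by exact_mod_cast hx.ne'
  exact (vl_cont σ).const_cpow (Or.inl hx')

lemma cpow_vl_norm (x σ y : ℝ) (hx : 0 < x) : ‖(x:ℂ) ^ (vl σ y)‖ = x ^ σ := by
  rw [Complex.norm_cpow_eq_rpow_re_of_pos hx, vl_re]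

lemma cpow_nvl_cont (x σ : ℝ) (hx : 0 < x) : Continuous (fun y => (x:ℂ) ^ (-(vl σ y))) := by
  have hx' : (x:ℂ) ≠ 0 := by exact_mod_cast hx.ne'
  exact (vl_cont σ).neg.const_cpow (Or.inl hx')

lemma cpow_nvl_norm (x σ y : ℝ) (hx : 0 < x) : ‖(x:ℂ) ^ (-(vl σ y))‖ = x ^ (-σ) := by
  rw [Complex.norm_cpow_eq_rpow_re_of_pos hx, Complex.neg_re, vl_re]

lemma ZZ_vl_cont (σ : ℝ) (hσ : 1 < σ) : Continuous (fun y => ZZ (vl σ y)) := by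
  unfold ZZ
  refine Continuous.div (Zderiv_cont.comp (vl_cont σ)) (differentiable_riemannZeta₁.continuous.comp (vl_cont σ)) ?_
  intro y
  exact Z_ne_zero_one_le _ (by rw [vl_re]; exact hσ.le)

lemma perron_LL (σ x : ℝ) (hσ : 1 < σ) (hx : 0 < x) :
    HasSum (fun n : ℕ => (ArithmeticFunction.vonMangoldt n : ℂ) * ((max (1 - n / x) 0 : ℝ) : ℂ))
      ((1 / (2 * Real.pi)) • ∫ y : ℝ, (x:ℂ) ^ (vl σ y) * (LL (vl σ y) * ker (vl σ y))) := by
  set F : ℕ → ℝ → ℂ := fun n y => (ArithmeticFunction.vonMangoldt n : ℂ) * (((n / x : ℝ) : ℂ) ^ (-(vl σ y)) * ker (vl σ y)) with hF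
  have hterm : ∀ n y, F n y = LSeries.term (fun n => (ArithmeticFunction.vonMangoldt n : ℂ)) (vl σ y) n * ((x:ℂ) ^ (vl σ y) * ker (vl σ y)) := by
    intro n y
    by_cases hn : n = 0
    · subst hn; simp [hF]
    · rw [LSeries.term_of_ne_zero hn]
      simp only [hF]
      rw [cpow_div_neg n x (by positivity) hx, Complex.cpow_neg]
      push_cast
      ring
  have hint : ∀ n, Integrable (F n) := by
    intro n
    by_cases hn : n = 0
    · subst hn; simp [hF]
    · have hnx : 0 < (n:ℝ) / x := by positivity
      exact (int_mul_ker σ (by linarith) _ (cpow_nvl_cont _ σ hnx) _ (fun y => (cpow_nvl_norm _ σ y hnx).le)).const_mul _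
  have hLs : Summable (fun n => ‖LSeries.term (fun n => (ArithmeticFunction.vonMangoldt n : ℂ)) (vl σ 0) n‖) :=
    (ArithmeticFunction.LSeriesSummable_vonMangoldt (s := vl σ 0) (by rw [vl_re]; exact hσ)).norm
  have hnorm : ∀ n y, ‖F n y‖ = ‖LSeries.term (fun n => (ArithmeticFunction.vonMangoldt n : ℂ)) (vl σ 0) n‖ * (x ^ σ * ‖ker (vl σ y)‖) := by
    intro n y
    rw [hterm, norm_mul, norm_mul, cpow_vl_norm x σ y hx, LSeries.norm_term_eq, LSeries.norm_term_eq, vl_re, vl_re]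
  have hsum : Summable fun n ↦ ∫ a, ‖F n a‖ := by
    simp_rw [hnorm, integral_const_mul]
    exact hLs.mul_right _
  have H := hasSum_integral_of_summable_integral_norm hint hsum
  have H' := H.const_smul (1 / (2 * Real.pi))
  have ef : (fun n : ℕ => (ArithmeticFunction.vonMangoldt n : ℂ) * ((max (1 - n / x) 0 : ℝ) : ℂ)) =
      fun n => (1 / (2 * Real.pi)) • ∫ a, F n a := by
    ext n
    by_cases hn : n = 0
    · subst hn; simp [hF]
    · have hnx : 0 < (n:ℝ) / x := by positivity
      rw [← tri_pos _ hnx, ← perron_tri σ _ hσ hnx]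
      simp only [hF]
      rw [integral_const_mul, mul_smul_comm]
  have eg : (fun y : ℝ => (x:ℂ) ^ (vl σ y) * (LL (vl σ y) * ker (vl σ y))) = fun y => ∑' n, F n y := by
    ext y
    simp_rw [hterm]
    rw [tsum_mul_right]
    change _ = LL (vl σ y) * _
    ring
  rw [ef, eg]
  exact H'

/-- main explicit formula -/
lemma perron (σ x : ℝ) (hσ : 1 < σ) (hσ2 : σ ≤ 2) (hx : 1 ≤ x) (N : ℕ) (hN : x ≤ N) :
    Integrable (fun y : ℝ => (x:ℂ) ^ (vl σ y) * ZZ (vl σ y) * ker (vl σ y)) ∧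
    (((∑ n ∈ Finset.range N, ArithmeticFunction.vonMangoldt n * max (1 - n / x) 0) - (x / 2 - 1 + 1 / (2 * x)) : ℝ) : ℂ)
      = - ((1 / (2 * Real.pi)) • ∫ y : ℝ, (x:ℂ) ^ (vl σ y) * ZZ (vl σ y) * ker (vl σ y)) := by
  have hx0 : 0 < x := by linarith
  obtain ⟨C, hC, hb⟩ := ZZ_right
  have I1 : Integrable (fun y : ℝ => (x:ℂ) ^ (vl σ y) * ZZ (vl σ y) * ker (vl σ y)) := by
    refine int_mul_ker σ (by linarith) _ ((cpow_vl_cont x σ hx0).mul (ZZ_vl_cont σ hσ)) (x ^ σ * (C / (σ - 1))) (fun y => ?_)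
    rw [norm_mul, cpow_vl_norm x σ y hx0]
    have := (hb (vl σ y) (by rw [vl_re]; exact hσ) (by rw [vl_re]; exact hσ2)).2
    rw [vl_re] at this
    gcongr
  have I2 : Integrable (fun y : ℝ => (x:ℂ) ^ (vl σ y) * (1 / (vl σ y - 1)) * ker (vl σ y)) := by
    refine int_mul_ker σ (by linarith) _ ((cpow_vl_cont x σ hx0).mul (inv_cont σ hσ)) (x ^ σ * (1 / (σ - 1))) (fun y => ?_)
    rw [norm_mul, cpow_vl_norm x σ y hx0]
    have := inv_bound σ y hσ
    gcongr
  refine ⟨I1, ?_⟩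
  have h1 := (perron_LL σ x hσ hx0).tsum_eq
  rw [tsum_eq_sum (s := Finset.range N) (by
    intro n hn
    have : x ≤ n := by
      rw [Finset.mem_range, not_lt] at hn
      exact hN.trans (by exact_mod_cast hn)
    rw [max_eq_right]
    · simp
    · have : 1 ≤ n / x := by rwa [le_div_iff₀ hx0, one_mul]
      linarith)] at h1
  have h2 := perron_quad σ (1 / x) hσ (by positivity)
  rw [quad_pos _ (by positivity), max_eq_left (by
    have : 1 / x ≤ 1 := by rwa [div_le_one hx0]
    linarith)] at h2
  have e2 : (1 - 1 / x) ^ 2 / (2 * (1 / x)) = x / 2 - 1 + 1 / (2 * x) := by field_simp; ring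
  rw [e2] at h2
  rw [Complex.ofReal_sub, ← h2]
  have e3 : ((∑ n ∈ Finset.range N, ArithmeticFunction.vonMangoldt n * max (1 - n / x) 0 : ℝ) : ℂ) =
      ∑ n ∈ Finset.range N, (ArithmeticFunction.vonMangoldt n : ℂ) * ((max (1 - n / x) 0 : ℝ) : ℂ) := by
    rw [Complex.ofReal_sum]
    exact Finset.sum_congr rfl fun n _ => Complex.ofReal_mul _ _
  rw [e3, h1, ← smul_sub, ← smul_neg]
  congr 1
  have f1 : (fun y : ℝ => (x:ℂ) ^ (vl σ y) * (LL (vl σ y) * ker (vl σ y))) =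
      fun y => (x:ℂ) ^ (vl σ y) * (1 / (vl σ y - 1)) * ker (vl σ y) - (x:ℂ) ^ (vl σ y) * ZZ (vl σ y) * ker (vl σ y) := by
    ext y
    rw [LL_eq _ (by rw [vl_re]; exact hσ), ← ZZ]; ring
  have f2 : (fun y : ℝ => ((1 / x : ℝ) : ℂ) ^ (-(vl σ y)) * (1 / (vl σ y - 1) * ker (vl σ y))) =
      fun y => (x:ℂ) ^ (vl σ y) * (1 / (vl σ y - 1)) * ker (vl σ y) := by
    ext y
    rw [cpow_div_neg 1 x one_pos hx0]; simp; ring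
  rw [f1, f2, integral_sub I2 I1]
  ring
end St10

namespace St10

lemma tail_bound (T : ℝ) (hT : 0 < T) : Real.pi / 2 - Real.arctan T ≤ 1 / T := by
  rw [← Real.arctan_inv_of_pos hT]
  have h0 : 0 ≤ Real.arctan T⁻¹ := Real.arctan_nonneg.mpr (by positivity)
  have := Real.le_tan h0 (Real.arctan_lt_pi_div_two _)
  rw [Real.tan_arctan] at this
  rwa [one_div]

lemma tails (f : ℝ → ℂ) (hf : Integrable f) (K T : ℝ) (hT : 0 < T) (hK : ∀ y, ‖f y‖ ≤ K * (1 + y^2)⁻¹) (hK0 : 0 ≤ K) :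
    ‖∫ y, f y‖ ≤ ‖∫ y in (-T)..T, f y‖ + 2 * K / T := by
  have e1 := intervalIntegral.integral_Iic_add_Ioi (b := T) hf.integrableOn hf.integrableOn
  have e2 := intervalIntegral.integral_Iic_sub_Iic (a := -T) (b := T) hf.integrableOn hf.integrableOn
  have i1 := (integrable_inv_one_add_sq.const_mul K)
  have b1 : ‖∫ y in Set.Iic (-T), f y‖ ≤ K / T := by
    refine (norm_integral_le_of_norm_le i1.integrableOn (Filter.Eventually.of_forall hK)).trans ?_
    rw [integral_const_mul, integral_Iic_inv_one_add_sq, Real.arctan_neg, div_eq_mul_one_div K T]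
    have := tail_bound T hT
    exact mul_le_mul_of_nonneg_left (by linarith) hK0
  have b2 : ‖∫ y in Set.Ioi T, f y‖ ≤ K / T := by
    refine (norm_integral_le_of_norm_le i1.integrableOn (Filter.Eventually.of_forall hK)).trans ?_
    rw [integral_const_mul, integral_Ioi_inv_one_add_sq, div_eq_mul_one_div K T]
    have := tail_bound T hT
    exact mul_le_mul_of_nonneg_left (by linarith) hK0
  have e3 : ∫ y, f y = (∫ y in (-T)..T, f y) + (∫ y in Set.Iic (-T), f y) + ∫ y in Set.Ioi T, f y := by
    rw [← e1, ← e2]; ring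
  rw [e3]
  refine (norm_add₃_le).trans ?_
  have : 2 * K / T = K / T + K / T := by ring
  linarith

set_option maxHeartbeats 800000 in
lemma shift : ∃ κ > 0, ∃ C > 0, ∀ x T : ℝ, 3 ≤ x → 1 ≤ T → 1 / Real.log x ≤ κ / Real.log (T + 5) → ∀ N : ℕ, x ≤ N →
    |(∑ n ∈ Finset.range N, ArithmeticFunction.vonMangoldt n * max (1 - n / x) 0) - (x / 2 - 1 + 1 / (2 * x))|
      ≤ C * x * (Real.log x / T + x ^ (-(κ / Real.log (T + 5))) * T ^ 2) := by
  obtain ⟨κ, hκ, hκ1, C, hC, hZZ⟩ := ZZ_bound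
  obtain ⟨C', hC', hR⟩ := ZZ_right
  refine ⟨κ, hκ, 24 * C' + 1200 * C, by positivity, fun x T hx hT hle N hN => ?_⟩
  have hlx := (log_add_one_le hx).1
  set lx := Real.log x with hlxd
  have hL := one_le_log4 (T + 5) (by linarith)
  set L := Real.log (T + 5) with hLd
  set δ := κ / L with hδ
  have hδ0 : 0 < δ := by positivity
  have hδ1 : δ ≤ 1/12 := (div_le_self hκ.le hL).trans hκ1
  set ε := 1 / lx with hε
  have hε0 : 0 < ε := by positivity
  set σ := 1 + ε with hσ
  have hx0 : 0 < x := by linarith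
  obtain ⟨hint, hper⟩ := perron σ x (by linarith) (by linarith) (by linarith) N hN
  have hxσ : x ^ σ ≤ 3 * x := by
    rw [hσ, Real.rpow_add hx0, Real.rpow_one]
    have : x ^ ε = Real.exp 1 := by
      rw [Real.rpow_def_of_pos hx0, ← hlxd, hε, mul_one_div_cancel (by linarith)]
    rw [this]
    have := Real.exp_one_lt_d9
    nlinarith
  have hL2 : L ^ 2 ≤ 24 * T := by
    have hsq : 0 < √(T + 5) := Real.sqrt_pos.mpr (by linarith)
    have l1 : L = 2 * Real.log (√(T + 5)) := by rw [Real.log_sqrt (by linarith)]; ring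
    have l2 := Real.log_le_sub_one_of_pos hsq
    have l3 : L ≤ 2 * √(T + 5) := by linarith
    calc L ^ 2 ≤ (2 * √(T+5)) ^ 2 := by gcongr
      _ = 4 * (T + 5) := by rw [mul_pow, Real.sq_sqrt (by linarith)]; ring
      _ ≤ 24 * T := by linarith
  have hb : ∀ s : ℂ, |s.im| ≤ T → 1 - δ ≤ s.re → s.re ≤ σ →
      riemannZeta₁ s ≠ 0 ∧ ‖(x:ℂ) ^ s * ZZ s * ker s‖ ≤ x ^ s.re * (C * L ^ 2) * (4 * (1 + s.im ^ 2)⁻¹) := by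
    intro s hi h1 h2
    obtain ⟨a1, a2⟩ := hZZ T (by linarith) s hi (by rw [abs_le]; constructor <;> linarith)
    refine ⟨a1, ?_⟩
    rw [norm_mul, norm_mul, Complex.norm_cpow_eq_rpow_re_of_pos hx0]
    have := ker_bound s (by linarith)
    gcongr
  -- tails
  have ht := tails _ hint (12 * x * C' * lx) T (by linarith) (by
    intro y
    rw [norm_mul, norm_mul, cpow_vl_norm x σ y hx0]
    have h1 := (hR (vl σ y) (by rw [vl_re]; linarith) (by rw [vl_re]; linarith)).2
    rw [vl_re] at h1
    have h2 := ker_bound (vl σ y) (by rw [vl_re]; linarith)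
    rw [vl_im] at h2
    have e1 : C' / (σ - 1) = C' * lx := by
      rw [hσ, hε]; field_simp; ring
    rw [e1] at h1
    calc _ ≤ (3 * x) * (C' * lx) * (4 * (1 + y^2)⁻¹) := by gcongr
      _ = _ := by ring) (by positivity)
  -- rectangle
  set h : ℂ → ℂ := fun s => (x:ℂ) ^ s * ZZ s * ker s with hh
  have hxc : (x:ℂ) ≠ 0 := by exact_mod_cast hx0.ne'
  have hrect := Complex.integral_boundary_rect_eq_zero_of_differentiableOn h (vl (1 - δ) (-T)) (vl σ T) (by
    intro s hs
    rw [Complex.mem_reProdIm, vl_re, vl_re, vl_im, vl_im, Set.uIcc_of_le (by linarith), Set.uIcc_of_le (by linarith)] at hs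
    obtain ⟨⟨s1, s2⟩, s3, s4⟩ := hs
    have hne := (hb s (abs_le.mpr ⟨s3, s4⟩) s1 s2).1
    have d1 : DifferentiableAt ℂ (fun s : ℂ => (x:ℂ) ^ s) s := DifferentiableAt.const_cpow differentiableAt_id (Or.inl hxc)
    have d2 : DifferentiableAt ℂ ZZ s := by
      have dd : DifferentiableAt ℂ (deriv riemannZeta₁) s :=
        (differentiable_riemannZeta₁.differentiableOn.deriv isOpen_univ).differentiableAt Filter.univ_mem
      exact dd.div (differentiable_riemannZeta₁ s) hne
    have d3 : DifferentiableAt ℂ ker s := by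
      unfold ker
      refine DifferentiableAt.div (by fun_prop) (by fun_prop) ?_
      refine mul_ne_zero ?_ ?_
      · intro h0; rw [h0] at s1; simp at s1; linarith
      · intro h0; have := congrArg Complex.re h0; simp at this; linarith
    exact ((d1.mul d2).mul d3).differentiableWithinAt)
  simp only [vl_re, vl_im] at hrect
  have hr : ∫ y in (-T)..T, h (vl σ y) = ∫ y : ℝ in (-T)..T, h (σ + y * Complex.I) := rfl
  have bhor : ∀ t : ℝ, |t| = T → ‖∫ u : ℝ in (1-δ)..σ, h (u + t * Complex.I)‖ ≤ 12 * x * (C * L^2) * (T ^ 2)⁻¹ * 2 := by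
    intro t ht
    have := intervalIntegral.norm_integral_le_of_norm_le_const (a := 1 - δ) (b := σ) (f := fun u : ℝ => h (u + t * Complex.I)) (C := 12 * x * (C * L^2) * (T ^ 2)⁻¹) (by
      intro u hu
      rw [Set.uIoc_of_le (by linarith)] at hu
      have i1 : ((u:ℂ) + t * Complex.I).im = t := by simp
      have i2 : ((u:ℂ) + t * Complex.I).re = u := by simp
      have := (hb (u + t * Complex.I) (by rw [i1, ht]) (by rw [i2]; exact hu.1.le) (by rw [i2]; exact hu.2)).2
      rw [i1, i2] at this
      refine this.trans ?_
      have g1 : x ^ u ≤ 3 * x := (Real.rpow_le_rpow_of_exponent_le (by linarith) hu.2).trans hxσ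
      have g2 : (1 + t ^ 2)⁻¹ ≤ (T ^ 2)⁻¹ := by
        rw [← sq_abs t, ht]
        apply inv_anti₀ (by positivity); linarith
      calc _ ≤ (3 * x) * (C * L^2) * (4 * (T ^ 2)⁻¹) := by gcongr
        _ = _ := by ring)
    refine this.trans ?_
    rw [abs_of_pos (by linarith)]
    gcongr; linarith
  have bleft : ‖∫ y : ℝ in (-T)..T, h ((1 - δ : ℝ) + y * Complex.I)‖ ≤ x ^ (1 - δ) * (C * L^2) * 4 * (2 * T) := by
    have := intervalIntegral.norm_integral_le_of_norm_le_const (a := -T) (b := T) (f := fun y : ℝ => h ((1 - δ : ℝ) + y * Complex.I)) (C := x ^ (1 - δ) * (C * L^2) * 4) (by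
      intro y hy
      rw [Set.uIoc_of_le (by linarith)] at hy
      have i1 : (((1 - δ : ℝ) : ℂ) + y * Complex.I).im = y := by simp
      have i2 : (((1 - δ : ℝ) : ℂ) + y * Complex.I).re = 1 - δ := by simp
      have := (hb ((1 - δ : ℝ) + y * Complex.I) (by rw [i1, abs_le]; exact ⟨hy.1.le, hy.2⟩) (by rw [i2]) (by rw [i2]; linarith)).2
      rw [i1, i2] at this
      refine this.trans ?_
      have g2 : (1 + y ^ 2)⁻¹ ≤ 1 := inv_le_one_of_one_le₀ (by nlinarith)
      have : 4 * (1 + y ^ 2)⁻¹ ≤ 4 := by linarith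
      gcongr)
    refine this.trans (le_of_eq ?_)
    rw [abs_of_pos (by linarith)]
    ring
  have hT' : |(-T)| = T := by rw [abs_neg, abs_of_pos (by linarith)]
  have bb := bhor (-T) hT'
  have bt := bhor T (abs_of_pos (by linarith))
  set R := ∫ y : ℝ in (-T)..T, h (σ + y * Complex.I) with hRd
  set Lf := ∫ y : ℝ in (-T)..T, h ((1 - δ : ℝ) + y * Complex.I) with hLf
  set Bt := ∫ u : ℝ in (1-δ)..σ, h (u + ((-T : ℝ) : ℂ) * Complex.I) with hBt
  set Tp := ∫ u : ℝ in (1-δ)..σ, h (u + T * Complex.I) with hTp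
  have hReq : Complex.I * R = Complex.I * Lf - Bt + Tp := by
    simp only [smul_eq_mul] at hrect
    linear_combination hrect
  have hRn : ‖R‖ ≤ ‖Lf‖ + ‖Bt‖ + ‖Tp‖ := by
    have : ‖R‖ = ‖Complex.I * R‖ := by rw [norm_mul, Complex.norm_I, one_mul]
    rw [this, hReq]
    refine (norm_add_le _ _).trans ?_
    have := norm_sub_le (Complex.I * Lf) Bt
    rw [norm_mul, Complex.norm_I, one_mul] at this
    linarith
  change ‖∫ y, h (vl σ y)‖ ≤ ‖∫ y in (-T)..T, h (vl σ y)‖ + _ at ht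
  rw [hr] at ht
  rw [← Real.norm_eq_abs, ← Complex.norm_real, hper, norm_neg, norm_smul]
  change _ * ‖∫ y, h (vl σ y)‖ ≤ _
  have hpi : ‖1 / (2 * Real.pi)‖ ≤ 1 := by
    rw [Real.norm_of_nonneg (by positivity), div_le_one (by positivity)]
    linarith [Real.pi_gt_three]
  have q1 : 12 * x * (C * L^2) * (T ^ 2)⁻¹ * 2 ≤ 12 * x * (C * (24 * T)) * (T ^ 2)⁻¹ * 2 := by gcongr
  have q1' : 12 * x * (C * (24 * T)) * (T ^ 2)⁻¹ * 2 = 576 / 2 * 2 * (C * x * (1 / T)) := by field_simp; norm_num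
  have q2 : x ^ (1 - δ) * (C * L^2) * 4 * (2 * T) ≤ x ^ (1 - δ) * (C * (24 * T)) * 4 * (2 * T) := by gcongr
  have q2' : x ^ (1 - δ) * (C * (24 * T)) * 4 * (2 * T) = 192 * (C * x * (x ^ (-δ) * T ^ 2)) := by
    rw [show (1 - δ) = 1 + (-δ) by ring, Real.rpow_add hx0, Real.rpow_one]; ring
  have q3 : 2 * (12 * x * C' * lx) / T = 24 * (C' * x * (lx / T)) := by ring
  have q4 : C * x * (1 / T) ≤ C * x * (lx / T) := by gcongr
  have p1 : 0 ≤ C' * x * (x ^ (-δ) * T ^ 2) := by positivity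
  have p2 : 0 ≤ C * x * (x ^ (-δ) * T ^ 2) := by positivity
  have p3 : 0 ≤ C * x * (lx / T) := by positivity
  have hg : (24 * C' + 1200 * C) * x * (lx / T + x ^ (-δ) * T ^ 2) = 24 * (C' * x * (lx / T)) + 24 * (C' * x * (x ^ (-δ) * T ^ 2)) + 1200 * (C * x * (lx / T)) + 1200 * (C * x * (x ^ (-δ) * T ^ 2)) := by ring
  rw [hg]
  refine (mul_le_of_le_one_left (norm_nonneg _) hpi).trans ?_
  linarith
end St10

namespace St10

lemma psi1 : ∃ ν > 0, ∃ K > 0, ∃ w0 > 0, ∀ x : ℝ, 3 ≤ x → w0 ≤ √(Real.log x) → ∀ N : ℕ, x ≤ N →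
    |(∑ n ∈ Finset.range N, ArithmeticFunction.vonMangoldt n * max (x - n) 0) - (x ^ 2 / 2 - x + 1 / 2)|
      ≤ K * x ^ 2 * Real.exp (-(ν * √(Real.log x))) := by
  obtain ⟨κ, hκ, C, hC, hs⟩ := shift
  set μ := √(κ / 6) with hμ
  have hμ0 : 0 < μ := Real.sqrt_pos.mpr (by positivity)
  have hμ2 : μ ^ 2 = κ / 6 := Real.sq_sqrt (by positivity)
  refine ⟨μ / 2, by positivity, C * (8 / μ ^ 2 + 1), by positivity, 2 / μ, by positivity, fun x hx hw N hN => ?_⟩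
  have hx0 : 0 < x := by linarith
  have hlx := (log_add_one_le hx).1
  set w := √(Real.log x) with hwd
  have hw2 : w ^ 2 = Real.log x := Real.sq_sqrt (by linarith)
  have hw0 : 0 < w := Real.sqrt_pos.mpr (by linarith)
  have hμw : 2 ≤ μ * w := by rw [div_le_iff₀ hμ0] at hw; linarith
  set T := Real.exp (μ * w) with hT
  have hT3 : 3 ≤ T := by
    have := Real.add_one_le_exp (μ * w); linarith
  have hlog : Real.log (T + 5) ≤ 2 * (μ * w) := by
    have : T + 5 ≤ T ^ 2 := by nlinarith
    have h2 := Real.log_le_log (by linarith) this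
    rw [Real.log_pow, hT, Real.log_exp] at h2
    exact_mod_cast h2
  have hlog0 : 0 < Real.log (T + 5) := Real.log_pos (by linarith)
  have hδ : 3 * μ / w ≤ κ / Real.log (T + 5) := by
    rw [div_le_div_iff₀ hw0 hlog0]
    have : κ = 6 * μ ^ 2 := by linarith
    rw [this]
    nlinarith
  have h1 := hs x T hx (by linarith) (by
    refine le_trans ?_ hδ
    rw [← hw2, div_le_div_iff₀ (by positivity) hw0]
    nlinarith) N hN
  have e1 : (∑ n ∈ Finset.range N, ArithmeticFunction.vonMangoldt n * max (x - n) 0) = x * ∑ n ∈ Finset.range N, ArithmeticFunction.vonMangoldt n * max (1 - n / x) 0 := by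
    rw [Finset.mul_sum]
    refine Finset.sum_congr rfl fun n _ => ?_
    have : max (x - n) 0 = x * max (1 - n / x) 0 := by
      rw [mul_max_of_nonneg _ _ hx0.le]
      congr 1
      · field_simp
      · simp
    rw [this]; ring
  have e2 : x * (∑ n ∈ Finset.range N, ArithmeticFunction.vonMangoldt n * max (1 - n / x) 0) - (x ^ 2 / 2 - x + 1 / 2) = x * ((∑ n ∈ Finset.range N, ArithmeticFunction.vonMangoldt n * max (1 - n / x) 0) - (x / 2 - 1 + 1 / (2 * x))) := by
    field_simp
  rw [e1, e2, abs_mul, abs_of_pos hx0]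
  have e3 : x ^ (-(κ / Real.log (T + 5))) * T ^ 2 ≤ Real.exp (-(μ * w)) := by
    rw [Real.rpow_def_of_pos hx0, hT, ← Real.exp_nat_mul, ← Real.exp_add]
    apply Real.exp_le_exp.mpr
    have : Real.log x * (3 * μ / w) ≤ Real.log x * (κ / Real.log (T + 5)) := by gcongr
    have h3 : Real.log x * (3 * μ / w) = 3 * (μ * w) := by
      rw [← hw2]; field_simp
    push_cast
    linarith
  have e4 : Real.log x / T = w ^ 2 * Real.exp (-(μ * w)) := by
    rw [hw2, Real.exp_neg, div_eq_mul_inv]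
  have e5 : w ^ 2 + 1 ≤ (8 / μ ^ 2 + 1) * Real.exp (μ / 2 * w) := by
    have h4 := Real.quadratic_le_exp_of_nonneg (x := μ / 2 * w) (by positivity)
    have h5 : 8 / μ ^ 2 * ((μ / 2 * w) ^ 2 / 2) = w ^ 2 := by field_simp; ring
    have h6 : 8 / μ ^ 2 * ((μ / 2 * w) ^ 2 / 2) ≤ 8 / μ ^ 2 * Real.exp (μ / 2 * w) := by
      gcongr
      have : 0 ≤ μ / 2 * w := by positivity
      linarith
    have h7 : 1 ≤ Real.exp (μ / 2 * w) := Real.one_le_exp (by positivity)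
    linarith
  calc _ ≤ x * (C * x * (w ^ 2 * Real.exp (-(μ * w)) + Real.exp (-(μ * w)))) := by
        rw [e4] at h1
        refine mul_le_mul_of_nonneg_left (h1.trans ?_) hx0.le
        gcongr
    _ = C * x ^ 2 * ((w ^ 2 + 1) * Real.exp (-(μ * w))) := by ring
    _ ≤ C * x ^ 2 * ((8 / μ ^ 2 + 1) * Real.exp (μ / 2 * w) * Real.exp (-(μ * w))) := by gcongr
    _ = _ := by
      rw [mul_assoc (8 / μ ^ 2 + 1), ← Real.exp_add]
      rw [show μ / 2 * w + -(μ * w) = -(μ / 2 * w) by ring]; ring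

lemma psi_range (x : ℝ) (N : ℕ) (hN : x + 1 ≤ N) (hx : 0 ≤ x) :
    Chebyshev.psi x = ∑ n ∈ Finset.range N, ArithmeticFunction.vonMangoldt n * (if (n:ℝ) ≤ x then 1 else 0) := by
  rw [Chebyshev.psi]
  simp only [mul_ite, mul_one, mul_zero]
  rw [← Finset.sum_filter]
  apply Finset.sum_subset_zero_on_sdiff
  · intro n hn
    simp only [Finset.mem_Ioc] at hn
    have h1 := (Nat.le_floor_iff hx).mp hn.2
    simp only [Finset.mem_filter, Finset.mem_range]
    refine ⟨?_, h1⟩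
    have : (n:ℝ) < N := by linarith
    exact_mod_cast this
  · intro n hn
    simp only [Finset.mem_sdiff, Finset.mem_filter, Finset.mem_range, Finset.mem_Ioc, not_and, not_le] at hn
    have h1 := Nat.le_floor hn.1.2
    have : n = 0 := by
      by_contra h
      exact absurd (hn.2 (Nat.pos_of_ne_zero h)) (by omega)
    rw [this]; simp
  · intros; rfl

lemma pnt_psi : ∃ ν > 0, ∃ K > 0, ∃ w0 > 0, ∀ x : ℝ, 6 ≤ x → w0 ≤ √(Real.log x) →
    |Chebyshev.psi x - x| ≤ K * x * Real.exp (-(ν * √(Real.log x))) := by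
  obtain ⟨ν, hν, K, hK, w0, hw0, h1⟩ := psi1
  refine ⟨ν / 4, by positivity, 16 * K + 2, by positivity, 2 * w0 + ν, by positivity, fun x hx hw => ?_⟩
  have hx0 : 0 < x := by linarith
  have hlx := (log_add_one_le (by linarith : 3 ≤ x)).1
  set w := √(Real.log x) with hwd
  have hw2 : w ^ 2 = Real.log x := Real.sq_sqrt (by linarith)
  have hwp : 0 < w := Real.sqrt_pos.mpr (by linarith)
  set G := Real.exp (-(ν / 4 * w)) with hG
  have hG0 : 0 < G := Real.exp_pos _
  have hG1 : G ≤ 1 := Real.exp_le_one_iff.mpr (by have : 0 < ν / 4 * w := by positivity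
                                                  linarith)
  set N := ⌈2 * x⌉₊ + 1 with hNd
  have hN : 2 * x + 1 ≤ N := by
    rw [hNd]; push_cast; linarith [Nat.le_ceil (2 * x)]
  set F : ℝ → ℝ := fun y => ∑ n ∈ Finset.range N, ArithmeticFunction.vonMangoldt n * max (y - n) 0 with hF
  have hFb : ∀ y, x / 2 ≤ y → y ≤ 2 * x → |F y - (y ^ 2 / 2 - y + 1 / 2)| ≤ 4 * K * x ^ 2 * G ^ 2 := by
    intro y hy1 hy2
    have hly : w / 2 ≤ √(Real.log y) := by
      apply Real.le_sqrt_of_sq_le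
      rw [div_pow, hw2]
      have : Real.log (x / 2) ≤ Real.log y := Real.log_le_log (by linarith) hy1
      rw [Real.log_div hx0.ne' (by norm_num)] at this
      have := Real.log_two_lt_d9
      linarith
    have := h1 y (by linarith) (by linarith) N (by linarith)
    refine this.trans ?_
    have g2 : Real.exp (-(ν * √(Real.log y))) ≤ G ^ 2 := by
      rw [hG, ← Real.exp_nat_mul]
      apply Real.exp_le_exp.mpr
      push_cast
      nlinarith
    calc _ ≤ K * (2 * x) ^ 2 * G ^ 2 := by
          gcongr
          linarith
      _ = _ := by ring
  set h := x / 2 * G with hh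
  have hh0 : 0 < h := by positivity
  have hhx : h ≤ x / 2 := by rw [hh]; nlinarith
  have hp := psi_range x N (by linarith) hx0.le
  have up : h * Chebyshev.psi x ≤ F (x + h) - F x := by
    rw [hp, hF, Finset.mul_sum, ← Finset.sum_sub_distrib]
    apply Finset.sum_le_sum
    intro n _
    have hL : 0 ≤ ArithmeticFunction.vonMangoldt n := ArithmeticFunction.vonMangoldt_nonneg
    have : h * (if (n:ℝ) ≤ x then 1 else 0) ≤ max (x + h - n) 0 - max (x - n) 0 := by
      split_ifs with hc
      · rw [max_eq_left (by linarith), max_eq_left (by linarith)]; linarith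
      · rw [max_eq_right (a := x - n) (by linarith)]; simp
    calc _ = ArithmeticFunction.vonMangoldt n * (h * (if (n:ℝ) ≤ x then 1 else 0)) := by ring
      _ ≤ ArithmeticFunction.vonMangoldt n * (max (x + h - n) 0 - max (x - n) 0) := by gcongr
      _ = _ := by ring
  have lo : F x - F (x - h) ≤ h * Chebyshev.psi x := by
    rw [hp, hF, Finset.mul_sum, ← Finset.sum_sub_distrib]
    apply Finset.sum_le_sum
    intro n _
    have hL : 0 ≤ ArithmeticFunction.vonMangoldt n := ArithmeticFunction.vonMangoldt_nonneg
    have : max (x - n) 0 - max (x - h - n) 0 ≤ h * (if (n:ℝ) ≤ x then 1 else 0) := by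
      split_ifs with hc
      · rw [max_eq_left (a := x - n) (by linarith)]
        have := le_max_left (x - h - n) 0
        linarith
      · rw [max_eq_right (a := x - n) (by linarith)]; simp
    calc _ = ArithmeticFunction.vonMangoldt n * (max (x - n) 0 - max (x - h - n) 0) := by ring
      _ ≤ ArithmeticFunction.vonMangoldt n * (h * (if (n:ℝ) ≤ x then 1 else 0)) := by gcongr
      _ = _ := by ring
  have b1 := abs_le.mp (hFb (x + h) (by linarith) (by linarith))
  have b2 := abs_le.mp (hFb x (by linarith) (by linarith))
  have b3 := abs_le.mp (hFb (x - h) (by linarith) (by linarith))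
  have k1 : 4 * K * x ^ 2 * G ^ 2 = h * (8 * K * x * G) := by rw [hh]; ring
  rw [k1] at b1 b2 b3
  have xG : 1 ≤ x * G := by
    have : x = Real.exp (w ^ 2) := by rw [hw2, Real.exp_log hx0]
    rw [this, hG, ← Real.exp_add]
    apply Real.one_le_exp
    nlinarith
  have hg : (16 * K + 2) * x * G = 2 * (8 * K * x * G) + 2 * (x * G) := by ring
  rw [hg]
  have hhe : h = (x * G) / 2 := by rw [hh]; ring
  rw [abs_le]
  constructor
  · have : h * (x - h / 2 - 1 - 2 * (8 * K * x * G)) ≤ h * Chebyshev.psi x := by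
      nlinarith
    have := le_of_mul_le_mul_left this hh0
    linarith
  · have : h * Chebyshev.psi x ≤ h * (x + h / 2 - 1 + 2 * (8 * K * x * G)) := by
      nlinarith
    have := le_of_mul_le_mul_left this hh0
    linarith

lemma pnt_theta : ∃ ν > 0, ∃ K > 0, ∃ w0 > 0, ∀ x : ℝ, 6 ≤ x → w0 ≤ √(Real.log x) →
    |Chebyshev.theta x - x| ≤ K * x * Real.exp (-(ν * √(Real.log x))) := by
  obtain ⟨ν, hν, K, hK, w0, hw0, h1⟩ := pnt_psi
  refine ⟨ν, hν, K + 4, by positivity, w0 + 2 * (ν + 1), by positivity, fun x hx hw => ?_⟩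
  have hx0 : 0 < x := by linarith
  have hlx := (log_add_one_le (by linarith : 3 ≤ x)).1
  have h2 := h1 x hx (by linarith)
  have h3 := Chebyshev.psi_sub_theta_le (x := x) (by linarith)
  have h4 := Chebyshev.theta_le_psi x
  set w := √(Real.log x) with hwd
  have hw2 : w ^ 2 = Real.log x := Real.sq_sqrt (by linarith)
  have hwp : 0 < w := Real.sqrt_pos.mpr (by linarith)
  have h5 : 2 * √x * Real.log x ≤ 4 * x * Real.exp (-(ν * w)) := by
    have hxe : x = Real.exp (w ^ 2) := by rw [hw2, Real.exp_log hx0]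
    have hse : √x = Real.exp (w ^ 2 / 2) := by
      rw [Real.sqrt_eq_iff_mul_self_eq hx0.le (Real.exp_pos _).le, ← Real.exp_add, hxe]; congr 1; ring
    have q := Real.quadratic_le_exp_of_nonneg hwp.le
    have q2 : w ^ 2 ≤ 2 * Real.exp w := by linarith
    rw [← hw2]
    have m : Real.exp (w ^ 2 / 2) * Real.exp w ≤ x * Real.exp (-(ν * w)) := by
      rw [hxe, ← Real.exp_add, ← Real.exp_add]
      apply Real.exp_le_exp.mpr
      nlinarith
    calc 2 * √x * w ^ 2 ≤ 2 * √x * (2 * Real.exp w) := by gcongr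
      _ = 4 * (Real.exp (w ^ 2 / 2) * Real.exp w) := by rw [hse]; ring
      _ ≤ 4 * (x * Real.exp (-(ν * w))) := by gcongr
      _ = _ := by ring
  have hg : (K + 4) * x * Real.exp (-(ν * w)) = K * x * Real.exp (-(ν * w)) + 4 * x * Real.exp (-(ν * w)) := by ring
  rw [hg]
  rw [abs_le] at h2 ⊢
  constructor <;> linarith [h2.1, h2.2]
end St10

namespace St10

noncomputable def fe (c x t : ℝ) : ℂ := e (t ^ c * x)
noncomputable def fd (c x t : ℝ) : ℂ := (2 * Real.pi * Complex.I * x * c) * ((t ^ (c - 1) : ℝ) : ℂ) * fe c x t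

lemma fe_deriv (c x t : ℝ) (ht : 0 < t) : HasDerivAt (fe c x) (fd c x t) t := by
  have h1 : HasDerivAt (fun u : ℝ => u ^ c * x) (c * t ^ (c - 1) * x) t :=
    (Real.hasDerivAt_rpow_const (Or.inl ht.ne')).mul_const x
  have h2 := ((h1.ofReal_comp).const_mul (2 * Real.pi * Complex.I)).cexp
  unfold fd fe e
  convert h2 using 1
  push_cast; ring

lemma fe_cont (c x : ℝ) : ContinuousOn (fe c x) (Set.Ioi 0) := fun t ht =>
  (fe_deriv c x t ht).continuousAt.continuousWithinAt

lemma fd_cont (c x : ℝ) : ContinuousOn (fd c x) (Set.Ioi 0) := by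
  unfold fd
  refine ContinuousOn.mul (ContinuousOn.mul continuousOn_const ?_) (fe_cont c x)
  refine Complex.continuous_ofReal.comp_continuousOn ?_
  exact ContinuousOn.rpow_const continuousOn_id (fun t ht => Or.inl (ne_of_gt ht))

lemma norm_fe (c x t : ℝ) : ‖fe c x t‖ = 1 := norm_e _

lemma norm_fd (c x t : ℝ) (hc : 0 < c) (ht : 0 < t) : ‖fd c x t‖ = 2 * Real.pi * |x| * c * t ^ (c - 1) := by
  unfold fd
  rw [norm_mul, norm_fe, norm_mul, Complex.norm_real, norm_mul, norm_mul, norm_mul, norm_mul]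
  simp only [Complex.norm_real, Complex.norm_I, Complex.norm_ofNat, Real.norm_eq_abs]
  rw [abs_of_pos Real.pi_pos, abs_of_pos hc, abs_of_pos (Real.rpow_pos_of_pos ht _)]
  ring

lemma uIcc_pos {X : ℝ} (hX : 0 < X) : Set.uIcc (X / 2) X ⊆ Set.Ioi 0 := by
  rw [Set.uIcc_of_le (by linarith)]
  intro t ht
  exact lt_of_lt_of_le (by linarith) ht.1

lemma I_bound (c : ℝ) (hc : 1 < c) : ∃ C > 0, ∀ X x : ℝ, 0 < X → x ≠ 0 →
    ‖I X c x‖ ≤ C * (X / (|x| * X ^ c)) := by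
  refine ⟨(c + 1) * 2 ^ (c - 1), by positivity, fun X x hX hx => ?_⟩
  have hpos := uIcc_pos hX
  have hb := intervalIntegral.integral_mul_deriv_eq_deriv_mul (a := X / 2) (b := X)
    (u := fun t : ℝ => ((t ^ (1 - c) : ℝ) : ℂ)) (u' := fun t : ℝ => (((1 - c) * t ^ (1 - c - 1) : ℝ) : ℂ))
    (v := fe c x) (v' := fd c x)
    (fun t ht => (Real.hasDerivAt_rpow_const (Or.inl (ne_of_gt (hpos ht)))).ofReal_comp)
    (fun t ht => fe_deriv c x t (hpos ht))
    (ContinuousOn.intervalIntegrable (Complex.continuous_ofReal.comp_continuousOn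
      (continuousOn_const.mul (ContinuousOn.rpow_const continuousOn_id (fun t ht => Or.inl (ne_of_gt (hpos ht)))))))
    (((fd_cont c x).mono hpos).intervalIntegrable)
  have e1 : ∫ t in (X/2)..X, ((t ^ (1 - c) : ℝ) : ℂ) * fd c x t = (2 * Real.pi * Complex.I * x * c) * I X c x := by
    unfold I
    rw [← intervalIntegral.integral_const_mul]
    apply intervalIntegral.integral_congr
    intro t ht
    have ht0 : 0 < t := hpos ht
    have : ((t ^ (1 - c) : ℝ) : ℂ) * ((t ^ (c - 1) : ℝ) : ℂ) = 1 := by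
      rw [← Complex.ofReal_mul, ← Real.rpow_add ht0]; simp
    simp only [fd, fe]
    linear_combination (2 * Real.pi * Complex.I * x * c) * e (t ^ c * x) * this
  have e2 : ‖∫ t in (X/2)..X, (((1 - c) * t ^ (1 - c - 1) : ℝ) : ℂ) * fe c x t‖ ≤ ((c - 1) * (X/2) ^ (-c)) * |X - X/2| := by
    apply intervalIntegral.norm_integral_le_of_norm_le_const
    intro t ht
    rw [Set.uIoc_of_le (by linarith)] at ht
    have ht0 : 0 < t := by linarith [ht.1]
    rw [norm_mul, norm_fe, mul_one, Complex.norm_real, norm_mul, Real.norm_eq_abs, Real.norm_eq_abs, abs_of_neg (by linarith),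
      abs_of_pos (Real.rpow_pos_of_pos ht0 _), show 1 - c - 1 = -c by ring]
    have : t ^ (-c) ≤ (X/2) ^ (-c) := Real.rpow_le_rpow_of_nonpos (by linarith) ht.1.le (by linarith)
    have h0 : 0 ≤ c - 1 := by linarith
    calc _ = (c - 1) * t ^ (-c) := by ring
      _ ≤ _ := by gcongr
  have e3 : ((c - 1) * (X/2) ^ (-c)) * |X - X/2| = (c - 1) * (X/2) ^ (1 - c) := by
    rw [abs_of_pos (by linarith), show 1 - c = -c + 1 by ring, Real.rpow_add (by linarith), Real.rpow_one]; ring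
  rw [e3] at e2
  have n1 : ‖((X ^ (1 - c) : ℝ) : ℂ) * fe c x X‖ ≤ (X/2) ^ (1 - c) := by
    rw [norm_mul, norm_fe, mul_one, Complex.norm_real, Real.norm_of_nonneg (by positivity)]
    exact Real.rpow_le_rpow_of_nonpos (by linarith) (by linarith) (by linarith)
  have n2 : ‖(((X/2) ^ (1 - c) : ℝ) : ℂ) * fe c x (X/2)‖ ≤ (X/2) ^ (1 - c) := by
    rw [norm_mul, norm_fe, mul_one, Complex.norm_real, Real.norm_of_nonneg (by positivity)]
  have key : ‖(2 * Real.pi * Complex.I * x * c : ℂ)‖ * ‖I X c x‖ ≤ (c + 1) * (X/2) ^ (1 - c) := by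
    rw [← norm_mul, ← e1, hb]
    refine (norm_sub_le _ _).trans ?_
    have := norm_sub_le (((X ^ (1 - c) : ℝ) : ℂ) * fe c x X) ((((X/2) ^ (1 - c) : ℝ) : ℂ) * fe c x (X/2))
    linarith
  have nc : |x| ≤ ‖(2 * Real.pi * Complex.I * x * c : ℂ)‖ := by
    simp only [norm_mul, Complex.norm_real, Complex.norm_I, Complex.norm_ofNat, Real.norm_eq_abs]
    rw [abs_of_pos Real.pi_pos, abs_of_pos (by linarith : 0 < c)]
    have := Real.pi_gt_three
    have hx0 := abs_nonneg x
    have : 1 ≤ 2 * Real.pi * c := by nlinarith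
    nlinarith
  have hx0 : 0 < |x| := abs_pos.mpr hx
  have k2 : |x| * ‖I X c x‖ ≤ (c + 1) * (X/2) ^ (1 - c) := le_trans (by gcongr) key
  have k3 : (X/2) ^ (1 - c) = 2 ^ (c - 1) * (X / X ^ c) := by
    rw [Real.div_rpow hX.le (by norm_num), Real.rpow_sub hX, Real.rpow_one, show (c - 1) = -(1 - c) by ring, Real.rpow_neg (by norm_num)]
    field_simp
  rw [k3] at k2
  have hXc : 0 < X ^ c := by positivity
  calc ‖I X c x‖ = (|x| * ‖I X c x‖) / |x| := by field_simp
    _ ≤ ((c + 1) * (2 ^ (c - 1) * (X / X ^ c))) / |x| := by gcongr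
    _ = _ := by field_simp

lemma S_abel (c x X : ℝ) (hX : 2 ≤ X) : S X c x = fe c x X * Chebyshev.theta X - fe c x (X/2) * Chebyshev.theta (X/2)
    - ∫ t in (X/2)..X, fd c x t * Chebyshev.theta t := by
  have hX0 : 0 < X := by linarith
  set a : ℕ → ℂ := fun k => if k.Prime then (Real.log k : ℂ) else 0 with ha
  have hth : ∀ t : ℝ, ∑ k ∈ Finset.Icc 0 ⌊t⌋₊, a k = Chebyshev.theta t := by
    intro t
    rw [Chebyshev.theta_eq_sum_Icc, Finset.sum_filter]
    push_cast
    refine Finset.sum_congr rfl fun k _ => ?_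
    by_cases hk : k.Prime <;> simp [ha, hk]
  have hpos := uIcc_pos hX0
  rw [Set.uIcc_of_le (by linarith)] at hpos
  have hdq : ∀ t ∈ Set.Icc (X/2) X, deriv (fe c x) t = fd c x t := fun t ht => (fe_deriv c x t (hpos ht)).deriv
  have h := sum_mul_eq_sub_sub_integral_mul (f := fe c x) a (a := X/2) (b := X) (by linarith) (by linarith)
    (fun t ht => (fe_deriv c x t (hpos ht)).differentiableAt)
    (((fd_cont c x).mono hpos).integrableOn_Icc.congr_fun (fun t ht => (hdq t ht).symm) measurableSet_Icc)
  rw [hth, hth] at h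
  rw [intervalIntegral.integral_of_le (by linarith)]
  have h2 : ∫ t in Set.Ioc (X/2) X, fd c x t * Chebyshev.theta t = ∫ t in Set.Ioc (X/2) X, deriv (fe c x) t * ∑ k ∈ Finset.Icc 0 ⌊t⌋₊, a k := by
    apply setIntegral_congr_fun measurableSet_Ioc
    intro t ht
    simp only
    rw [hth, hdq t ⟨ht.1.le, ht.2⟩]
  rw [h2, ← h]
  unfold S
  rw [ha]
  simp only [mul_ite, mul_zero]
  rw [← Finset.sum_filter]
  refine Finset.sum_congr ?_ fun k hk => ?_
  · ext k
    simp only [Finset.mem_filter, Finset.mem_range, Finset.mem_Ioc]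
    rw [Nat.floor_lt (by linarith), Nat.le_floor_iff hX0.le]
    constructor
    · rintro ⟨_, h1, h2, h3⟩; exact ⟨⟨h2, h3⟩, h1⟩
    · rintro ⟨⟨h2, h3⟩, h1⟩
      refine ⟨?_, h1, h2, h3⟩
      have : (k:ℝ) < ⌈X⌉₊ + 1 := by linarith [Nat.le_ceil X]
      exact_mod_cast this
  · unfold fe; ring

lemma I_parts (c x X : ℝ) (hX : 0 < X) : I X c x = fe c x X * X - fe c x (X/2) * (X/2 : ℝ)
    - ∫ t in (X/2)..X, fd c x t * (t : ℂ) := by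
  have hpos := uIcc_pos hX
  have hb := intervalIntegral.integral_mul_deriv_eq_deriv_mul (a := X / 2) (b := X)
    (u := fe c x) (u' := fd c x) (v := fun t : ℝ => (t:ℂ)) (v' := fun _ => 1)
    (fun t ht => fe_deriv c x t (hpos ht))
    (fun t ht => Complex.ofRealCLM.hasDerivAt)
    (((fd_cont c x).mono hpos).intervalIntegrable)
    (continuous_const.intervalIntegrable _ _)
  rw [← hb]
  unfold I fe
  simp

lemma small_case (c x X D : ℝ) (hc : 1 < c) (hX : 2 ≤ X) (hD : ∀ t ∈ Set.Icc (X/2) X, |Chebyshev.theta t - t| ≤ D) :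
    ‖S X c x - I X c x‖ ≤ D * (2 + Real.pi * c * (|x| * X ^ c)) := by
  have hX0 : 0 < X := by linarith
  have hpos := uIcc_pos hX0
  have hD0 : 0 ≤ D := (abs_nonneg _).trans (hD X ⟨by linarith, le_refl _⟩)
  have hfd : IntervalIntegrable (fd c x) volume (X/2) X := (((fd_cont c x).mono hpos).intervalIntegrable)
  have i1 : IntervalIntegrable (fun t => fd c x t * Chebyshev.theta t) volume (X/2) X := by
    have hm : IntervalIntegrable (fun t => ((Chebyshev.theta t : ℝ) : ℂ)) volume (X/2) X :=
      ⟨(Chebyshev.theta_mono.intervalIntegrable).1.ofReal, (Chebyshev.theta_mono.intervalIntegrable).2.ofReal⟩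
    exact hm.continuousOn_mul ((fd_cont c x).mono hpos)
  have i2 : IntervalIntegrable (fun t => fd c x t * (t : ℂ)) volume (X/2) X :=
    (((fd_cont c x).mul Complex.continuous_ofReal.continuousOn).mono hpos).intervalIntegrable
  have key : S X c x - I X c x = fe c x X * ((Chebyshev.theta X - X : ℝ) : ℂ) - fe c x (X/2) * ((Chebyshev.theta (X/2) - X/2 : ℝ) : ℂ)
      - ∫ t in (X/2)..X, fd c x t * ((Chebyshev.theta t - t : ℝ) : ℂ) := by
    rw [S_abel c x X hX, I_parts c x X hX0]
    have : ∫ t in (X/2)..X, fd c x t * ((Chebyshev.theta t - t : ℝ) : ℂ) = (∫ t in (X/2)..X, fd c x t * Chebyshev.theta t) - ∫ t in (X/2)..X, fd c x t * (t : ℂ) := by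
      rw [← intervalIntegral.integral_sub i1 i2]
      congr 1; ext t; push_cast; ring
    rw [this]; push_cast; ring
  have b1 : ‖fe c x X * ((Chebyshev.theta X - X : ℝ) : ℂ)‖ ≤ D := by
    rw [norm_mul, norm_fe, one_mul, Complex.norm_real]
    exact hD X ⟨by linarith, le_refl _⟩
  have b2 : ‖fe c x (X/2) * ((Chebyshev.theta (X/2) - X/2 : ℝ) : ℂ)‖ ≤ D := by
    rw [norm_mul, norm_fe, one_mul, Complex.norm_real]
    exact hD (X/2) ⟨le_refl _, by linarith⟩
  have b3 : ‖∫ t in (X/2)..X, fd c x t * ((Chebyshev.theta t - t : ℝ) : ℂ)‖ ≤ (2 * Real.pi * |x| * c * X ^ (c - 1) * D) * |X - X/2| := by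
    apply intervalIntegral.norm_integral_le_of_norm_le_const
    intro t ht
    rw [Set.uIoc_of_le (by linarith)] at ht
    have ht0 : 0 < t := by linarith [ht.1]
    rw [norm_mul, norm_fd c x t (by linarith) ht0, Complex.norm_real]
    have := hD t ⟨ht.1.le, ht.2⟩
    rw [Real.norm_eq_abs]
    have p : t ^ (c - 1) ≤ X ^ (c - 1) := Real.rpow_le_rpow ht0.le ht.2 (by linarith)
    have := Real.pi_pos
    gcongr
  have e3 : (2 * Real.pi * |x| * c * X ^ (c - 1) * D) * |X - X/2| = D * (Real.pi * c * (|x| * X ^ c)) := by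
    rw [abs_of_pos (by linarith : 0 < X - X / 2)]
    have : X ^ c = X ^ (c - 1) * X := by
      rw [← Real.rpow_add_one hX0.ne']; congr 1; ring
    rw [this]; ring
  rw [e3] at b3
  rw [key]
  refine (norm_sub_le _ _).trans ?_
  have := norm_sub_le (fe c x X * ((Chebyshev.theta X - X : ℝ) : ℂ)) (fe c x (X/2) * ((Chebyshev.theta (X/2) - X/2 : ℝ) : ℂ))
  linarith

lemma S_vs_psi (c x X : ℝ) (hX : 2 ≤ X) :
    ‖S X c x - ∑ n ∈ J X 1, (ArithmeticFunction.vonMangoldt n : ℂ) * phi c x n‖ ≤ 2 * √X * Real.log X := by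
  have hX0 : 0 < X := by linarith
  have e1 : S X c x = ∑ n ∈ J X 1, (if n.Prime then (ArithmeticFunction.vonMangoldt n : ℂ) * phi c x n else 0) := by
    unfold S
    rw [← Finset.sum_filter]
    refine Finset.sum_congr ?_ fun k hk => ?_
    · ext k
      simp only [Finset.mem_filter, Finset.mem_range]
      rw [mem_J hX0.le (by norm_num)]
      push_cast
      rw [one_mul]
      constructor
      · rintro ⟨_, h1, h2, h3⟩; exact ⟨⟨h2, h3⟩, h1⟩
      · rintro ⟨⟨h2, h3⟩, h1⟩
        refine ⟨?_, h1, h2, h3⟩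
        have : (k:ℝ) < ⌈X⌉₊ + 1 := by linarith [Nat.le_ceil X]
        exact_mod_cast this
    · have : k.Prime := (Finset.mem_filter.mp hk).2
      rw [ArithmeticFunction.vonMangoldt_apply_prime this, phi, mul_comm x]
  rw [e1, ← Finset.sum_sub_distrib]
  refine (norm_sum_le _ _).trans ((?_ : _ ≤ Chebyshev.psi X - Chebyshev.theta X).trans (Chebyshev.psi_sub_theta_le (by linarith)))
  rw [Chebyshev.psi_sub_theta_eq_sum_not_prime, Finset.sum_filter]
  calc _ ≤ ∑ n ∈ J X 1, (if ¬ n.Prime then ArithmeticFunction.vonMangoldt n else 0) := by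
        apply Finset.sum_le_sum
        intro n _
        by_cases h : n.Prime
        · simp [h]
        · simp [h, norm_phi, abs_of_nonneg ArithmeticFunction.vonMangoldt_nonneg]
    _ ≤ _ := by
        apply Finset.sum_le_sum_of_subset_of_nonneg
        · intro n hn
          rw [mem_J hX0.le (by norm_num)] at hn
          push_cast at hn
          rw [one_mul] at hn
          rw [Finset.mem_Ioc]
          refine ⟨?_, Nat.le_floor hn.2⟩
          have : (0:ℝ) < n := by linarith
          exact_mod_cast this
        · intros
          split_ifs
          · exact le_refl _
          · exact ArithmeticFunction.vonMangoldt_nonneg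
end St10

namespace St10

lemma case_small (c : ℝ) (hc : 1 < c) : ∃ C > 0, ∃ M > 0, ∀ z x X : ℝ, M ≤ z → X = Real.exp (z ^ 20) →
    |x| * X ^ c ≤ Real.exp (z ^ 5) → ‖S X c x - I X c x‖ ≤ C * X * Real.exp (-z ^ 4) := by
  obtain ⟨ν, hν, K, hK, w0, hw0, hpnt⟩ := pnt_theta
  refine ⟨K * (2 + Real.pi * c), by positivity, 12 + 4 / ν + 2 * w0, by positivity, fun z x X hz hX hT => ?_⟩
  have hν4 : 0 < 4 / ν := by positivity
  have hz12 : 12 ≤ z := by linarith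
  have hp : ∀ n : ℕ, n ≠ 0 → z ≤ z ^ n := fun n hn => le_self_pow₀ (by linarith) hn
  have hX12 : 12 ≤ X := by
    rw [hX]; have := Real.add_one_le_exp (z ^ 20); have := hp 20 (by norm_num); linarith
  have hX0 : 0 < X := by linarith
  have hlX : Real.log X = z ^ 20 := by rw [hX, Real.log_exp]
  have hb := small_case c x X (K * X * Real.exp (-(ν / 2 * z ^ 10))) hc (by linarith) (by
    intro t ht
    have hly : z ^ 10 / 2 ≤ √(Real.log t) := by
      apply Real.le_sqrt_of_sq_le
      have : Real.log (X / 2) ≤ Real.log t := Real.log_le_log (by linarith) ht.1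
      rw [Real.log_div hX0.ne' (by norm_num), hlX] at this
      have := Real.log_two_lt_d9
      have := hp 20 (by norm_num)
      nlinarith
    have h10 := hp 10 (by norm_num)
    refine (hpnt t (by linarith [ht.1]) (by linarith)).trans ?_
    have ht2 := ht.2
    have : -(ν * √(Real.log t)) ≤ -(ν / 2 * z ^ 10) := by nlinarith
    gcongr)
  refine hb.trans ?_
  have h1 : 2 + Real.pi * c * (|x| * X ^ c) ≤ (2 + Real.pi * c) * Real.exp (z ^ 5) := by
    have : 1 ≤ Real.exp (z ^ 5) := Real.one_le_exp (by positivity)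
    have : Real.pi * c * (|x| * X ^ c) ≤ Real.pi * c * Real.exp (z ^ 5) := by
      have := Real.pi_pos
      gcongr
    linarith
  have h2 : Real.exp (-(ν / 2 * z ^ 10)) * Real.exp (z ^ 5) ≤ Real.exp (-z ^ 4) := by
    rw [← Real.exp_add]
    apply Real.exp_le_exp.mpr
    have a1 : z ^ 4 ≤ z ^ 5 := pow_le_pow_right₀ (by linarith) (by norm_num)
    have a2 : 4 ≤ ν * z ^ 5 := by
      have := hp 5 (by norm_num)
      have : 4 / ν ≤ z ^ 5 := by linarith
      rw [div_le_iff₀ hν] at this; linarith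
    have a3 : 4 * z ^ 5 ≤ ν * z ^ 5 * z ^ 5 := by gcongr
    have a4 : ν * z ^ 5 * z ^ 5 = ν * z ^ 10 := by ring
    linarith
  calc _ ≤ K * X * Real.exp (-(ν / 2 * z ^ 10)) * ((2 + Real.pi * c) * Real.exp (z ^ 5)) := by gcongr
    _ = K * (2 + Real.pi * c) * X * (Real.exp (-(ν / 2 * z ^ 10)) * Real.exp (z ^ 5)) := by ring
    _ ≤ _ := by gcongr

set_option maxHeartbeats 1600000 in
lemma case_large (c η : ℝ) (hc : 1 < c) (hη : 0 < η) (hη1 : η < 1) : ∃ C > 0, ∃ M > 0, ∀ z x X : ℝ, M ≤ z → X = Real.exp (z ^ 20) →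
    Real.exp (z ^ 5) < |x| * X ^ c → |x| ≤ X ^ (1 - c - η) → ‖S X c x - I X c x‖ ≤ C * X * Real.exp (-z ^ 4) := by
  obtain ⟨C, hC, hV⟩ := vaughan_bound c hc
  obtain ⟨K, hK, hI⟩ := I_bound c hc
  refine ⟨4 * C + 2 + K, by positivity, 12 + 2 / η, by positivity, fun z x X hz hX hT hx => ?_⟩
  have hη2 : 0 < 2 / η := by positivity
  have hz12 : 12 ≤ z := by linarith
  have hp : ∀ n : ℕ, n ≠ 0 → z ≤ z ^ n := fun n hn => le_self_pow₀ (by linarith) hn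
  have hX12 : 12 ≤ X := by
    rw [hX]; have := Real.add_one_le_exp (z ^ 20); have := hp 20 (by norm_num); linarith
  have hX0 : 0 < X := by linarith
  have hlX : Real.log X = z ^ 20 := by rw [hX, Real.log_exp]
  have hx0 : x ≠ 0 := by
    rintro rfl
    simp at hT
    linarith [Real.exp_pos (z ^ 5)]
  set T := |x| * X ^ c with hTd
  have hT0 : 0 < T := (Real.exp_pos _).trans hT
  have hXr : ∀ a : ℝ, X ^ a = Real.exp (a * z ^ 20) := fun a => by
    rw [Real.rpow_def_of_pos hX0, hlX, mul_comm]
  have hTX : T ≤ Real.exp ((1 - η) * z ^ 20) := by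
    rw [← hXr, show 1 - η = (1 - c - η) + c by ring, Real.rpow_add hX0, hTd]
    gcongr
  set r := √T with hr
  have hr1 : r ≤ Real.exp ((1 - η) / 2 * z ^ 20) := by
    rw [hr, Real.sqrt_le_left (Real.exp_pos _).le, ← Real.exp_nat_mul]
    refine hTX.trans_eq (congrArg Real.exp ?_)
    push_cast; ring
  have hr2 : Real.exp (z ^ 5 / 2) ≤ r := by
    apply Real.le_sqrt_of_sq_le
    rw [← Real.exp_nat_mul]
    refine le_of_eq_of_le (congrArg Real.exp ?_) hT.le
    push_cast; ring
  have hr0 : 0 < r := (Real.exp_pos _).trans_le hr2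
  set p := Real.exp (-(z ^ 5 / 4)) with hpd
  have hp0 : 0 < p := Real.exp_pos _
  have hp1 : p ≤ 1 := Real.exp_le_one_iff.mpr (by have : 0 < z ^ 5 / 4 := by positivity
                                                  linarith)
  have hq : p ^ 2 = Real.exp (-(z ^ 5 / 2)) := by
    rw [hpd, ← Real.exp_nat_mul]; congr 1; push_cast; ring
  have hpp : p ^ 2 ≤ p := by nlinarith
  have hrinv : 1 / r ≤ p ^ 2 := by
    rw [hq, Real.exp_neg, one_div]
    exact inv_anti₀ (Real.exp_pos _) hr2
  have hz15 : 2 ≤ η * z ^ 15 := by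
    have := hp 15 (by norm_num)
    have : 2 / η ≤ z ^ 15 := by linarith
    rw [div_le_iff₀ hη] at this; linarith
  have hz20 : 2 * z ^ 5 ≤ η * z ^ 20 := by
    have : 2 * z ^ 5 ≤ η * z ^ 15 * z ^ 5 := by gcongr
    have h4 : η * z ^ 15 * z ^ 5 = η * z ^ 20 := by ring
    linarith
  have hXη : Real.exp (-(η / 4 * z ^ 20)) ≤ p ^ 2 := by
    rw [hq]; apply Real.exp_le_exp.mpr; linarith
  have hz20' : z ^ 5 ≤ z ^ 20 := pow_le_pow_right₀ (by linarith) (by norm_num)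
  have h20 := hp 20 (by norm_num)
  have hV1 := hV X x (X ^ (η / 4)) (X ^ (1 / 2 - η / 4)) (by linarith) hx0
    (Real.one_le_rpow (by linarith) (by linarith))
    (by
      rw [hXr]
      have := Real.add_one_le_exp ((1 / 2 - η / 4) * z ^ 20)
      nlinarith)
    (by
      rw [← Real.rpow_add hX0, hXr, show X = Real.exp (z ^ 20 / 2) * Real.exp (z ^ 20 / 2) by rw [hX, ← Real.exp_add]; congr 1; ring]
      rw [show (η / 4 + (1 / 2 - η / 4)) * z ^ 20 = z ^ 20 / 2 by ring]
      have := Real.add_one_le_exp (z ^ 20 / 2)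
      nlinarith [Real.exp_pos (z ^ 20 / 2)])
  have huv : X ^ (η / 4) * X ^ (1 / 2 - η / 4) * r ≤ X * p ^ 2 := by
    rw [← Real.rpow_add hX0, hXr]
    calc _ ≤ Real.exp ((η / 4 + (1 / 2 - η / 4)) * z ^ 20) * Real.exp ((1 - η) / 2 * z ^ 20) := by gcongr
      _ = X * Real.exp (-(η / 2 * z ^ 20)) := by
        rw [hX, ← Real.exp_add, ← Real.exp_add]; congr 1; ring
      _ ≤ X * p ^ 2 := by
        rw [hq]
        gcongr
        nlinarith
  have hu : 1 / X ^ (η / 4) ≤ p ^ 2 := by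
    rw [hXr, one_div, ← Real.exp_neg]; exact hXη
  have hv : r / X ^ (1 / 2 - η / 4) ≤ p ^ 2 := by
    rw [hXr]
    calc _ ≤ Real.exp ((1 - η) / 2 * z ^ 20) / Real.exp ((1 / 2 - η / 4) * z ^ 20) := by gcongr
      _ = Real.exp (-(η / 4 * z ^ 20)) := by rw [← Real.exp_sub]; congr 1; ring
      _ ≤ _ := hXη
  have hsq : √(1 / X ^ (η / 4) + r / X ^ (1 / 2 - η / 4) + 1 / r) ≤ 2 * p := by
    rw [Real.sqrt_le_left (by positivity)]
    nlinarith
  have hXr2 : X / r ≤ X * p ^ 2 := by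
    rw [div_eq_mul_one_div]; gcongr
  have hXp : X * p ^ 2 ≤ X * p := by gcongr
  have hV2 : ‖∑ n ∈ J X 1, (ArithmeticFunction.vonMangoldt n : ℂ) * phi c x n‖ ≤ 4 * C * X * ((z ^ 20) ^ 2 * p) := by
    refine hV1.trans ?_
    rw [hlX]
    calc _ ≤ C * (z ^ 20) ^ 2 * (X * p + X * p + X * (2 * p)) := by
          refine mul_le_mul_of_nonneg_left (add_le_add (add_le_add (huv.trans hXp) (hXr2.trans hXp)) (mul_le_mul_of_nonneg_left hsq hX0.le)) (by positivity)
      _ = _ := by ring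
  have hS := S_vs_psi c x X (by linarith)
  rw [hlX] at hS
  have hz1 : 1 ≤ z ^ 20 := by linarith
  have hsX : √X ≤ X * p := by
    have : √X = X * Real.exp (-(z ^ 20 / 2)) := by
      rw [Real.sqrt_eq_iff_mul_self_eq hX0.le (by positivity)]
      have : X * Real.exp (-(z ^ 20 / 2)) * (X * Real.exp (-(z ^ 20 / 2))) = X * (X * (Real.exp (-(z ^ 20 / 2)) * Real.exp (-(z ^ 20 / 2)))) := by ring
      rw [this, ← Real.exp_add]
      nth_rewrite 3 [hX]
      rw [← Real.exp_add]
      rw [show z ^ 20 + (-(z ^ 20 / 2) + -(z ^ 20 / 2)) = 0 by ring, Real.exp_zero, mul_one]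
    rw [this, hpd]
    have h5 : 0 ≤ z ^ 5 := by positivity
    exact mul_le_mul_of_nonneg_left (Real.exp_le_exp.mpr (by linarith)) hX0.le
  have hS2 : 2 * √X * z ^ 20 ≤ 2 * X * ((z ^ 20) ^ 2 * p) := by
    calc _ ≤ 2 * (X * p) * (z ^ 20) ^ 2 := by
          gcongr
          nlinarith
      _ = _ := by ring
  have hI2 : ‖I X c x‖ ≤ K * X * ((z ^ 20) ^ 2 * p) := by
    refine (hI X x hX0 hx0).trans ?_
    have : X / T ≤ X * p := by
      rw [div_eq_mul_one_div]
      gcongr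
      rw [hpd, Real.exp_neg, one_div]
      apply inv_anti₀ (Real.exp_pos _)
      refine le_trans (Real.exp_le_exp.mpr ?_) hT.le
      have h5 : 0 ≤ z ^ 5 := by positivity
      linarith
    calc _ ≤ K * (X * p) := by gcongr
      _ = K * X * (1 * p) := by ring
      _ ≤ _ := by
        gcongr
        nlinarith
  have hfin : (z ^ 20) ^ 2 * p ≤ Real.exp (-z ^ 4) := by
    have hzp : 0 < z := by linarith
    have a1 : (z ^ 20) ^ 2 ≤ Real.exp (40 * z) := by
      have : z ≤ Real.exp z := by linarith [Real.add_one_le_exp z]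
      calc (z ^ 20) ^ 2 = z ^ 40 := by ring
        _ ≤ (Real.exp z) ^ 40 := by gcongr
        _ = _ := by rw [← Real.exp_nat_mul]; norm_num
    calc _ ≤ Real.exp (40 * z) * p := by gcongr
      _ = Real.exp (40 * z - z ^ 5 / 4) := by rw [hpd, ← Real.exp_add]; congr 1
      _ ≤ _ := by
        apply Real.exp_le_exp.mpr
        have b1 : 12 * z ^ 4 ≤ z ^ 5 := by
          calc 12 * z ^ 4 ≤ z * z ^ 4 := by gcongr
            _ = _ := by ring
        have b2 : 12 ^ 3 * z ≤ z ^ 4 := by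
          calc 12 ^ 3 * z ≤ z ^ 3 * z := by gcongr
            _ = _ := by ring
        linarith
  have tri : ‖S X c x - I X c x‖ ≤ ‖S X c x - ∑ n ∈ J X 1, (ArithmeticFunction.vonMangoldt n : ℂ) * phi c x n‖
      + ‖∑ n ∈ J X 1, (ArithmeticFunction.vonMangoldt n : ℂ) * phi c x n‖ + ‖I X c x‖ := by
    refine (norm_sub_le _ _).trans ?_
    have := norm_sub_norm_le (S X c x) (∑ n ∈ J X 1, (ArithmeticFunction.vonMangoldt n : ℂ) * phi c x n)
    linarith
  calc _ ≤ (4 * C + 2 + K) * X * ((z ^ 20) ^ 2 * p) := by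
        refine tri.trans ?_
        have : (4 * C + 2 + K) * X * ((z ^ 20) ^ 2 * p) = 2 * X * ((z ^ 20) ^ 2 * p) + 4 * C * X * ((z ^ 20) ^ 2 * p) + K * X * ((z ^ 20) ^ 2 * p) := by ring
        linarith
    _ ≤ _ := by gcongr
end St10

/-- Lemma 2.8: for `1 < c < 37/18`, `c ≠ 2`, sufficiently small `η > 0`
and sufficiently large `X`, with `τ = X^{1−c−η}`, for every `|x| ≤ τ` one has
`S(x) = I(x) + O_{c,η}(X exp(−(log X)^{1/5}))`. -/
theorem stmt10 (c : ℝ) (hc1 : 1 < c) (hc2 : c < 37 / 18) (hc3 : c ≠ 2) :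
    ∃ η₀ > 0, ∀ η : ℝ, 0 < η → η < η₀ →
    ∃ C > 0, ∃ X₀ : ℝ, ∀ X ≥ X₀, ∀ τ : ℝ, τ = X ^ (1 - c - η) →
      ∀ x : ℝ, |x| ≤ τ →
        ‖S X c x - I X c x‖ ≤ C * X * Real.exp (-(Real.log X) ^ ((1 : ℝ) / 5)) := by
  refine ⟨1, one_pos, fun η hη hη1 => ?_⟩
  obtain ⟨C1, hC1, M1, hM1, h1⟩ := St10.case_small c hc1
  obtain ⟨C2, hC2, M2, hM2, h2⟩ := St10.case_large c η hc1 hη hη1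
  refine ⟨C1 + C2, by positivity, Real.exp ((M1 + M2) ^ 20), fun X hX τ hτ x hx => ?_⟩
  have hX0 : 0 < X := (Real.exp_pos _).trans_le hX
  have hlog : (M1 + M2) ^ 20 ≤ Real.log X := (Real.le_log_iff_exp_le hX0).mpr hX
  have hlog0 : 0 ≤ Real.log X := le_trans (by positivity) hlog
  set z := Real.log X ^ ((1:ℝ) / 20) with hz
  have hz0 : 0 ≤ z := Real.rpow_nonneg hlog0 _
  have hz20 : z ^ 20 = Real.log X := by
    rw [hz, ← Real.rpow_natCast, ← Real.rpow_mul hlog0]; norm_num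
  have hz4 : Real.log X ^ ((1:ℝ) / 5) = z ^ 4 := by
    rw [hz, ← Real.rpow_natCast, ← Real.rpow_mul hlog0]; norm_num
  have hM : M1 + M2 ≤ z := by
    rw [← hz20] at hlog
    exact le_of_pow_le_pow_left₀ (by norm_num) hz0 hlog
  have hXe : X = Real.exp (z ^ 20) := by rw [hz20, Real.exp_log hX0]
  rw [hz4]
  have hE := Real.exp_pos (-z ^ 4)
  rcases le_or_gt (|x| * X ^ c) (Real.exp (z ^ 5)) with h | h
  · refine (h1 z x X (by linarith) hXe h).trans ?_
    gcongr
    linarith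
  · refine (h2 z x X (by linarith) hXe h (hτ ▸ hx)).trans ?_
    gcongr
    linarith
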